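/- arXiv:1003.5388 — 3 statements merged into one kernel-verified Lean document; each statement's English description precedes it below -/
import Mathlib

section
/- Let f : ℕ → ℤ be a completely multiplicative function taking values in {-1, 1}, and let c ∈ [-1, 1) be a real number. If the series ∑_p (c - f(p))/p over primes p converges, then the mean value of f exists and equals 0; that is, (1/x)·∑_{n ≤ x} f(n) → 0 as x → ∞. -/
/-!
Convergence of `∑ (c - f p) / p` with `c < 1` forces `∑ (1 - f p) / p` to diverge, so everything
rests on Wirsing's theorem: a real completely multiplicative `f` bounded by `1` with
`∑ (1 - f p) / p = ∞` has mean value zero.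

Write `S x = ∑ n ≤ x, f n` and `F` for the Dirichlet series of `f`. Since `f` is real, divergence
at `t = 0` excludes that `f` is close to any `n ^ (i * t)` on the primes: otherwise `1`, hence `ζ`,
would be close to `n ^ (2 * i * t)`. The Euler product and compactness then give
`F (1 + δ + i * t) = o (1 / δ)` uniformly for `|t| ≤ R`.

Two steps turn this into `S x = o x`. Selberg's formula for `Λ₂ = Λ log + Λ * Λ`, applied to
`f * log ^ 2`, bounds `|S x| * log x` by `2 * x * ∑ k ≤ x, |S k| / k ^ 2 + O x`, so it is enough to
make this average `o (log x)`. By Cauchy–Schwarz the average is controlled by the mean square of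
`F' = -(f * Λ) * F` on the line `re s = 1 + 1 / log x`. The mean squares are taken against a Cauchy
law: its Fourier transform is an exponential, so mean squares are exactly weighted sums of squared
summatory functions, and it is positive, so the mean square of the series of `f * Λ` is at most that
of `Λ`. No information on primes beyond Chebyshev's bound is then needed.
-/

open Filter Finset Topology
open scoped ArithmeticFunction.zeta ArithmeticFunction.vonMangoldt
open ArithmeticFunction (pmul vonMangoldt_mul_zeta vonMangoldt_nonneg)
open Chebyshev (psi)

namespace MeanValue

section SummatoryFunctions

lemma sum_sum_div_eq_sum_divisorsAntidiagonal {M : Type*} [AddCommMonoid M] (φ : ℕ → ℕ → M)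
    (N : ℕ) :
    ∑ d ∈ Ioc 0 N, ∑ n ∈ Ioc 0 (N / d), φ d n =
      ∑ m ∈ Ioc 0 N, ∑ x ∈ m.divisorsAntidiagonal, φ x.1 x.2 := by
  simp only [Finset.sum_sigma']
  refine Finset.sum_bij' (fun y _ ↦ ⟨y.1 * y.2, (y.1, y.2)⟩) (fun y _ ↦ ⟨y.2.1, y.2.2⟩) ?_ ?_
    (fun _ _ ↦ rfl) ?_ (fun _ _ ↦ rfl)
  · rintro ⟨d, n⟩ h
    simp only [mem_sigma, mem_Ioc, Nat.mem_divisorsAntidiagonal] at h ⊢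
    have hdn := (Nat.le_div_iff_mul_le h.1.1).1 h.2.2
    have := Nat.mul_pos h.1.1 h.2.1
    exact ⟨⟨this, by rwa [mul_comm]⟩, trivial, this.ne'⟩
  · rintro ⟨m, d, n⟩ h
    simp only [mem_sigma, mem_Ioc, Nat.mem_divisorsAntidiagonal] at h ⊢
    obtain ⟨⟨hm, hmN⟩, rfl, -⟩ := h
    have hd := Nat.pos_of_mul_pos_right hm
    exact ⟨⟨hd, (Nat.le_mul_of_pos_right d (Nat.pos_of_mul_pos_left hm)).trans hmN⟩,
      Nat.pos_of_mul_pos_left hm, (Nat.le_div_iff_mul_le hd).2 (by rwa [mul_comm])⟩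
  · rintro ⟨m, d, n⟩ h
    simp only [mem_sigma, Nat.mem_divisorsAntidiagonal] at h
    obtain ⟨-, rfl, -⟩ := h
    rfl

lemma sum_sum_div_comm {M : Type*} [AddCommMonoid M] (φ : ℕ → ℕ → M) (N : ℕ) :
    ∑ d ∈ Ioc 0 N, ∑ n ∈ Ioc 0 (N / d), φ d n = ∑ n ∈ Ioc 0 N, ∑ d ∈ Ioc 0 (N / n), φ d n := by
  rw [sum_sum_div_eq_sum_divisorsAntidiagonal,
    sum_sum_div_eq_sum_divisorsAntidiagonal fun n d ↦ φ d n]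
  refine sum_congr rfl fun m _ ↦ ?_
  conv_rhs => rw [← Nat.map_swap_divisorsAntidiagonal, sum_map]
  rfl

lemma sum_convolution_smul_map {F R A : Type*} [CommSemiring R] [CommSemiring A] [Algebra R A]
    [FunLike F ℕ A] [MulHomClass F ℕ A] (f : F) (a b : ArithmeticFunction R) (N : ℕ) :
    ∑ n ∈ Ioc 0 N, (a * b) n • f n =
      ∑ d ∈ Ioc 0 N, (a d • f d) * ∑ n ∈ Ioc 0 (N / d), b n • f n := by
  simp_rw [mul_sum]
  rw [sum_sum_div_eq_sum_divisorsAntidiagonal fun d n ↦ (a d • f d) * (b n • f n)]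
  refine sum_congr rfl fun m _ ↦ ?_
  rw [ArithmeticFunction.mul_apply, sum_smul]
  refine sum_congr rfl fun x hx ↦ ?_
  rw [← (Nat.mem_divisorsAntidiagonal.1 hx).1, map_mul, smul_mul_smul_comm]

lemma cast_div_le_cast_add_one (N d : ℕ) : (N : ℝ) / d ≤ (N / d : ℕ) + 1 := by
  rw [← Nat.floor_div_eq_div (K := ℝ)]
  exact (Nat.lt_floor_add_one _).le

lemma log_add_one_sub_log_bounds {n : ℕ} (hn : n ≠ 0) :
    1 / (n + 1 : ℝ) ≤ Real.log (n + 1) - Real.log n ∧ Real.log (n + 1) - Real.log n ≤ 1 / n := by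
  have hn₀ : (0 : ℝ) < n := by positivity
  rw [← Real.log_div (by positivity) hn₀.ne']
  have hlow := Real.one_sub_inv_le_log_of_pos (x := (n + 1 : ℝ) / n) (by positivity)
  have hupp := Real.log_le_sub_one_of_pos (x := (n + 1 : ℝ) / n) (by positivity)
  constructor
  · convert hlow using 1; field_simp; ring
  · convert hupp using 1; field_simp; ring

lemma le_sum_log (N : ℕ) : N * Real.log N - N ≤ ∑ n ∈ Ioc 0 N, Real.log n := by
  induction N with
  | zero => simp
  | succ N ih =>
    rw [sum_Ioc_succ_top N.zero_le]
    rcases eq_or_ne N 0 with rfl | hN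
    · simp
    have hstep := mul_le_mul_of_nonneg_left (log_add_one_sub_log_bounds hN).2 N.cast_nonneg
    rw [mul_one_div_cancel (by positivity)] at hstep
    push_cast
    linarith

lemma sum_log_le (N : ℕ) :
    ∑ n ∈ Ioc 0 N, Real.log n ≤ N * Real.log N - N + Real.log N + 1 := by
  induction N with
  | zero => simp
  | succ N ih =>
    rw [sum_Ioc_succ_top N.zero_le]
    rcases eq_or_ne N 0 with rfl | hN
    · simp
    have hstep := mul_le_mul_of_nonneg_left (log_add_one_sub_log_bounds hN).1
      (by positivity : (0 : ℝ) ≤ N + 1)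
    rw [mul_one_div_cancel (by positivity)] at hstep
    push_cast
    linarith

lemma sum_one_div_eq_harmonic (N : ℕ) : ∑ n ∈ Ioc 0 N, (1 : ℝ) / n = harmonic N := by
  rw [harmonic_eq_sum_Icc]
  push_cast
  exact sum_congr rfl fun n _ ↦ one_div _

lemma harmonic_sub_log_bounds {N : ℕ} (hN : N ≠ 0) :
    Real.log N + Real.eulerMascheroniConstant ≤ harmonic N ∧
      (harmonic N : ℝ) ≤ Real.log N + Real.eulerMascheroniConstant + 1 / N := by
  have hlow := Real.eulerMascheroniConstant_lt_eulerMascheroniSeq' N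
  have hupp := Real.eulerMascheroniSeq_lt_eulerMascheroniConstant N
  rw [Real.eulerMascheroniSeq', if_neg hN] at hlow
  rw [Real.eulerMascheroniSeq] at hupp
  constructor <;> linarith [(log_add_one_sub_log_bounds hN).2]

lemma sum_sqrt_div_le (N : ℕ) : ∑ d ∈ Ioc 0 N, √((N : ℝ) / d) ≤ 2 * N := by
  have hsum (M : ℕ) : ∑ d ∈ Ioc 0 M, 1 / √(d : ℝ) ≤ 2 * √M := by
    induction M with
    | zero => simp
    | succ M ih =>
      rw [sum_Ioc_succ_top M.zero_le]
      push_cast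
      have hM := Real.sq_sqrt (by positivity : (0 : ℝ) ≤ M)
      have hM₁ := Real.sq_sqrt (by positivity : (0 : ℝ) ≤ M + 1)
      have : 1 / √(M + 1 : ℝ) ≤ 2 * √(M + 1 : ℝ) - 2 * √M := by
        rw [div_le_iff₀ (by positivity)]
        nlinarith [sq_nonneg (√(M + 1 : ℝ) - √M)]
      linarith
  calc ∑ d ∈ Ioc 0 N, √((N : ℝ) / d) = √N * ∑ d ∈ Ioc 0 N, 1 / √(d : ℝ) := by
        simp_rw [mul_sum, Real.sqrt_div N.cast_nonneg, mul_one_div]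
    _ ≤ √N * (2 * √N) := by gcongr; exact hsum N
    _ = 2 * N := by rw [mul_left_comm, Real.mul_self_sqrt N.cast_nonneg]

end SummatoryFunctions

section ChebyshevError

open scoped ArithmeticFunction.Moebius

lemma psi_le_six_mul {x : ℝ} (hx : 0 ≤ x) : psi x ≤ 6 * x := by
  refine (Chebyshev.psi_le_const_mul_self hx).trans ?_
  gcongr
  rw [show (4 : ℝ) = 2 ^ 2 by norm_num, Real.log_pow]
  push_cast
  linarith [Real.log_two_lt_d9]

lemma psi_natCast_div (N d : ℕ) : psi ((N : ℝ) / d) = ∑ n ∈ Ioc 0 (N / d), Λ n := by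
  rw [psi, Nat.floor_div_eq_div]

lemma sum_psi_div_eq_sum_log (y : ℝ) :
    ∑ n ∈ Ioc 0 ⌊y⌋₊, psi (y / n) = ∑ n ∈ Ioc 0 ⌊y⌋₊, Real.log n := by
  simp_rw [psi, Nat.floor_div_natCast]
  rw [sum_sum_div_comm (fun _ m ↦ Λ m)]
  simp_rw [sum_const, Nat.card_Ioc, tsub_zero, nsmul_eq_mul, mul_comm _ (Λ _)]
  rw [← ArithmeticFunction.sum_Ioc_mul_zeta_eq_sum, vonMangoldt_mul_zeta]
  rfl

/-- The remainder in `ψ x = x - γ - 1 + ⋯`: the constant is the one for which the sums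
`∑ n ≤ y, psiError (y / n)` are only logarithmically large. -/
noncomputable def psiError (x : ℝ) : ℝ := psi x - x + (Real.eulerMascheroniConstant + 1)

lemma abs_sum_psiError_div_le {y : ℝ} (hy : 1 ≤ y) :
    |∑ n ∈ Ioc 0 ⌊y⌋₊, psiError (y / n)| ≤ 5 * (1 + Real.log y) := by
  set M := ⌊y⌋₊
  set γ := Real.eulerMascheroniConstant
  have hM : M ≠ 0 := (Nat.floor_pos.2 hy).ne'
  have hM₁ : (1 : ℝ) ≤ M := by exact_mod_cast Nat.one_le_iff_ne_zero.2 hM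
  have hMy : (M : ℝ) ≤ y := Nat.floor_le (by linarith)
  have hyM : y ≤ M + 1 := (Nat.lt_floor_add_one y).le
  have hsum : ∑ n ∈ Ioc 0 M, psiError (y / n) =
      ∑ n ∈ Ioc 0 M, Real.log n - y * harmonic M + (γ + 1) * M := by
    simp_rw [psiError, sum_add_distrib, sum_sub_distrib]
    rw [sum_psi_div_eq_sum_log, ← sum_one_div_eq_harmonic, mul_sum]
    simp only [sum_const, Nat.card_Ioc, tsub_zero, nsmul_eq_mul, mul_one_div, M, γ]
    ring
  obtain ⟨hharm_low, hharm_upp⟩ := harmonic_sub_log_bounds hM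
  have hlogM : 0 ≤ Real.log M := Real.log_nonneg hM₁
  have hlog : Real.log M ≤ Real.log y := Real.log_le_log (by linarith) hMy
  have hγ_upp : γ < 2 / 3 := Real.eulerMascheroniConstant_lt_two_thirds
  have hγ_low : 1 / 2 < γ := Real.one_half_lt_eulerMascheroniConstant
  have hlow : M * (Real.log M + γ) ≤ y * harmonic M := by gcongr
  have hupp : y * harmonic M ≤ (M + 1) * (Real.log M + γ + 1 / M) :=
    mul_le_mul hyM hharm_upp (by linarith) (by positivity)
  have hexpand : (M + 1) * (Real.log M + γ + 1 / M) =
      M * Real.log M + M * γ + 1 + Real.log M + γ + 1 / M := by field_simp; ring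
  have hinv : 1 / (M : ℝ) ≤ 1 := by rw [div_le_one (by linarith)]; exact hM₁
  have := le_sum_log M
  have := sum_log_le M
  rw [hsum, abs_le]
  constructor <;> linarith

lemma sum_divisors_moebius (n : ℕ) :
    ∑ d ∈ n.divisors, (μ d : ℝ) = if n = 1 then 1 else 0 := by
  have := congrArg (fun a : ArithmeticFunction ℤ ↦ a n) ArithmeticFunction.coe_zeta_mul_moebius
  simp only [ArithmeticFunction.coe_zeta_mul_apply, ArithmeticFunction.one_apply] at this
  exact_mod_cast this

lemma sum_divisors_moebius_mul_log_div {x : ℝ} (hx : x ≠ 0) (n : ℕ) :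
    ∑ d ∈ n.divisors, (μ d : ℝ) * Real.log (x / d) = (if n = 1 then Real.log x else 0) + Λ n := by
  have hsplit : ∀ d ∈ n.divisors, (μ d : ℝ) * Real.log (x / d) =
      μ d * Real.log x - μ d * Real.log d := fun d hd ↦ by
    rw [Real.log_div hx (Nat.cast_ne_zero.2 (Nat.pos_of_mem_divisors hd).ne'), mul_sub]
  rw [sum_congr rfl hsplit, sum_sub_distrib, ← sum_mul, sum_divisors_moebius]
  have := ArithmeticFunction.sum_moebius_mul_log_eq (n := n)
  simp only [ArithmeticFunction.log_apply] at this
  rw [this]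
  split_ifs <;> ring

theorem tatuzawa_iseki (F : ℝ → ℝ) {x : ℝ} (hx : 1 ≤ x) :
    ∑ d ∈ Ioc 0 ⌊x⌋₊, (μ d : ℝ) * Real.log (x / d) * ∑ n ∈ Ioc 0 ⌊x / d⌋₊, F (x / d / n) =
      F x * Real.log x + ∑ n ∈ Ioc 0 ⌊x⌋₊, Λ n * F (x / n) := by
  simp_rw [mul_sum, Nat.floor_div_natCast]
  rw [sum_sum_div_eq_sum_divisorsAntidiagonal
    fun d n ↦ (μ d : ℝ) * Real.log (x / d) * F (x / d / n)]
  have hdivisors : ∀ m ∈ Ioc 0 ⌊x⌋₊, ∑ z ∈ m.divisorsAntidiagonal,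
      (μ z.1 : ℝ) * Real.log (x / z.1) * F (x / z.1 / z.2) =
        (if m = 1 then Real.log x else 0) * F (x / m) + Λ m * F (x / m) := by
    intro m _
    rw [← add_mul, ← sum_divisors_moebius_mul_log_div (by linarith), sum_mul,
      ← Nat.sum_divisorsAntidiagonal fun d _ ↦ (μ d : ℝ) * Real.log (x / d) * F (x / m)]
    refine sum_congr rfl fun z hz ↦ ?_
    rw [div_div, ← Nat.cast_mul, (Nat.mem_divisorsAntidiagonal.1 hz).1]
  rw [sum_congr rfl hdivisors, sum_add_distrib]
  congr 1
  simp_rw [ite_mul, zero_mul]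
  rw [sum_ite_eq', if_pos (mem_Ioc.2 ⟨one_pos, Nat.one_le_floor_iff x |>.2 hx⟩), Nat.cast_one,
    div_one, mul_comm]

lemma log_mul_one_add_log_le {y : ℝ} (hy : 1 ≤ y) : Real.log y * (1 + Real.log y) ≤ 20 * √y := by
  have hlog : Real.log y ≤ 4 * √(√y) := by
    have := Real.log_le_sub_one_of_pos (x := √(√y)) (by positivity)
    rw [Real.log_sqrt (by positivity), Real.log_sqrt (by positivity)] at this
    linarith
  have hone : 1 ≤ √(√y) := by simpa using hy
  calc Real.log y * (1 + Real.log y) ≤ (4 * √(√y)) * (√(√y) + 4 * √(√y)) := by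
        have := Real.log_nonneg hy
        gcongr
    _ = 20 * (√(√y) * √(√y)) := by ring
    _ = 20 * √y := by rw [Real.mul_self_sqrt (Real.sqrt_nonneg y)]

lemma abs_psiError_mul_log_add_sum_le {N : ℕ} (hN : N ≠ 0) :
    |psiError N * Real.log N + ∑ n ∈ Ioc 0 N, Λ n * psiError (N / n)| ≤ 200 * N := by
  have hTI := tatuzawa_iseki psiError (x := N) (by exact_mod_cast Nat.one_le_iff_ne_zero.2 hN)
  rw [Nat.floor_natCast] at hTI
  rw [← hTI]
  calc |∑ d ∈ Ioc 0 N, (μ d : ℝ) * Real.log (N / d) *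
        ∑ n ∈ Ioc 0 ⌊(N : ℝ) / d⌋₊, psiError (N / d / n)|
      ≤ ∑ d ∈ Ioc 0 N, 100 * √((N : ℝ) / d) := by
        refine (abs_sum_le_sum_abs _ _).trans (sum_le_sum fun d hd ↦ ?_)
        have hd' := mem_Ioc.1 hd
        have hy : 1 ≤ (N : ℝ) / d := by
          rw [one_le_div (by exact_mod_cast hd'.1)]
          exact_mod_cast hd'.2
        have hlog := Real.log_nonneg hy
        have hμ : |(μ d : ℝ)| ≤ 1 := by exact_mod_cast ArithmeticFunction.abs_moebius_le_one
        rw [abs_mul, abs_mul, abs_of_nonneg hlog]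
        calc _ ≤ 1 * Real.log (N / d) * (5 * (1 + Real.log (N / d))) := by
              gcongr
              exact abs_sum_psiError_div_le hy
          _ ≤ _ := by linarith [log_mul_one_add_log_le hy]
    _ ≤ 200 * N := by rw [← mul_sum]; linarith [sum_sqrt_div_le N]

lemma sum_log_eq_sum_vonMangoldt_mul (N : ℕ) :
    ∑ n ∈ Ioc 0 N, Real.log n = ∑ n ∈ Ioc 0 N, Λ n * (N / n : ℕ) := by
  rw [← ArithmeticFunction.sum_Ioc_mul_zeta_eq_sum, vonMangoldt_mul_zeta]
  rfl

/- The two bounds amount to Mertens' estimate `∑ n ≤ N, Λ n / n = log N + O(1)`. -/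
lemma sum_vonMangoldt_mul_div_bounds (N : ℕ) :
    ∑ n ∈ Ioc 0 N, Real.log n ≤ ∑ n ∈ Ioc 0 N, Λ n * (N / n : ℝ) ∧
      ∑ n ∈ Ioc 0 N, Λ n * (N / n : ℝ) ≤ ∑ n ∈ Ioc 0 N, Real.log n + 6 * N := by
  rw [sum_log_eq_sum_vonMangoldt_mul]
  constructor
  · gcongr with n
    exact Nat.cast_div_le
  · calc ∑ n ∈ Ioc 0 N, Λ n * (N / n : ℝ)
        ≤ ∑ n ∈ Ioc 0 N, Λ n * ((N / n : ℕ) + 1) := by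
          gcongr with n
          exact cast_div_le_cast_add_one N n
      _ = ∑ n ∈ Ioc 0 N, Λ n * (N / n : ℕ) + psi N := by
          simp_rw [mul_add, mul_one, sum_add_distrib, psi, Nat.floor_natCast]
      _ ≤ _ := by gcongr; exact psi_le_six_mul N.cast_nonneg

lemma sum_vonMangoldt_mul_log_bounds (N : ℕ) :
    psi N * Real.log N - 6 * N ≤ ∑ n ∈ Ioc 0 N, Λ n * Real.log n ∧
      ∑ n ∈ Ioc 0 N, Λ n * Real.log n ≤ psi N * Real.log N := by
  induction N with
  | zero => simp
  | succ N ih =>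
    rcases eq_or_ne N 0 with rfl | hN
    · simp [Chebyshev.psi_one]
    have hpsi : psi ((N + 1 : ℕ) : ℝ) = psi N + Λ (N + 1) := by
      simp_rw [psi, Nat.floor_natCast, sum_Ioc_succ_top N.zero_le]
    obtain ⟨hlow, hupp⟩ := log_add_one_sub_log_bounds hN
    have hinv : (0 : ℝ) ≤ 1 / (N + 1) := by positivity
    have hstep : psi N * (Real.log (N + 1) - Real.log N) ≤ 6 := by
      calc _ ≤ (6 * N) * (1 / (N : ℝ)) := by
            gcongr
            · linarith
            · exact psi_le_six_mul N.cast_nonneg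
        _ = 6 := by field_simp
    have hstep₀ : 0 ≤ psi N * (Real.log (N + 1) - Real.log N) :=
      mul_nonneg (Chebyshev.psi_nonneg N) (by linarith)
    rw [sum_Ioc_succ_top N.zero_le, hpsi]
    push_cast
    constructor <;> linarith [ih.1, ih.2]

end ChebyshevError

/-- Selberg's arithmetic function `Λ₂ = Λ log + Λ * Λ`, the weight of his symmetry formula. -/
noncomputable def selbergFunction : ArithmeticFunction ℝ :=
  pmul Λ ArithmeticFunction.log + Λ * Λ

local notation "Λ₂" => selbergFunction

lemma selbergFunction_apply (n : ℕ) : Λ₂ n = Λ n * Real.log n + (Λ * Λ) n := rfl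

lemma selbergFunction_nonneg (n : ℕ) : 0 ≤ Λ₂ n := by
  rw [selbergFunction_apply, ArithmeticFunction.mul_apply]
  exact add_nonneg (mul_nonneg vonMangoldt_nonneg (Real.log_natCast_nonneg n))
    (sum_nonneg fun x _ ↦ mul_nonneg vonMangoldt_nonneg vonMangoldt_nonneg)

lemma pmul_log_mul (a b : ArithmeticFunction ℝ) :
    pmul .log (a * b) = pmul .log a * b + a * pmul .log b := by
  ext n
  simp only [ArithmeticFunction.add_apply, ArithmeticFunction.mul_apply,
    ArithmeticFunction.pmul_apply, ArithmeticFunction.log_apply, mul_sum, ← sum_add_distrib]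
  refine sum_congr rfl fun x hx ↦ ?_
  obtain ⟨hx₁, hx₂⟩ := Nat.ne_zero_of_mem_divisorsAntidiagonal hx
  rw [← (Nat.mem_divisorsAntidiagonal.1 hx).1, Nat.cast_mul,
    Real.log_mul (Nat.cast_ne_zero.2 hx₁) (Nat.cast_ne_zero.2 hx₂)]
  ring

lemma selbergFunction_mul_zeta : Λ₂ * ζ = pmul .log .log := by
  calc Λ₂ * ζ = pmul .log Λ * ζ + Λ * (Λ * ζ) := by
        rw [selbergFunction, ArithmeticFunction.pmul_comm, add_mul, mul_assoc]
    _ = pmul .log Λ * ζ + Λ * pmul .log ζ := by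
        rw [vonMangoldt_mul_zeta, ArithmeticFunction.pmul_zeta]
    _ = pmul .log .log := by rw [← pmul_log_mul, vonMangoldt_mul_zeta]

theorem abs_sum_selbergFunction_sub_two_mul_log_le (N : ℕ) :
    |∑ n ∈ Ioc 0 N, (Λ₂ n - 2 * Real.log n)| ≤ 300 * N := by
  rcases eq_or_ne N 0 with rfl | hN
  · simp
  have hN₁ : (1 : ℝ) ≤ N := by exact_mod_cast Nat.one_le_iff_ne_zero.2 hN
  set γ := Real.eulerMascheroniConstant
  have hsum : ∑ n ∈ Ioc 0 N, (Λ₂ n - 2 * Real.log n) = ∑ n ∈ Ioc 0 N, Λ n * Real.log n +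
      ∑ n ∈ Ioc 0 N, Λ n * psi (N / n) - 2 * ∑ n ∈ Ioc 0 N, Real.log n := by
    simp_rw [psi_natCast_div]
    rw [sum_sub_distrib, ← mul_sum]
    rw [← ArithmeticFunction.sum_Ioc_mul_eq_sum_sum, ← sum_add_distrib]
    rfl
  have herror : ∑ n ∈ Ioc 0 N, Λ n * psiError (N / n) = ∑ n ∈ Ioc 0 N, Λ n * psi (N / n) -
      ∑ n ∈ Ioc 0 N, Λ n * (N / n : ℝ) + (γ + 1) * psi N := by
    simp_rw [psiError, mul_add, mul_sub, sum_add_distrib, sum_sub_distrib, ← sum_mul, psi,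
      Nat.floor_natCast]
    ring
  obtain ⟨hTI_low, hTI_upp⟩ := abs_le.1 (abs_psiError_mul_log_add_sum_le hN)
  rw [herror, psiError] at hTI_low hTI_upp
  obtain ⟨hmertens_low, hmertens_upp⟩ := sum_vonMangoldt_mul_div_bounds N
  obtain ⟨hlog_low, hlog_upp⟩ := sum_vonMangoldt_mul_log_bounds N
  have hfac_low := le_sum_log N
  have hfac_upp := sum_log_le N
  have hγ₀ : 0 ≤ γ + 1 := by linarith [Real.one_half_lt_eulerMascheroniConstant]
  have hγ : γ + 1 ≤ 2 := by linarith [Real.eulerMascheroniConstant_lt_two_thirds]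
  have hlog₀ : 0 ≤ Real.log N := Real.log_nonneg hN₁
  have hlog : Real.log N ≤ N := Real.log_le_self N.cast_nonneg
  have hpsi := mul_le_mul hγ (psi_le_six_mul N.cast_nonneg) (Chebyshev.psi_nonneg N) zero_le_two
  have hpsi₀ := mul_nonneg hγ₀ (Chebyshev.psi_nonneg N)
  have hγlog := mul_le_mul hγ hlog hlog₀ zero_le_two
  have hγlog₀ := mul_nonneg hγ₀ hlog₀
  rw [hsum, abs_le]
  constructor <;> linarith

section LipschitzAverages

lemma sum_mul_apply_div (α : ℕ → ℝ) {V : ℕ → ℝ} (hV₀ : V 0 = 0) (N : ℕ) :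
    ∑ d ∈ Ioc 0 N, α d * V (N / d) =
      ∑ k ∈ Ioc 0 N, (V k - V (k - 1)) * ∑ d ∈ Ioc 0 (N / k), α d := by
  have htelescope (M : ℕ) : V M = ∑ k ∈ Ioc 0 M, (V k - V (k - 1)) := by
    induction M with
    | zero => simpa using hV₀
    | succ M ih => rw [sum_Ioc_succ_top M.zero_le, ← ih, Nat.add_sub_cancel]; ring
  have hexpand (d : ℕ) : α d * V (N / d) = ∑ k ∈ Ioc 0 (N / d), (V k - V (k - 1)) * α d := by
    rw [htelescope (N / d), mul_sum]
    exact sum_congr rfl fun _ _ ↦ mul_comm _ _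
  simp_rw [hexpand, mul_sum]
  exact sum_sum_div_comm _ N

lemma sum_sub_div_eq {V : ℕ → ℝ} (hV₀ : V 0 = 0) (N : ℕ) :
    ∑ k ∈ Ioc 0 N, (V k - V (k - 1)) / k =
      ∑ k ∈ Ioc 0 N, V k / (k * (k + 1)) + V N / (N + 1) := by
  induction N with
  | zero => simp [hV₀]
  | succ N ih =>
    rw [sum_Ioc_succ_top N.zero_le, ih, sum_Ioc_succ_top N.zero_le, Nat.add_sub_cancel]
    push_cast
    field_simp
    ring

variable {V : ℕ → ℝ} (hV₀ : V 0 = 0) (hV : ∀ k, |V (k + 1) - V k| ≤ 1)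
include hV

lemma abs_sub_pred_le {k : ℕ} (hk : 0 < k) : |V k - V (k - 1)| ≤ 1 := by
  obtain ⟨k, rfl⟩ := Nat.exists_eq_add_of_le' hk
  exact hV k

include hV₀

lemma apply_le_natCast (N : ℕ) : V N ≤ N := by
  induction N with
  | zero => simp [hV₀]
  | succ N ih =>
    push_cast
    linarith [le_of_abs_le (hV N)]

lemma sum_apply_div_le (hV_nonneg : ∀ k, 0 ≤ V k) (N : ℕ) :
    ∑ d ∈ Ioc 0 N, V (N / d) ≤ N * ∑ k ∈ Ioc 0 N, V k / k ^ 2 + 2 * N := by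
  have hterm : ∀ k ∈ Ioc 0 N,
      (V k - V (k - 1)) * (N / k : ℕ) ≤ N * ((V k - V (k - 1)) / k) + 1 := by
    intro k hk
    have hlow := (abs_le.1 (abs_sub_pred_le hV (mem_Ioc.1 hk).1)).1
    have hfloor : ((N / k : ℕ) : ℝ) ≤ N / k := Nat.cast_div_le
    have hceil := cast_div_le_cast_add_one N k
    have hcomm : N * ((V k - V (k - 1)) / k) = (V k - V (k - 1)) * (N / k) := by ring
    rw [hcomm]
    nlinarith
  have hsum := sum_mul_apply_div (fun _ ↦ 1) hV₀ N
  simp only [one_mul, sum_const, Nat.card_Ioc, tsub_zero, nsmul_eq_mul, mul_one] at hsum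
  calc ∑ d ∈ Ioc 0 N, V (N / d)
      ≤ ∑ k ∈ Ioc 0 N, (N * ((V k - V (k - 1)) / k) + 1) := hsum.trans_le (sum_le_sum hterm)
    _ = N * (∑ k ∈ Ioc 0 N, V k / (k * (k + 1)) + V N / (N + 1)) + N := by
        rw [sum_add_distrib, ← mul_sum, sum_sub_div_eq hV₀]
        simp
    _ ≤ N * (∑ k ∈ Ioc 0 N, V k / k ^ 2 + 1) + N := by
        gcongr with k hk
        · exact hV_nonneg k
        · have : 0 < k := (mem_Ioc.1 hk).1
          positivity
        · linarith
        · rw [div_le_one (by positivity)]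
          linarith [apply_le_natCast hV₀ hV N]
    _ = _ := by ring

lemma sum_selbergFunction_sub_mul_apply_div_le (N : ℕ) :
    ∑ d ∈ Ioc 0 N, (Λ₂ d - 2 * Real.log d) * V (N / d) ≤ 300 * N * (1 + Real.log N) := by
  calc ∑ d ∈ Ioc 0 N, (Λ₂ d - 2 * Real.log d) * V (N / d)
      ≤ ∑ k ∈ Ioc 0 N, 300 * N * (1 / (k : ℝ)) := by
        rw [sum_mul_apply_div _ hV₀]
        refine sum_le_sum fun k hk ↦ (le_abs_self _).trans ?_
        rw [abs_mul]
        calc _ ≤ 1 * (300 * ((N / k : ℕ) : ℝ)) := by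
              gcongr
              exacts [abs_sub_pred_le hV (mem_Ioc.1 hk).1,
                abs_sum_selbergFunction_sub_two_mul_log_le _]
          _ ≤ 1 * (300 * (N / k)) := by gcongr; exact Nat.cast_div_le
          _ = _ := by ring
    _ ≤ _ := by
        rw [← mul_sum, sum_one_div_eq_harmonic]
        gcongr
        exact harmonic_le_one_add_log N

lemma sum_selbergFunction_mul_apply_div_le (hV_nonneg : ∀ k, 0 ≤ V k) (N : ℕ) :
    ∑ d ∈ Ioc 0 N, Λ₂ d * V (N / d) ≤
      2 * Real.log N * (N * ∑ k ∈ Ioc 0 N, V k / k ^ 2 + 2 * N) +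
        300 * N * (1 + Real.log N) := by
  have hlog : ∑ d ∈ Ioc 0 N, 2 * Real.log d * V (N / d) ≤
      2 * Real.log N * ∑ d ∈ Ioc 0 N, V (N / d) := by
    rw [mul_sum]
    gcongr with d hd
    · exact hV_nonneg _
    · exact_mod_cast (mem_Ioc.1 hd).1
    · exact (mem_Ioc.1 hd).2
  calc ∑ d ∈ Ioc 0 N, Λ₂ d * V (N / d)
      = ∑ d ∈ Ioc 0 N, 2 * Real.log d * V (N / d) +
          ∑ d ∈ Ioc 0 N, (Λ₂ d - 2 * Real.log d) * V (N / d) := by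
        rw [← sum_add_distrib]
        exact sum_congr rfl fun _ _ ↦ by ring
    _ ≤ _ := add_le_add (hlog.trans (mul_le_mul_of_nonneg_left
          (sum_apply_div_le hV₀ hV hV_nonneg N) (by positivity)))
        (sum_selbergFunction_sub_mul_apply_div_le hV₀ hV N)

end LipschitzAverages

section PointwiseBound

/-- The summatory function `x ↦ ∑ n ≤ x, a n` at integers; the term `a 0` is left out. -/
def summatory (a : ℕ → ℂ) (N : ℕ) : ℂ := ∑ n ∈ Ioc 0 N, a n

variable (a : ℕ → ℂ)

@[simp] lemma summatory_zero : summatory a 0 = 0 := rfl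

lemma summatory_succ (N : ℕ) : summatory a (N + 1) = summatory a N + a (N + 1) :=
  sum_Ioc_succ_top N.zero_le a

variable {a}

lemma norm_summatory_le (ha : ∀ n, ‖a n‖ ≤ 1) (N : ℕ) : ‖summatory a N‖ ≤ N := by
  simpa [summatory] using norm_sum_le_of_le (Ioc 0 N) fun n _ ↦ ha n

lemma abs_norm_summatory_succ_sub_le (ha : ∀ n, ‖a n‖ ≤ 1) (k : ℕ) :
    |‖summatory a (k + 1)‖ - ‖summatory a k‖| ≤ 1 := by
  refine (abs_norm_sub_norm_le _ _).trans ?_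
  rw [summatory_succ, add_sub_cancel_left]
  exact ha _

lemma sum_log_sub_log_le (N : ℕ) : ∑ n ∈ Ioc 0 N, (Real.log N - Real.log n) ≤ N := by
  rw [sum_sub_distrib, sum_const, Nat.card_Ioc, tsub_zero, nsmul_eq_mul]
  linarith [le_sum_log N]

lemma norm_summatory_mul_log_pow_le (ha : ∀ n, ‖a n‖ ≤ 1) (j N : ℕ) :
    ‖summatory (fun n ↦ a n * Real.log n ^ j) N‖ * Real.log N ≤
      ‖summatory (fun n ↦ a n * Real.log n ^ (j + 1)) N‖ + N * Real.log N ^ j := by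
  have hlog₀ := Real.log_natCast_nonneg
  have hsplit : summatory (fun n ↦ a n * Real.log n ^ j) N * Real.log N =
      summatory (fun n ↦ a n * Real.log n ^ (j + 1)) N +
      ∑ n ∈ Ioc 0 N, a n * ((Real.log n ^ j * (Real.log N - Real.log n) : ℝ) : ℂ) := by
    rw [summatory, summatory, sum_mul, ← sum_add_distrib]
    exact sum_congr rfl fun _ _ ↦ by push_cast; ring
  have herror : ‖∑ n ∈ Ioc 0 N, a n * ((Real.log n ^ j * (Real.log N - Real.log n) : ℝ) : ℂ)‖ ≤
      ∑ n ∈ Ioc 0 N, Real.log N ^ j * (Real.log N - Real.log n) := by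
    refine norm_sum_le_of_le _ fun n hn ↦ ?_
    obtain ⟨hn₀, hnN⟩ := mem_Ioc.1 hn
    have hlog : Real.log n ≤ Real.log N :=
      Real.log_le_log (by exact_mod_cast hn₀) (by exact_mod_cast hnN)
    rw [norm_mul, Complex.norm_of_nonneg (mul_nonneg (pow_nonneg (hlog₀ n) j) (sub_nonneg.2 hlog))]
    refine (mul_le_of_le_one_left (by have := hlog₀ n; have := sub_nonneg.2 hlog; positivity)
      (ha n)).trans ?_
    gcongr
  calc ‖summatory (fun n ↦ a n * Real.log n ^ j) N‖ * Real.log N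
      = ‖summatory (fun n ↦ a n * Real.log n ^ j) N * Real.log N‖ := by
        rw [norm_mul, Complex.norm_of_nonneg (hlog₀ N)]
    _ ≤ _ := hsplit ▸ norm_add_le _ _
    _ ≤ ‖summatory (fun n ↦ a n * Real.log n ^ (j + 1)) N‖ +
          ∑ n ∈ Ioc 0 N, Real.log N ^ j * (Real.log N - Real.log n) := by gcongr
    _ ≤ _ := by
        rw [← mul_sum, mul_comm (N : ℝ)]
        have := hlog₀ N
        gcongr
        exact sum_log_sub_log_le N

lemma norm_summatory_mul_log_sq_le_sum (f : ℕ →*₀ ℂ) (N : ℕ) :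
    ‖summatory (fun n ↦ f n * Real.log n ^ 2) N‖ ≤
      ∑ d ∈ Ioc 0 N, Λ₂ d * (‖f d‖ * ‖summatory f (N / d)‖) := by
  have hconv : summatory (fun n ↦ f n * Real.log n ^ 2) N =
      ∑ d ∈ Ioc 0 N, (Λ₂ d • f d) * summatory f (N / d) := by
    calc summatory (fun n ↦ f n * Real.log n ^ 2) N = ∑ n ∈ Ioc 0 N, (Λ₂ * ζ) n • f n := by
          rw [selbergFunction_mul_zeta]
          refine sum_congr rfl fun n _ ↦ ?_
          simp only [ArithmeticFunction.pmul_apply, ArithmeticFunction.log_apply,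
            Complex.real_smul, Complex.ofReal_mul]
          ring
      _ = _ := by
          rw [sum_convolution_smul_map]
          refine sum_congr rfl fun d _ ↦ ?_
          congr 1
          refine sum_congr rfl fun n hn ↦ ?_
          simp [ArithmeticFunction.natCoe_apply, (mem_Ioc.1 hn).1.ne']
  rw [hconv]
  refine norm_sum_le_of_le _ fun d _ ↦ ?_
  rw [norm_mul, norm_smul, Real.norm_of_nonneg (selbergFunction_nonneg d), mul_assoc]

variable {f : ℕ →*₀ ℂ} (hf : ∀ n, ‖f n‖ ≤ 1)
include hf

theorem norm_summatory_mul_log_le_sum {N : ℕ} (hN : 3 ≤ N) :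
    ‖summatory f N‖ * Real.log N ≤
      2 * N * ∑ k ∈ Ioc 0 N, ‖summatory f k‖ / k ^ 2 + 1000 * N := by
  have hlog : 1 ≤ Real.log N := by
    rw [Real.le_log_iff_exp_le (by positivity)]
    linarith [Real.exp_one_lt_d9, show (3 : ℝ) ≤ N by exact_mod_cast hN]
  have hfirst := norm_summatory_mul_log_pow_le hf 0 N
  have hsecond := norm_summatory_mul_log_pow_le hf 1 N
  have hselberg := sum_selbergFunction_mul_apply_div_le (V := fun k ↦ ‖summatory f k‖) (by simp)
    (abs_norm_summatory_succ_sub_le hf) (fun _ ↦ norm_nonneg _) N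
  have hdrop : ∑ d ∈ Ioc 0 N, Λ₂ d * (‖f d‖ * ‖summatory f (N / d)‖) ≤
      ∑ d ∈ Ioc 0 N, Λ₂ d * ‖summatory f (N / d)‖ := by
    gcongr with d
    · exact selbergFunction_nonneg d
    · exact mul_le_of_le_one_left (norm_nonneg _) (hf d)
  simp only [pow_zero, mul_one, zero_add, pow_one, one_add_one_eq_two] at hfirst hsecond
  refine le_of_mul_le_mul_right ?_ (one_pos.trans_le hlog)
  have := mul_le_mul_of_nonneg_right hfirst (zero_le_one.trans hlog)
  have := mul_le_mul_of_nonneg_left hlog (Nat.cast_nonneg N)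
  linarith [norm_summatory_mul_log_sq_le_sum f N]

end PointwiseBound

section CauchyLaw

open Complex MeasureTheory ProbabilityTheory FourierTransform Real
open scoped NNReal

variable {a : ℝ}

lemma integrable_exp_neg_mul_abs (ha : 0 < a) : Integrable fun v : ℝ ↦ rexp (-a * |v|) := by
  have hleft : IntegrableOn (fun v : ℝ ↦ rexp (-a * |v|)) (Set.Iic 0) :=
    (integrableOn_exp_mul_Iic ha 0).congr_fun
      (fun v hv ↦ by simp [abs_of_nonpos (Set.mem_Iic.1 hv)]) measurableSet_Iic
  have hright : IntegrableOn (fun v : ℝ ↦ rexp (-a * |v|)) (Set.Ioi 0) :=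
    (integrableOn_exp_mul_Ioi (neg_lt_zero.2 ha) 0).congr_fun
      (fun v hv ↦ by simp [abs_of_pos (Set.mem_Ioi.1 hv)]) measurableSet_Ioi
  rw [← integrableOn_univ, ← Set.Iic_union_Ioi (a := (0 : ℝ))]
  exact hleft.union hright

lemma fourier_exp_neg_mul_abs (ha : 0 < a) (w : ℝ) :
    𝓕 (fun v : ℝ ↦ (rexp (-a * |v|) : ℂ)) w = ((2 * a / (a ^ 2 + (2 * π * w) ^ 2) : ℝ) : ℂ) := by
  have hre₁ : 0 < (a - 2 * π * w * I : ℂ).re := by simpa using ha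
  have hre₂ : (-a - 2 * π * w * I : ℂ).re < 0 := by simpa using ha
  have hleft : Set.EqOn (fun v : ℝ ↦ cexp ((a - 2 * π * w * I) * v))
      (fun v ↦ cexp (↑(-2 * π * v * w) * I) • (rexp (-a * |v|) : ℂ)) (Set.Iic 0) := by
    intro v hv
    simp only [abs_of_nonpos (Set.mem_Iic.1 hv), smul_eq_mul, ofReal_exp, ← Complex.exp_add]
    congr 1
    push_cast
    ring
  have hright : Set.EqOn (fun v : ℝ ↦ cexp ((-a - 2 * π * w * I) * v))
      (fun v ↦ cexp (↑(-2 * π * v * w) * I) • (rexp (-a * |v|) : ℂ)) (Set.Ioi 0) := by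
    intro v hv
    simp only [abs_of_pos (Set.mem_Ioi.1 hv), smul_eq_mul, ofReal_exp, ← Complex.exp_add]
    congr 1
    push_cast
    ring
  rw [Real.fourier_real_eq_integral_exp_smul, ← intervalIntegral.integral_Iic_add_Ioi
      ((integrableOn_exp_mul_complex_Iic hre₁ 0).congr_fun hleft measurableSet_Iic)
      ((integrableOn_exp_mul_complex_Ioi hre₂ 0).congr_fun hright measurableSet_Ioi),
    ← setIntegral_congr_fun measurableSet_Iic hleft,
    ← setIntegral_congr_fun measurableSet_Ioi hright,
    integral_exp_mul_complex_Iic hre₁, integral_exp_mul_complex_Ioi hre₂]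
  have hne₁ : (a - 2 * π * w * I : ℂ) ≠ 0 := fun h ↦ by simp [h] at hre₁
  have hne₂ : (-a - 2 * π * w * I : ℂ) ≠ 0 := fun h ↦ by simp [h] at hre₂
  have hne₃ : (a : ℂ) ^ 2 + (2 * π * w) ^ 2 ≠ 0 := by
    exact_mod_cast (by positivity : a ^ 2 + (2 * π * w) ^ 2 ≠ 0)
  push_cast
  simp only [mul_zero, Complex.exp_zero]
  rw [div_add_div _ _ hne₁ hne₂, div_eq_div_iff (mul_ne_zero hne₁ hne₂) hne₃]
  linear_combination (-8 * (a : ℂ) * π ^ 2 * w ^ 2) * I_sq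

lemma integral_cauchyMeasure {E : Type*} [NormedAddCommGroup E] [NormedSpace ℝ E] (x₀ : ℝ)
    {γ : ℝ≥0} (hγ : γ ≠ 0) (g : ℝ → E) :
    ∫ x, g x ∂cauchyMeasure x₀ γ = ∫ x, cauchyPDFReal x₀ γ x • g x := by
  rw [cauchyMeasure_of_scale_ne_zero x₀ hγ, integral_withDensity_eq_integral_toReal_smul
    (measurable_cauchyPDF x₀ γ) (ae_of_all _ fun _ ↦ ENNReal.ofReal_lt_top)]
  simp_rw [cauchyPDF_def, ENNReal.toReal_ofReal (cauchyPDF_pos x₀ hγ _).le]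

theorem charFun_cauchyMeasure (γ : ℝ≥0) (v : ℝ) :
    charFun (cauchyMeasure 0 γ) v = rexp (-γ * |v|) := by
  rcases eq_or_ne γ 0 with rfl | hγ
  · simp
  have hγ₀ : (0 : ℝ) < γ := by positivity
  let g : ℝ → ℂ := fun v ↦ rexp (-γ * |v|)
  have hg : Continuous g := by fun_prop
  have hfourier : 𝓕 g =
      fun w : ℝ ↦ ((2 * π * cauchyPDFReal 0 γ (2 * π * w) : ℝ) : ℂ) := by
    ext w
    rw [fourier_exp_neg_mul_abs hγ₀, cauchyPDFReal_def]
    congr 1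
    field_simp
    ring
  have hF_int : Integrable (𝓕 g) := by
    rw [hfourier]
    exact (((integrable_cauchyPDFReal 0).comp_mul_left' (by positivity)).const_mul _).ofReal
  have hinv := congrFun (hg.fourierInv_fourier_eq (integrable_exp_neg_mul_abs hγ₀).ofReal hF_int) v
  rw [hfourier, Real.fourierInv_eq'] at hinv
  calc charFun (cauchyMeasure 0 γ) v
      = ∫ x : ℝ, cauchyPDFReal 0 γ x • cexp (v * x * I) := by
        rw [charFun_apply_real, integral_cauchyMeasure 0 hγ]
    _ = |2 * π| • ∫ w : ℝ, cauchyPDFReal 0 γ (2 * π * w) • cexp (v * ↑(2 * π * w) * I) := by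
        rw [Measure.integral_comp_mul_left
          (fun x : ℝ ↦ cauchyPDFReal 0 γ x • cexp (v * x * I)) (2 * π), smul_smul, abs_inv,
          mul_inv_cancel₀ (by positivity), one_smul]
    _ = g v := by
        rw [← hinv, ← integral_smul, abs_of_pos (by positivity)]
        refine integral_congr_ae (ae_of_all _ fun w ↦ ?_)
        simp only [real_smul, smul_eq_mul, inner_apply]
        push_cast
        ring_nf

lemma cauchyPDFReal_zero_le_of_le_abs {γ T : ℝ≥0} (hT : T ≠ 0) {t : ℝ} (ht : T ≤ |t|) :
    cauchyPDFReal 0 γ t ≤ 2 * γ / T * cauchyPDFReal 0 T t := by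
  have hT₀ : (0 : ℝ) < T := by positivity
  have hsq : (T : ℝ) ^ 2 ≤ t ^ 2 := by rw [← sq_abs t]; gcongr
  have ht₀ : 0 < t ^ 2 := (pow_pos hT₀ 2).trans_le hsq
  have hinv : (t ^ 2 + γ ^ 2 : ℝ)⁻¹ ≤ 2 * (t ^ 2 + T ^ 2 : ℝ)⁻¹ := by
    rw [← div_eq_mul_inv, inv_le_comm₀ (by positivity) (by positivity), inv_div,
      div_le_iff₀ two_pos]
    linarith [sq_nonneg (γ : ℝ)]
  simp only [cauchyPDFReal_def, sub_zero]
  calc π⁻¹ * γ * (t ^ 2 + γ ^ 2)⁻¹ ≤ π⁻¹ * γ * (2 * (t ^ 2 + T ^ 2)⁻¹) := by gcongr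
    _ = 2 * γ / T * (π⁻¹ * T * (t ^ 2 + T ^ 2)⁻¹) := by field_simp

end CauchyLaw

section ExponentialSums

open Complex MeasureTheory
open scoped ComplexConjugate

variable {ι : Type*} {b : ι → ℂ}

lemma norm_mul_exp_mul_I (z : ℂ) (x : ℝ) : ‖z * cexp (x * I)‖ = ‖z‖ := by
  rw [norm_mul, norm_exp_ofReal_mul_I, mul_one]

lemma norm_tsum_mul_exp_le (hb : Summable fun i ↦ ‖b i‖) (θ : ι → ℝ) :
    ‖∑' i, b i * cexp (θ i * I)‖ ≤ ∑' i, ‖b i‖ := by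
  refine (norm_tsum_le_tsum_norm (by simpa only [norm_mul_exp_mul_I])).trans_eq ?_
  simp only [norm_mul_exp_mul_I]

lemma ofReal_norm_sq_tsum_mul_exp (hb : Summable fun i ↦ ‖b i‖) (θ : ι → ℝ) :
    ((‖∑' i, b i * cexp (θ i * I)‖ ^ 2 : ℝ) : ℂ) =
      ∑' p : ι × ι, b p.1 * conj (b p.2) * cexp ((θ p.1 - θ p.2 : ℝ) * I) := by
  have hb' : Summable fun i ↦ ‖b i * cexp (θ i * I)‖ := by simpa only [norm_mul_exp_mul_I]
  rw [← normSq_eq_norm_sq, ← mul_conj, conj_tsum,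
    tsum_mul_tsum_of_summable_norm hb' (by simpa only [RCLike.norm_conj])]
  refine tsum_congr fun p ↦ ?_
  rw [map_mul, ← exp_conj, map_mul, conj_ofReal, conj_I, ofReal_sub, sub_mul, sub_eq_add_neg,
    exp_add, mul_neg]
  ring

theorem hasSum_integral_norm_sq_tsum_mul_exp [Countable ι] (hb : Summable fun i ↦ ‖b i‖)
    (ℓ : ι → ℝ) (μ : Measure ℝ) [IsFiniteMeasure μ] :
    HasSum (fun p : ι × ι ↦ b p.1 * conj (b p.2) * charFun μ (ℓ p.1 - ℓ p.2))
      ((∫ t, ‖∑' i, b i * cexp ((ℓ i * t : ℝ) * I)‖ ^ 2 ∂μ : ℝ) : ℂ) := by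
  let F (p : ι × ι) (t : ℝ) : ℂ := b p.1 * conj (b p.2) * cexp ((ℓ p.1 * t - ℓ p.2 * t : ℝ) * I)
  have hnorm (p : ι × ι) (t : ℝ) : ‖F p t‖ = ‖b p.1‖ * ‖b p.2‖ := by
    rw [norm_mul_exp_mul_I, norm_mul, RCLike.norm_conj]
  have hF_int (p : ι × ι) : Integrable (F p) μ :=
    .of_bound (by fun_prop) _ (ae_of_all _ fun t ↦ (hnorm p t).le)
  have hsum := hasSum_integral_of_summable_integral_norm hF_int <| by
    simp_rw [hnorm, integral_const, smul_eq_mul]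
    exact (hb.mul_of_nonneg hb (fun _ ↦ norm_nonneg _) fun _ ↦ norm_nonneg _).mul_left _
  rw [← integral_complex_ofReal]
  simp_rw [ofReal_norm_sq_tsum_mul_exp hb]
  refine hsum.congr_fun fun p ↦ ?_
  simp_rw [F, integral_const_mul, charFun_apply_real, ← sub_mul, ofReal_mul]

end ExponentialSums

section RpowIncrements

/-- The decrease of `x ↦ x ^ (-s)` over `[k, k + 1]`: the weights of partial summation against
`n ^ (-s)`. At `k = 0` the junk value of `0 ^ (-s)` makes it meaningless. -/
noncomputable def rpowDrop (s : ℝ) (k : ℕ) : ℝ := (k : ℝ) ^ (-s) - (k + 1 : ℝ) ^ (-s)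

variable {s : ℝ} (hs : 0 < s)
include hs

lemma rpowDrop_bounds {k : ℕ} (hk : k ≠ 0) :
    s * (k + 1 : ℝ) ^ (-s - 1) ≤ rpowDrop s k ∧ rpowDrop s k ≤ s * (k : ℝ) ^ (-s - 1) := by
  have hk₀ : (0 : ℝ) < k := by positivity
  have hk₁ : (0 : ℝ) < k + 1 := by positivity
  set L := Real.log (k + 1) - Real.log k with hL
  obtain ⟨hlow, hupp⟩ := log_add_one_sub_log_bounds hk
  have hdown : (k : ℝ) ^ (-s) = (k + 1 : ℝ) ^ (-s) * Real.exp (s * L) := by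
    rw [Real.rpow_def_of_pos hk₀, Real.rpow_def_of_pos hk₁, ← Real.exp_add, hL]
    ring_nf
  have hup : (k + 1 : ℝ) ^ (-s) = (k : ℝ) ^ (-s) * Real.exp (-(s * L)) := by
    rw [hdown, mul_assoc, ← Real.exp_add, add_neg_cancel, Real.exp_zero, mul_one]
  rw [rpowDrop]
  constructor
  · calc s * (k + 1 : ℝ) ^ (-s - 1) = (k + 1 : ℝ) ^ (-s) * (s * (1 / (k + 1))) := by
          rw [Real.rpow_sub_one hk₁.ne']; ring
      _ ≤ (k + 1 : ℝ) ^ (-s) * (Real.exp (s * L) - 1) := by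
          gcongr
          linarith [Real.add_one_le_exp (s * L), mul_le_mul_of_nonneg_left hlow hs.le]
      _ = _ := by rw [hdown]; ring
  · calc (k : ℝ) ^ (-s) - (k + 1 : ℝ) ^ (-s) = (k : ℝ) ^ (-s) * (1 - Real.exp (-(s * L))) := by
          rw [hup]; ring
      _ ≤ (k : ℝ) ^ (-s) * (s * (1 / k)) := by
          gcongr
          linarith [Real.add_one_le_exp (-(s * L)), mul_le_mul_of_nonneg_left hupp hs.le]
      _ = _ := by rw [Real.rpow_sub_one hk₀.ne']; ring

lemma rpowDrop_nonneg {k : ℕ} (hk : k ≠ 0) : 0 ≤ rpowDrop s k :=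
  (by positivity : 0 ≤ s * (k + 1 : ℝ) ^ (-s - 1)).trans (rpowDrop_bounds hs hk).1

lemma hasSum_rpowDrop {M : ℕ} (hM : M ≠ 0) :
    HasSum (fun k ↦ if M ≤ k then rpowDrop s k else 0) ((M : ℝ) ^ (-s)) := by
  have htelescope (k : ℕ) : (if M ≤ k then rpowDrop s k else 0) =
      ((max k M : ℕ) : ℝ) ^ (-s) - ((max (k + 1) M : ℕ) : ℝ) ^ (-s) := by
    split_ifs with h
    · rw [max_eq_left h, max_eq_left (by omega), rpowDrop, Nat.cast_add_one]
    · rw [max_eq_right (by omega), max_eq_right (by omega), sub_self]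
  rw [hasSum_iff_tendsto_nat_of_nonneg]
  · simp_rw [htelescope, Finset.sum_range_sub' fun k ↦ ((max k M : ℕ) : ℝ) ^ (-s)]
    have hmax : Tendsto (fun n ↦ max n M) atTop atTop :=
      tendsto_atTop_mono (fun n ↦ le_max_left n M) tendsto_id
    simpa using ((tendsto_rpow_neg_atTop hs).comp
      (tendsto_natCast_atTop_atTop.comp hmax)).const_sub ((M : ℝ) ^ (-s))
  · intro k
    split_ifs with h
    · exact rpowDrop_nonneg hs (by omega)
    · exact le_rfl

lemma tsum_rpow_neg_sub_one_le : ∑' n : ℕ, (n : ℝ) ^ (-s - 1) ≤ 1 + 1 / s := by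
  have hsummable : Summable fun n : ℕ ↦ (n : ℝ) ^ (-s - 1) :=
    Real.summable_nat_rpow.2 (by linarith)
  have hsummable₂ : Summable fun n : ℕ ↦ ((n + 2 : ℕ) : ℝ) ^ (-s - 1) :=
    (summable_nat_add_iff 2).2 hsummable
  have hdrop : HasSum (fun k ↦ rpowDrop s (k + 1)) 1 := by
    simpa using (hasSum_nat_add_iff' 1).2 (hasSum_rpowDrop hs one_ne_zero)
  have htail : s * ∑' n : ℕ, ((n + 2 : ℕ) : ℝ) ^ (-s - 1) ≤ 1 := by
    rw [← tsum_mul_left]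
    refine ((hsummable₂.mul_left s).tsum_le_tsum (fun n ↦ ?_) hdrop.summable).trans
      hdrop.tsum_eq.le
    exact_mod_cast (rpowDrop_bounds hs n.succ_ne_zero).1
  rw [← hsummable.sum_add_tsum_nat_add 2]
  have hhead : ∑ n ∈ range 2, (n : ℝ) ^ (-s - 1) = 1 := by
    rw [sum_range_succ, sum_range_one, Nat.cast_zero, Real.zero_rpow (by linarith)]
    simp
  rw [hhead, add_le_add_iff_left, le_div_iff₀ hs]
  linarith

end RpowIncrements

section DirichletSeries

open Complex MeasureTheory ProbabilityTheory
open scoped NNReal ComplexConjugate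

variable {a : ℕ → ℂ} {σ : ℝ}

lemma term_add_mul_I (a : ℕ → ℂ) (σ t : ℝ) (n : ℕ) :
    LSeries.term a (σ + t * I) n = LSeries.term a σ n * cexp ((-Real.log n * t : ℝ) * I) := by
  rcases eq_or_ne n 0 with rfl | hn
  · simp
  have hn' : (n : ℂ) ≠ 0 := Nat.cast_ne_zero.2 hn
  rw [LSeries.term_of_ne_zero hn, LSeries.term_of_ne_zero hn, cpow_add _ _ hn', ← div_div,
    div_eq_mul_inv (a n / _), ← cpow_neg, cpow_def_of_ne_zero hn' (-(t * I)), ← natCast_log]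
  congr 2
  push_cast
  ring

lemma LSeries_add_mul_I (a : ℕ → ℂ) (σ t : ℝ) :
    LSeries a (σ + t * I) =
      ∑' n, LSeries.term a σ n * cexp ((-Real.log n * t : ℝ) * I) :=
  tsum_congr (term_add_mul_I a σ t)

lemma LSeriesSummable_add_mul_I (ha : LSeriesSummable a σ) (t : ℝ) :
    LSeriesSummable a (σ + t * I) :=
  ha.of_re_le_re (by simp)

/-- The mean square of a Dirichlet series on the line `re s = σ`, where the ordinate `t` follows
the Cauchy law of scale `γ`, whose density is proportional to `1 / (γ ^ 2 + t ^ 2)`. -/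
noncomputable def meanSquare (a : ℕ → ℂ) (σ : ℝ) (γ : ℝ≥0) : ℝ :=
  ∫ t : ℝ, ‖LSeries a (σ + t * I)‖ ^ 2 ∂cauchyMeasure 0 γ

lemma meanSquare_nonneg (a : ℕ → ℂ) (σ : ℝ) (γ : ℝ≥0) : 0 ≤ meanSquare a σ γ :=
  integral_nonneg fun _ ↦ sq_nonneg _

lemma continuous_LSeries_add_mul_I (ha : LSeriesSummable a σ) :
    Continuous fun t : ℝ ↦ LSeries a (σ + t * I) := by
  simp_rw [LSeries_add_mul_I]
  exact continuous_tsum (fun _ ↦ by fun_prop) ha.norm fun _ _ ↦ (norm_mul_exp_mul_I _ _).le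

lemma integrable_norm_sq_LSeries (ha : LSeriesSummable a σ) (μ : Measure ℝ) [IsFiniteMeasure μ] :
    Integrable (fun t : ℝ ↦ ‖LSeries a (σ + t * I)‖ ^ 2) μ := by
  refine .of_bound ((continuous_LSeries_add_mul_I ha).norm.pow 2).aestronglyMeasurable
    ((∑' n, ‖LSeries.term a σ n‖) ^ 2) (ae_of_all _ fun t ↦ ?_)
  rw [norm_pow, norm_norm, LSeries_add_mul_I]
  gcongr
  exact norm_tsum_mul_exp_le ha.norm _

theorem hasSum_meanSquare (ha : LSeriesSummable a σ) (γ : ℝ≥0) :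
    HasSum (fun p : ℕ × ℕ ↦ LSeries.term a σ p.1 * conj (LSeries.term a σ p.2) *
      (Real.exp (-γ * |Real.log p.1 - Real.log p.2|) : ℂ)) (meanSquare a σ γ) := by
  have := hasSum_integral_norm_sq_tsum_mul_exp ha.norm (fun n ↦ -Real.log n) (cauchyMeasure 0 γ)
  simp_rw [charFun_cauchyMeasure, neg_sub_neg, ← LSeries_add_mul_I] at this
  exact this.congr_fun fun p ↦ by rw [abs_sub_comm]

-- The Fourier transform of the Cauchy law is positive, so the off-diagonal terms of
-- `hasSum_meanSquare` are dominated in absolute value, not only in mean.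
theorem meanSquare_le_meanSquare {b : ℕ → ℝ} (hab : ∀ n, ‖a n‖ ≤ b n)
    (hb : LSeriesSummable (fun n ↦ (b n : ℂ)) σ) {γ γ' : ℝ≥0} (hγ : γ' ≤ γ) :
    meanSquare a σ γ ≤ meanSquare (fun n ↦ (b n : ℂ)) σ γ' := by
  have hb₀ (n : ℕ) : 0 ≤ b n := (norm_nonneg _).trans (hab n)
  have hterm (n : ℕ) : LSeries.term (fun n ↦ (b n : ℂ)) σ n =
      (‖LSeries.term (fun n ↦ (b n : ℂ)) σ n‖ : ℝ) := by
    rcases eq_or_ne n 0 with rfl | hn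
    · simp
    rw [LSeries.norm_term_eq, if_neg hn, LSeries.term_of_ne_zero hn, norm_real,
      Real.norm_of_nonneg (hb₀ n), ofReal_div, ofReal_re, ofReal_cpow n.cast_nonneg]
    rfl
  have hnorm (n : ℕ) : ‖LSeries.term a σ n‖ ≤ ‖LSeries.term (fun n ↦ (b n : ℂ)) σ n‖ :=
    LSeries.norm_term_le _ ((hab n).trans (by simpa using le_abs_self (b n)))
  have ha : LSeriesSummable a σ := .of_norm_bounded hb.norm hnorm
  refine hasSum_le (fun p ↦ ?_) (hasSum_re (hasSum_meanSquare ha γ))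
    (hasSum_re (hasSum_meanSquare hb γ'))
  refine (re_le_norm _).trans ?_
  rw [hterm p.1, hterm p.2, conj_ofReal, ← ofReal_mul, ← ofReal_mul, ofReal_re, norm_mul,
    norm_mul, RCLike.norm_conj, norm_real, Real.norm_of_nonneg (Real.exp_nonneg _)]
  gcongr
  all_goals exact hnorm _

lemma term_mul_conj_term_mul_exp (a : ℕ → ℂ) (σ : ℝ) {n m : ℕ} (hn : n ≠ 0) (hm : m ≠ 0) :
    LSeries.term a σ n * conj (LSeries.term a σ m) *
      (Real.exp (-σ * |Real.log n - Real.log m|) : ℂ) =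
      a n * conj (a m) * (((max n m : ℕ) : ℝ) ^ (-(2 * σ)) : ℝ) := by
  have hterm {k : ℕ} (hk : k ≠ 0) :
      LSeries.term a σ k = a k * (Real.exp (-σ * Real.log k) : ℝ) := by
    rw [LSeries.term_of_ne_zero hk, div_eq_mul_inv, ← cpow_neg,
      cpow_def_of_ne_zero (Nat.cast_ne_zero.2 hk), ← natCast_log]
    push_cast
    ring_nf
  have hmax : Real.exp (-σ * Real.log n) * Real.exp (-σ * Real.log m) *
      Real.exp (-σ * |Real.log n - Real.log m|) = ((max n m : ℕ) : ℝ) ^ (-(2 * σ)) := by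
    rw [Real.rpow_def_of_pos (by positivity), ← Real.exp_add, ← Real.exp_add]
    rcases le_total n m with h | h
    · rw [max_eq_right h, abs_of_nonpos (sub_nonpos.2 (Real.log_le_log (by positivity)
        (by exact_mod_cast h)))]
      ring_nf
    · rw [max_eq_left h, abs_of_nonneg (sub_nonneg.2 (Real.log_le_log (by positivity)
        (by exact_mod_cast h)))]
      ring_nf
  rw [← hmax, hterm hn, hterm hm, map_mul, conj_ofReal]
  push_cast
  ring

lemma hasSum_term_mul_conj_term (a : ℕ → ℂ) (hσ : 0 < σ) (p : ℕ × ℕ) :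
    HasSum (fun k ↦ a p.1 * conj (a p.2) *
        ((if p ∈ Ioc 0 k ×ˢ Ioc 0 k then rpowDrop (2 * σ) k else 0 : ℝ) : ℂ))
      (LSeries.term a σ p.1 * conj (LSeries.term a σ p.2) *
        (Real.exp (-σ * |Real.log p.1 - Real.log p.2|) : ℂ)) := by
  obtain ⟨n, m⟩ := p
  rcases eq_or_ne n 0 with rfl | hn
  · simp
  rcases eq_or_ne m 0 with rfl | hm
  · simp
  rw [term_mul_conj_term_mul_exp a σ hn hm]
  have hdrop : HasSum (fun k ↦ if max n m ≤ k then rpowDrop (2 * σ) k else 0)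
    (((max n m : ℕ) : ℝ) ^ (-(2 * σ))) := hasSum_rpowDrop (by positivity) (by positivity)
  refine ((hasSum_ofReal.2 hdrop).mul_left (a n * conj (a m))).congr_fun fun k ↦ ?_
  congr 3
  simp [Nat.pos_of_ne_zero hn, Nat.pos_of_ne_zero hm]

-- For the Cauchy law of scale `σ` the `(n, m)` term depends on `(n, m)` through
-- `a n * conj (a m)` and `max n m` only, so that partial summation is exact.
theorem hasSum_norm_summatory_sq_mul_rpowDrop {σ : ℝ≥0} (hσ : σ ≠ 0)
    (ha : LSeriesSummable a (σ : ℝ)) :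
    HasSum (fun k ↦ ‖summatory a k‖ ^ 2 * rpowDrop (2 * σ) k) (meanSquare a σ σ) := by
  have hσ₀ : (0 : ℝ) < σ := by positivity
  let w (p : ℕ × ℕ) (k : ℕ) : ℝ := if p ∈ Ioc 0 k ×ˢ Ioc 0 k then rpowDrop (2 * σ) k else 0
  let Φ (q : (ℕ × ℕ) × ℕ) : ℂ := a q.1.1 * conj (a q.1.2) * w q.1 q.2
  have hrow (p : ℕ × ℕ) := hasSum_term_mul_conj_term a hσ₀ p
  have hsum := hasSum_meanSquare ha σ
  have hw (p : ℕ × ℕ) (k : ℕ) : 0 ≤ w p k := by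
    simp only [w, mem_product, mem_Ioc]
    split_ifs with h
    · exact rpowDrop_nonneg (by positivity) (by omega)
    · exact le_rfl
  have hΦ : Summable Φ := by
    refine .of_norm ((summable_prod_of_nonneg fun _ ↦ norm_nonneg _).2
      ⟨fun p ↦ (hrow p).summable.norm, hsum.summable.norm.congr fun p ↦ ?_⟩)
    have hw_norm (k : ℕ) : ‖Φ (p, k)‖ = ‖a p.1 * conj (a p.2)‖ * w p k := by
      rw [norm_mul, norm_real, Real.norm_of_nonneg (hw p k)]
    rw [tsum_congr hw_norm, tsum_mul_left, ← (hrow p).tsum_eq, tsum_mul_left, ← ofReal_tsum,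
      norm_mul, norm_real, Real.norm_of_nonneg (tsum_nonneg (hw p))]
  have hcol (k : ℕ) : HasSum (fun p : ℕ × ℕ ↦ Φ (p, k))
      ((‖summatory a k‖ ^ 2 * rpowDrop (2 * σ) k : ℝ) : ℂ) := by
    have hsupp : HasSum (fun p : ℕ × ℕ ↦ Φ (p, k)) (∑ p ∈ Ioc 0 k ×ˢ Ioc 0 k, Φ (p, k)) :=
      hasSum_sum_of_ne_finset_zero fun p hp ↦ by
        simp only [Φ, w, if_neg hp, ofReal_zero, mul_zero]
    convert hsupp using 1
    rw [sum_congr rfl fun p hp ↦ by simp only [Φ, w, if_pos hp]; rfl, ← sum_mul, ofReal_mul,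
      ← normSq_eq_norm_sq, ← mul_conj, summatory, map_sum, sum_mul_sum, sum_product]
  have hΦsum : HasSum Φ (meanSquare a σ σ) :=
    (hΦ.hasSum.prod_fiberwise hrow).unique hsum ▸ hΦ.hasSum
  rw [← hasSum_ofReal]
  exact ((Equiv.prodComm ℕ (ℕ × ℕ)).hasSum_iff.2 hΦsum).prod_fiberwise hcol

end DirichletSeries

section MeanSquareSplitting

open Complex MeasureTheory ProbabilityTheory
open scoped NNReal

lemma restrict_cauchyMeasure_le {γ T : ℝ≥0} (hγ : γ ≠ 0) (hT : T ≠ 0) :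
    (cauchyMeasure 0 γ).restrict {t : ℝ | (T : ℝ) < |t|} ≤ (2 * γ / T) • cauchyMeasure 0 T := by
  have hmeas : MeasurableSet {t : ℝ | (T : ℝ) < |t|} :=
    measurableSet_lt measurable_const (by fun_prop)
  refine Measure.le_iff.2 fun s hs ↦ ?_
  rw [Measure.restrict_apply hs, Measure.smul_apply, cauchyMeasure_of_scale_ne_zero 0 hγ,
    cauchyMeasure_of_scale_ne_zero 0 hT, withDensity_apply _ (hs.inter hmeas),
    withDensity_apply _ hs, ENNReal.smul_def, smul_eq_mul,
    ← lintegral_const_mul _ (measurable_cauchyPDF 0 T)]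
  refine (setLIntegral_mono (by fun_prop) fun t ht ↦ ?_).trans
    (lintegral_mono_set Set.inter_subset_left)
  rw [cauchyPDF_def, cauchyPDF_def, ← ENNReal.ofReal_coe_nnreal,
    ← ENNReal.ofReal_mul (by positivity)]
  exact ENNReal.ofReal_le_ofReal (by exact_mod_cast cauchyPDFReal_zero_le_of_le_abs hT ht.2.le)

theorem meanSquare_le_of_norm_le_on {a b : ℕ → ℂ} {σ B : ℝ} {γ T : ℝ≥0} (hγ : γ ≠ 0)
    (hT : T ≠ 0) (ha : LSeriesSummable a σ) (hb : LSeriesSummable b σ)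
    (hab : ∀ t : ℝ, |t| ≤ T → ‖LSeries a (σ + t * I)‖ ≤ B * ‖LSeries b (σ + t * I)‖) :
    meanSquare a σ γ ≤ B ^ 2 * meanSquare b σ γ + 2 * γ / T * meanSquare a σ T := by
  have hmeas : MeasurableSet {t : ℝ | |t| ≤ T} := measurableSet_le (by fun_prop) measurable_const
  have hcompl : {t : ℝ | |t| ≤ T}ᶜ = {t : ℝ | (T : ℝ) < |t|} := by ext; simp
  have hinta (γ : ℝ≥0) := integrable_norm_sq_LSeries ha (cauchyMeasure 0 γ)
  have hintb := (integrable_norm_sq_LSeries hb (cauchyMeasure 0 γ)).const_mul (B ^ 2)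
  rw [meanSquare, ← integral_add_compl hmeas (hinta γ), hcompl]
  gcongr
  · rw [meanSquare, ← integral_const_mul]
    refine (setIntegral_mono_on (hinta γ).integrableOn hintb.integrableOn hmeas fun t ht ↦ ?_).trans
      (setIntegral_le_integral hintb (ae_of_all _ fun t ↦ by positivity))
    rw [← mul_pow]
    gcongr
    exact hab t ht
  · refine (integral_mono_measure (restrict_cauchyMeasure_le hγ hT)
      (ae_of_all _ fun t ↦ sq_nonneg _) ((hinta T).smul_measure ENNReal.coe_ne_top)).trans_eq ?_
    rw [integral_smul_nnreal_measure]
    simp [meanSquare, NNReal.smul_def]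

end MeanSquareSplitting

section LogarithmicDerivative

variable (f : ℕ →*₀ ℂ) {s : ℂ}

lemma LSeries_mul_log (hf : LSeriesSummable f s)
    (hΛ : LSeriesSummable (fun n ↦ f n * (Λ n : ℂ)) s) :
    LSeries (fun n ↦ f n * (Real.log n : ℂ)) s =
      LSeries (fun n ↦ f n * (Λ n : ℂ)) s * LSeries f s := by
  rw [← LSeries_convolution' hΛ hf]
  refine LSeries_congr (fun {n} _ ↦ ?_) s
  rw [LSeries.convolution_def, ← ArithmeticFunction.vonMangoldt_sum,
    ← Nat.sum_divisorsAntidiagonal fun d _ ↦ Λ d, Complex.ofReal_sum, mul_sum]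
  refine sum_congr rfl fun p hp ↦ ?_
  rw [← (Nat.mem_divisorsAntidiagonal.1 hp).1, map_mul]
  ring

end LogarithmicDerivative

section PretentiousDistance

open Complex

lemma norm_neg_log_one_sub_sub_self_le {z : ℂ} (hz : ‖z‖ ≤ 1 / 2) :
    ‖-log (1 - z) - z‖ ≤ ‖z‖ ^ 2 := by
  have h := norm_log_one_add_sub_self_le (z := -z) (by rw [norm_neg]; linarith)
  rw [← sub_eq_add_neg, sub_neg_eq_add, norm_neg] at h
  have hinv : (1 - ‖z‖)⁻¹ ≤ 2 := by
    rw [inv_le_comm₀ (by linarith) two_pos]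
    linarith
  calc ‖-log (1 - z) - z‖ = ‖log (1 - z) + z‖ := by rw [← norm_neg]; congr 1; ring
    _ ≤ ‖z‖ ^ 2 * (1 - ‖z‖)⁻¹ / 2 := h
    _ ≤ ‖z‖ ^ 2 * 2 / 2 := by gcongr
    _ = ‖z‖ ^ 2 := by ring

theorem abs_log_norm_tsum_sub_tsum_re_le {φ : ℕ →*₀ ℂ} (hφ : Summable (‖φ ·‖))
    (hhalf : ∀ p : Nat.Primes, ‖φ p‖ ≤ 1 / 2) (hsq : Summable fun p : Nat.Primes ↦ ‖φ p‖ ^ 2) :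
    |Real.log ‖∑' n, φ n‖ - ∑' p : Nat.Primes, (φ p).re| ≤ ∑' p : Nat.Primes, ‖φ p‖ ^ 2 := by
  have hlog : Summable fun p : Nat.Primes ↦ -log (1 - φ p) :=
    hφ.of_norm.clog_one_sub.neg.subtype Nat.Prime
  have hprimes : Summable fun p : Nat.Primes ↦ φ p := hφ.of_norm.subtype Nat.Prime
  rw [← EulerProduct.exp_tsum_primes_log_eq_tsum hφ, norm_exp, Real.log_exp,
    ← re_tsum hprimes, ← sub_re, ← hlog.tsum_sub hprimes]
  exact (abs_re_le_norm _).trans <| tsum_of_norm_bounded hsq.hasSum fun p ↦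
    norm_neg_log_one_sub_sub_self_le (hhalf p)

/-- The contribution of the prime `p` to the squared pretentious distance between `f` and
`n ↦ n ^ (i * im s)`, with primes weighted by `p ^ (-re s)`. -/
noncomputable def primeDefect (f : ℕ → ℂ) (s : ℂ) (p : ℕ) : ℝ :=
  (p : ℝ) ^ (-s.re) - (LSeries.term f s p).re

lemma LSeries_one_hom {s : ℂ} (hs : 1 < s.re) : LSeries (1 : ℕ →*₀ ℂ) s = riemannZeta s := by
  rw [← LSeries_one_eq_riemannZeta hs]
  exact LSeries_congr (fun {n} hn ↦ MonoidWithZeroHom.one_apply_of_ne_zero hn) s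

lemma norm_one_hom_le (n : ℕ) : ‖(1 : ℕ →*₀ ℂ) n‖ ≤ 1 := by
  rcases eq_or_ne n 0 with rfl | hn <;> simp [MonoidWithZeroHom.one_apply_of_ne_zero, *]

lemma term_one_ofReal (σ : ℝ) {n : ℕ} (hn : n ≠ 0) :
    LSeries.term (1 : ℕ →*₀ ℂ) σ n = ((n : ℝ) ^ (-σ) : ℝ) := by
  rw [LSeries.term_of_ne_zero hn, MonoidWithZeroHom.one_apply_of_ne_zero hn, one_div, ← cpow_neg,
    ofReal_cpow n.cast_nonneg]
  push_cast
  rfl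

variable {f : ℕ →*₀ ℂ} (hf : ∀ n, ‖f n‖ ≤ 1) {s : ℂ}
include hf

lemma norm_term_le_rpow (s : ℂ) {n : ℕ} (hn : n ≠ 0) :
    ‖LSeries.term f s n‖ ≤ (n : ℝ) ^ (-s.re) := by
  rw [LSeries.norm_term_eq, if_neg hn, Real.rpow_neg n.cast_nonneg, div_eq_mul_inv]
  exact mul_le_of_le_one_left (by positivity) (hf n)

lemma primeDefect_nonneg (s : ℂ) {p : ℕ} (hp : p ≠ 0) : 0 ≤ primeDefect f s p :=
  sub_nonneg.2 ((re_le_norm _).trans (norm_term_le_rpow hf s hp))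

lemma abs_log_norm_LSeries_sub_tsum_re_term_le (hs : 1 < s.re) :
    |Real.log ‖LSeries f s‖ - ∑' p : Nat.Primes, (LSeries.term f s p).re| ≤
      ∑' p : Nat.Primes, (p : ℝ) ^ (-2 : ℝ) := by
  have hs₀ : s ≠ 0 := ne_zero_of_one_lt_re hs
  let φ : ℕ →*₀ ℂ := f * riemannZetaSummandHom hs₀
  have hφ (n : ℕ) : LSeries.term f s n = φ n := LSeries.term_def₀ (map_zero f) s n
  have hsummable : Summable (‖φ ·‖) := by
    simpa only [← hφ] using (LSeriesSummable_of_bounded_of_one_lt_re (fun n _ ↦ hf n) hs).norm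
  have hle (p : Nat.Primes) : ‖φ p‖ ≤ (p : ℝ)⁻¹ := by
    rw [← hφ, ← Real.rpow_neg_one]
    exact (norm_term_le_rpow hf s p.2.ne_zero).trans
      (Real.rpow_le_rpow_of_exponent_le (by exact_mod_cast p.2.one_le) (by linarith))
  have hsq (p : Nat.Primes) : ‖φ p‖ ^ 2 ≤ (p : ℝ) ^ (-2 : ℝ) := by
    rw [Real.rpow_neg (by positivity), Real.rpow_two, ← inv_pow]
    gcongr
    exact hle p
  have hsummable_sq : Summable fun p : Nat.Primes ↦ (p : ℝ) ^ (-2 : ℝ) :=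
    (Real.summable_nat_rpow.2 (by norm_num)).subtype Nat.Prime
  have hsq' := hsummable_sq.of_nonneg_of_le (fun _ ↦ sq_nonneg _) hsq
  simp_rw [LSeries, hφ]
  refine (abs_log_norm_tsum_sub_tsum_re_le hsummable (fun p ↦ (hle p).trans ?_) hsq').trans
    (hsq'.tsum_le_tsum hsq hsummable_sq)
  rw [one_div]
  exact inv_anti₀ two_pos (by exact_mod_cast p.2.two_le)

lemma hasSum_primeDefect (hs : 1 < s.re) :
    HasSum (fun p : Nat.Primes ↦ primeDefect f s p)
      (∑' p : Nat.Primes, (p : ℝ) ^ (-s.re) - ∑' p : Nat.Primes, (LSeries.term f s p).re) := by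
  have hprimes : Summable fun p : Nat.Primes ↦ (p : ℝ) ^ (-s.re) :=
    (Real.summable_nat_rpow.2 (by linarith)).subtype Nat.Prime
  exact hprimes.hasSum.sub (hprimes.of_norm_bounded fun p ↦
    (abs_re_le_norm _).trans (norm_term_le_rpow hf s p.2.ne_zero)).hasSum

theorem abs_log_norm_LSeries_sub_log_norm_zeta_add_le (hs : 1 < s.re) :
    |Real.log ‖LSeries f s‖ - Real.log ‖riemannZeta s.re‖ + ∑' p : Nat.Primes, primeDefect f s p| ≤
      2 * ∑' p : Nat.Primes, (p : ℝ) ^ (-2 : ℝ) := by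
  have hf_log := abs_log_norm_LSeries_sub_tsum_re_term_le hf hs
  have hζ_log := abs_log_norm_LSeries_sub_tsum_re_term_le norm_one_hom_le (s := s.re) hs
  rw [LSeries_one_hom (s := s.re) hs, tsum_congr fun p : Nat.Primes ↦ by
    rw [term_one_ofReal _ p.2.ne_zero, ofReal_re]] at hζ_log
  rw [(hasSum_primeDefect hf hs).tsum_eq]
  grind [abs_le]

end PretentiousDistance

section NonPretentious

open Complex

variable {f : ℕ →*₀ ℂ}

lemma primeDefect_add_ofReal (f : ℕ → ℂ) (s : ℂ) (δ : ℝ) {p : ℕ} (hp : p ≠ 0) :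
    primeDefect f (s + δ) p = (p : ℝ) ^ (-δ) * primeDefect f s p := by
  have hp₀ : (0 : ℝ) < p := by positivity
  rw [primeDefect, primeDefect, LSeries.term_of_ne_zero hp, LSeries.term_of_ne_zero hp,
    cpow_add _ _ (Nat.cast_ne_zero.2 hp), ← div_div, div_eq_mul_inv (f p / _), ← cpow_neg,
    ← ofReal_neg, ← ofReal_natCast, ← ofReal_cpow hp₀.le, re_mul_ofReal, add_re, ofReal_re,
    neg_add, Real.rpow_add hp₀]
  ring

lemma tendsto_norm_riemannZeta_one_add_ofReal :
    Tendsto (fun δ : ℝ ↦ δ * ‖riemannZeta (1 + δ)‖) (𝓝[>] 0) (𝓝 1) := by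
  have hshift : Tendsto (fun δ : ℝ ↦ (1 + δ : ℂ)) (𝓝[>] 0) (𝓝[≠] 1) := by
    refine tendsto_nhdsWithin_iff.2 ⟨?_, ?_⟩
    · exact (Continuous.tendsto' (by fun_prop) 0 _ (by simp)).mono_left nhdsWithin_le_nhds
    · filter_upwards [self_mem_nhdsWithin] with δ hδ
      simpa using (Set.mem_Ioi.1 hδ).ne'
  have hnorm := (riemannZeta_residue_one.comp hshift).norm
  rw [norm_one] at hnorm
  refine hnorm.congr' ?_
  filter_upwards [self_mem_nhdsWithin] with δ hδ
  simp [abs_of_pos (Set.mem_Ioi.1 hδ)]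

-- By the logarithm comparison, summability of the defects would carry the pole of `ζ` at `1`
-- over to the point `1 + t * I`.
lemma not_summable_primeDefect_one {t : ℝ} (ht : t ≠ 0) :
    ¬ Summable fun p : Nat.Primes ↦ primeDefect (1 : ℕ →*₀ ℂ) (1 + t * I) p := by
  intro hsum
  set s : ℂ := 1 + t * I
  have hs_ne : s ≠ 1 := by simpa [s] using ht
  have hcont : Tendsto (fun δ : ℝ ↦ Real.log ‖riemannZeta (s + δ)‖) (𝓝[>] 0)
      (𝓝 (Real.log ‖riemannZeta s‖)) := by
    have hs_add : Tendsto (fun δ : ℝ ↦ s + δ) (𝓝[>] 0) (𝓝 s) :=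
      (Continuous.tendsto' (by fun_prop) 0 _ (by simp)).mono_left nhdsWithin_le_nhds
    exact ((differentiableAt_riemannZeta hs_ne).continuousAt.tendsto.comp hs_add).norm.log
      (norm_ne_zero_iff.2 (riemannZeta_ne_zero_of_one_le_re (by simp [s])))
  have hlog : Tendsto (fun δ : ℝ ↦ Real.log ‖riemannZeta (1 + δ)‖) (𝓝[>] 0) atTop := by
    refine Real.tendsto_log_atTop.comp ?_
    refine (tendsto_inv_nhdsGT_zero.atTop_mul_pos one_pos
      tendsto_norm_riemannZeta_one_add_ofReal).congr' ?_
    filter_upwards [self_mem_nhdsWithin] with δ hδ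
    rw [inv_mul_cancel_left₀ (Set.mem_Ioi.1 hδ).ne']
  set C := 2 * ∑' p : Nat.Primes, (p : ℝ) ^ (-2 : ℝ)
  set D := ∑' p : Nat.Primes, primeDefect (1 : ℕ →*₀ ℂ) s p
  refine not_tendsto_nhds_of_tendsto_atTop (tendsto_atTop_mono' _ ?_ hlog) _
    (hcont.add_const (C + D))
  filter_upwards [self_mem_nhdsWithin] with δ hδ
  have hδ₀ : 0 < δ := hδ
  have hre : (s + δ).re = 1 + δ := by simp [s]
  have hs : 1 < (s + δ).re := by linarith
  have hcomp := abs_log_norm_LSeries_sub_log_norm_zeta_add_le norm_one_hom_le hs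
  rw [LSeries_one_hom hs, hre, ofReal_add, ofReal_one] at hcomp
  have hD : ∑' p : Nat.Primes, primeDefect (1 : ℕ →*₀ ℂ) (s + δ) p ≤ D := by
    refine (hasSum_primeDefect norm_one_hom_le hs).summable.tsum_le_tsum (fun p ↦ ?_) hsum
    rw [primeDefect_add_ofReal _ _ _ p.2.ne_zero]
    exact mul_le_of_le_one_left (primeDefect_nonneg norm_one_hom_le s p.2.ne_zero)
      (Real.rpow_le_one_of_one_le_of_nonpos (by exact_mod_cast p.2.one_le) (by linarith))
  linarith [(abs_le.1 hcomp).1]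

lemma eventually_forall_le_tsum_primeDefect (hf : ∀ n, ‖f n‖ ≤ 1)
    (hdefect : ∀ t : ℝ, ¬ Summable fun p : Nat.Primes ↦ primeDefect f (1 + t * I) p) (M R : ℝ) :
    ∀ᶠ δ in 𝓝[>] (0 : ℝ), ∀ t : ℝ, |t| ≤ R →
      M ≤ ∑' p : Nat.Primes, primeDefect f ((1 + δ : ℝ) + t * I) p := by
  have hcompact : ∀ᶠ δ in 𝓝 (0 : ℝ), ∀ t ∈ Set.Icc (-R) R,
      0 < δ → M ≤ ∑' p : Nat.Primes, primeDefect f ((1 + δ : ℝ) + t * I) p := by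
    refine isCompact_Icc.eventually_forall_of_forall_eventually fun t _ ↦ ?_
    obtain ⟨S, hS⟩ : ∃ S : Finset Nat.Primes, M < ∑ p ∈ S, primeDefect f (1 + t * I) p := by
      by_contra! hbdd
      exact hdefect t <|
        summable_of_sum_le (fun p ↦ primeDefect_nonneg hf _ p.2.ne_zero) hbdd
    have hcont : Continuous fun z : ℝ × ℝ ↦
        ∑ p ∈ S, primeDefect f ((1 + z.1 : ℝ) + z.2 * I) p := by
      refine continuous_finsetSum _ fun p _ ↦ ?_
      have hp : (p : ℂ) ≠ 0 := Nat.cast_ne_zero.2 p.2.ne_zero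
      have hp' : (p : ℝ) ≠ 0 := Nat.cast_ne_zero.2 p.2.ne_zero
      simp only [primeDefect, LSeries.term_of_ne_zero p.2.ne_zero, div_eq_mul_inv, ← cpow_neg]
      refine .sub (.rpow continuous_const (by fun_prop) fun _ ↦ .inl hp') ?_
      exact continuous_re.comp (.mul continuous_const (.const_cpow (by fun_prop) (.inl hp)))
    have hlt : M < ∑ p ∈ S, primeDefect f ((1 + (0 : ℝ) : ℝ) + t * I) p := by simpa using hS
    filter_upwards [hcont.continuousAt (x := (0, t)) |>.eventually_const_lt hlt] with z hz hz₀
    exact hz.le.trans <| (hasSum_primeDefect hf (by simpa using hz₀)).summable.sum_le_tsum S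
      fun p _ ↦ primeDefect_nonneg hf _ p.2.ne_zero
  filter_upwards [self_mem_nhdsWithin, nhdsWithin_le_nhds hcompact] with δ hδ h t ht
  exact h t (abs_le.1 ht) hδ

theorem eventually_forall_norm_LSeries_le (hf : ∀ n, ‖f n‖ ≤ 1)
    (hdefect : ∀ t : ℝ, ¬ Summable fun p : Nat.Primes ↦ primeDefect f (1 + t * I) p)
    {ε : ℝ} (hε : 0 < ε) (R : ℝ) :
    ∀ᶠ δ in 𝓝[>] (0 : ℝ), ∀ t : ℝ, |t| ≤ R → ‖LSeries f ((1 + δ : ℝ) + t * I)‖ ≤ ε / δ := by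
  set C := 2 * ∑' p : Nat.Primes, (p : ℝ) ^ (-2 : ℝ)
  have hζ : ∀ᶠ δ : ℝ in 𝓝[>] 0, δ * ‖riemannZeta (1 + δ)‖ < 2 :=
    tendsto_norm_riemannZeta_one_add_ofReal.eventually_lt_const one_lt_two
  filter_upwards [self_mem_nhdsWithin,
    eventually_forall_le_tsum_primeDefect hf hdefect (C + Real.log (2 / ε)) R, hζ] with
    δ hδ hM hζ t ht
  have hδ₀ : 0 < δ := hδ
  have hre : ((1 + δ : ℝ) + t * I : ℂ).re = 1 + δ := by simp
  have hs : 1 < ((1 + δ : ℝ) + t * I : ℂ).re := by rwa [hre, lt_add_iff_pos_right]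
  have hcomp := abs_log_norm_LSeries_sub_log_norm_zeta_add_le hf hs
  rw [hre, ofReal_add, ofReal_one, ← ofReal_one, ← ofReal_add] at hcomp
  have hζ_log : Real.log ‖riemannZeta (1 + δ : ℝ)‖ ≤ Real.log (2 / δ) := by
    refine Real.log_le_log (norm_pos_iff.2 (riemannZeta_ne_zero_of_one_lt_re (by simpa))) ?_
    rw [le_div_iff₀' hδ₀, ofReal_add, ofReal_one]
    exact hζ.le
  have hlog : Real.log ‖LSeries f ((1 + δ : ℝ) + t * I)‖ ≤ Real.log (ε / δ) := by
    have hM_le := hM t ht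
    have hsplit : Real.log (2 / δ) = Real.log (2 / ε) + Real.log (ε / δ) := by
      rw [← Real.log_mul (by positivity) (by positivity), div_mul_div_cancel₀ hε.ne']
    linarith [(abs_le.1 hcomp).2]
  calc ‖LSeries f ((1 + δ : ℝ) + t * I)‖
      ≤ Real.exp (Real.log ‖LSeries f ((1 + δ : ℝ) + t * I)‖) := Real.le_exp_log _
    _ ≤ Real.exp (Real.log (ε / δ)) := by gcongr
    _ = ε / δ := Real.exp_log (by positivity)

lemma primeDefect_ofReal (g : ℕ → ℝ) (t : ℝ) (p : ℕ) :
    primeDefect (fun n ↦ (g n : ℂ)) (1 + t * I) p = (1 - g p * Real.cos (Real.log p * t)) / p := by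
  rcases eq_or_ne p 0 with rfl | hp
  · simp [primeDefect, Real.zero_rpow]
  have hterm := term_add_mul_I (fun n ↦ (g n : ℂ)) 1 t p
  rw [ofReal_one, LSeries.term_of_ne_zero hp (s := 1), cpow_one] at hterm
  have hdiv : (g p : ℂ) / p = (g p / p : ℝ) := by push_cast; rfl
  rw [primeDefect, hterm, hdiv, re_ofReal_mul, exp_ofReal_mul_I_re, neg_mul, Real.cos_neg]
  simp [Real.rpow_neg_one]
  ring

-- `1 - cos (2 * θ) ≤ 4 * (1 - x * cos θ)` for `|x| ≤ 1`: a real function close to `n ^ (i * t)`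
-- on the primes would make `1` close to `n ^ (2 * i * t)`.
lemma primeDefect_one_two_mul_le {g : ℕ → ℝ} {p : ℕ} (hg : |g p| ≤ 1) (hp : p ≠ 0) (t : ℝ) :
    primeDefect (1 : ℕ →*₀ ℂ) (1 + (2 * t : ℝ) * I) p ≤
      4 * primeDefect (fun n ↦ (g n : ℂ)) (1 + t * I) p := by
  have hone : primeDefect (1 : ℕ →*₀ ℂ) (1 + (2 * t : ℝ) * I) p =
      primeDefect (fun _ ↦ ((1 : ℝ) : ℂ)) (1 + (2 * t : ℝ) * I) p := by
    rw [primeDefect, primeDefect, LSeries.term_of_ne_zero hp, LSeries.term_of_ne_zero hp,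
      MonoidWithZeroHom.one_apply_of_ne_zero hp, ofReal_one]
  rw [hone, primeDefect_ofReal, primeDefect_ofReal (g := g), mul_div_assoc', one_mul,
    mul_left_comm, Real.cos_two_mul]
  gcongr
  have hcos : g p * Real.cos (Real.log p * t) ≤ |Real.cos (Real.log p * t)| := by
    refine (le_abs_self _).trans ?_
    rw [abs_mul]
    exact mul_le_of_le_one_left (abs_nonneg _) hg
  nlinarith [sq_abs (Real.cos (Real.log p * t)), sq_nonneg (|Real.cos (Real.log p * t)| - 1)]

lemma not_summable_primeDefect_ofReal {g : ℕ → ℝ} (hg : ∀ n, |g n| ≤ 1)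
    (hdiv : ¬ Summable fun p : Nat.Primes ↦ (1 - g p) / p) (t : ℝ) :
    ¬ Summable fun p : Nat.Primes ↦ primeDefect (fun n ↦ (g n : ℂ)) (1 + t * I) p := by
  rcases eq_or_ne t 0 with rfl | ht
  · simpa only [primeDefect_ofReal, mul_zero, Real.cos_zero, mul_one] using hdiv
  · intro hsum
    refine not_summable_primeDefect_one (t := 2 * t) (by simpa using ht) ?_
    exact (hsum.mul_left 4).of_nonneg_of_le
      (fun p ↦ primeDefect_nonneg norm_one_hom_le _ p.2.ne_zero)
      fun p ↦ primeDefect_one_two_mul_le (hg p) p.2.ne_zero t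

end NonPretentious

section PrimeSeries

lemma sum_primesBelow_eq_sum_range_indicator (h : ℕ → ℝ) (N : ℕ) :
    ∑ p ∈ N.primesBelow, h p = ∑ n ∈ range N, {p : ℕ | p.Prime}.indicator h n := by
  simp only [Nat.primesBelow, sum_filter, Set.indicator_apply, Set.mem_ofPred_eq]

lemma tendsto_sum_primesBelow {h : ℕ → ℝ} (hh : Summable fun p : Nat.Primes ↦ h p) :
    ∃ L, Tendsto (fun N : ℕ ↦ ∑ p ∈ N.primesBelow, h p) atTop (𝓝 L) := by
  simp only [sum_primesBelow_eq_sum_range_indicator]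
  exact ⟨_, (summable_subtype_iff_indicator.1 hh).hasSum.tendsto_sum_nat⟩

lemma not_tendsto_sum_primesBelow_one_div (L : ℝ) :
    ¬ Tendsto (fun N : ℕ ↦ ∑ p ∈ N.primesBelow, (1 : ℝ) / p) atTop (𝓝 L) := by
  simp only [sum_primesBelow_eq_sum_range_indicator]
  refine fun hL ↦ not_summable_one_div_on_primes
    ((hasSum_iff_tendsto_nat_of_nonneg (Set.indicator_nonneg fun p _ ↦ ?_) L).2 hL).summable
  positivity

lemma not_summable_one_sub_div_of_tendsto {g : ℕ → ℝ} {c : ℝ} (hc : c < 1)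
    {L : ℝ} (hL : Tendsto (fun N : ℕ ↦ ∑ p ∈ N.primesBelow, (c - g p) / p) atTop (𝓝 L)) :
    ¬ Summable fun p : Nat.Primes ↦ (1 - g p) / p := by
  intro hsum
  obtain ⟨L', hL'⟩ := tendsto_sum_primesBelow (h := fun p ↦ (1 - g p) / p) hsum
  refine not_tendsto_sum_primesBelow_one_div ((L' - L) / (1 - c)) ?_
  refine ((hL'.sub hL).div_const (1 - c)).congr fun N ↦ ?_
  rw [div_eq_iff (sub_ne_zero.2 hc.ne'), sum_mul, ← sum_sub_distrib]
  exact sum_congr rfl fun p _ ↦ by ring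

end PrimeSeries

section MeanSquareBounds

open Complex
open scoped NNReal

lemma LSeriesSummable_mul_of_norm_le_one {f : ℕ → ℂ} (hf : ∀ n, ‖f n‖ ≤ 1) {a : ℕ → ℂ} {s : ℂ}
    (ha : LSeriesSummable a s) : LSeriesSummable (fun n ↦ f n * a n) s := by
  refine .of_norm_bounded ha.norm fun n ↦ LSeries.norm_term_le s ?_
  rw [norm_mul]
  exact mul_le_of_le_one_left (norm_nonneg _) (hf n)

lemma LSeriesSummable_ofReal_log {s : ℂ} (hs : 1 < s.re) :
    LSeriesSummable (fun n ↦ (Real.log n : ℂ)) s := by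
  have h := LSeriesSummable_logMul_of_lt_re (f := 1) (s := s)
    (by rw [LSeries.abscissaOfAbsConv_one]; exact_mod_cast hs)
  exact (LSeriesSummable_congr s fun {n} _ ↦ by simp [LSeries.logMul, natCast_log]).1 h

lemma meanSquare_le_of_norm_summatory_sq_le {a : ℕ → ℂ} {σ : ℝ≥0} (hσ : σ ≠ 0)
    (ha : LSeriesSummable a (σ : ℝ)) {C s : ℝ} (hs : 0 < s) (hC : 0 ≤ C)
    (hle : ∀ k ≠ 0, ‖summatory a k‖ ^ 2 ≤ C * (k : ℝ) ^ (2 * σ - s)) :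
    meanSquare a σ σ ≤ 2 * σ * C * (1 + 1 / s) := by
  have hσ' : (0 : ℝ) < 2 * σ := by positivity
  have hterm (k : ℕ) :
      ‖summatory a k‖ ^ 2 * rpowDrop (2 * σ) k ≤ 2 * σ * C * (k : ℝ) ^ (-s - 1) := by
    rcases eq_or_ne k 0 with rfl | hk
    · simp [Real.zero_rpow (by linarith : -s - 1 ≠ 0)]
    have hk' : (0 : ℝ) < k := by positivity
    calc ‖summatory a k‖ ^ 2 * rpowDrop (2 * σ) k
        ≤ C * (k : ℝ) ^ (2 * σ - s) * (2 * σ * (k : ℝ) ^ (-(2 * σ) - 1 : ℝ)) := by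
          gcongr
          · exact rpowDrop_nonneg hσ' hk
          · exact hle k hk
          · exact (rpowDrop_bounds hσ' hk).2
      _ = 2 * σ * C * ((k : ℝ) ^ (2 * σ - s) * (k : ℝ) ^ (-(2 * σ) - 1 : ℝ)) := by ring
      _ = 2 * σ * C * (k : ℝ) ^ (-s - 1) := by rw [← Real.rpow_add hk']; ring_nf
  have hsum : Summable fun k : ℕ ↦ (k : ℝ) ^ (-s - 1) := Real.summable_nat_rpow.2 (by linarith)
  have hmean := hasSum_norm_summatory_sq_mul_rpowDrop hσ ha
  calc meanSquare a σ σ ≤ ∑' k : ℕ, 2 * σ * C * (k : ℝ) ^ (-s - 1) :=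
        hasSum_le hterm hmean (hsum.mul_left _).hasSum
    _ = 2 * σ * C * ∑' k : ℕ, (k : ℝ) ^ (-s - 1) := tsum_mul_left
    _ ≤ 2 * σ * C * (1 + 1 / s) := by
        gcongr
        exact tsum_rpow_neg_sub_one_le hs

lemma meanSquare_vonMangoldt_le {σ : ℝ≥0} (hσ : 1 < σ) (hσ₂ : σ ≤ 2) :
    meanSquare (fun n ↦ (Λ n : ℂ)) σ σ ≤ 216 / (σ - 1) := by
  have hσ' : (1 : ℝ) < σ := by exact_mod_cast hσ
  have hσ₂' : (σ : ℝ) ≤ 2 := by exact_mod_cast hσ₂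
  have hδ : (0 : ℝ) < σ - 1 := by linarith
  have hδ₁ : 1 ≤ 1 / (σ - 1 : ℝ) := by rw [le_div_iff₀ hδ]; linarith
  have hpsi (k : ℕ) : ‖summatory (fun n ↦ (Λ n : ℂ)) k‖ ≤ 6 * k := by
    rw [summatory, ← ofReal_sum, Complex.norm_of_nonneg (sum_nonneg fun _ _ ↦ vonMangoldt_nonneg)]
    simpa [psi] using psi_le_six_mul k.cast_nonneg
  have hmean := meanSquare_le_of_norm_summatory_sq_le (s := 2 * (σ - 1)) (C := 36) (by positivity)
    (ArithmeticFunction.LSeriesSummable_vonMangoldt (by simpa using hσ')) (by linarith)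
    (by norm_num)
    fun k _ ↦ by
      rw [show (2 * σ - 2 * (σ - 1) : ℝ) = 2 by ring, Real.rpow_two]
      nlinarith [hpsi k, norm_nonneg (summatory (fun n ↦ (Λ n : ℂ)) k)]
  calc meanSquare (fun n ↦ (Λ n : ℂ)) σ σ ≤ 2 * σ * 36 * (1 + 1 / (2 * (σ - 1))) := hmean
    _ ≤ 2 * 2 * 36 * (1 / (σ - 1) + 1 / (2 * (σ - 1))) := by gcongr
    _ = 216 / (σ - 1) := by field_simp; norm_num

lemma norm_summatory_log_le {δ : ℝ} (hδ : 0 < δ) (k : ℕ) :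
    ‖summatory (fun n ↦ (Real.log n : ℂ)) k‖ ≤ k * ((k : ℝ) ^ δ / δ) := by
  have hlog (n : ℕ) (hn : n ∈ Ioc 0 k) : ‖(Real.log n : ℂ)‖ ≤ (k : ℝ) ^ δ / δ := by
    rw [Complex.norm_of_nonneg (Real.log_natCast_nonneg n)]
    refine (Real.log_le_rpow_div n.cast_nonneg hδ).trans ?_
    gcongr
    exact (mem_Ioc.1 hn).2
  simpa [summatory] using norm_sum_le_of_le _ hlog

lemma meanSquare_log_le {σ : ℝ≥0} (hσ : 1 < σ) (hσ₂ : σ ≤ 2) :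
    meanSquare (fun n ↦ (Real.log n : ℂ)) σ σ ≤ 32 / (σ - 1) ^ 3 := by
  have hσ' : (1 : ℝ) < σ := by exact_mod_cast hσ
  have hσ₂' : (σ : ℝ) ≤ 2 := by exact_mod_cast hσ₂
  obtain ⟨δ, hδ_eq⟩ : ∃ δ : ℝ, δ = σ - 1 := ⟨_, rfl⟩
  have hδ : 0 < δ := by linarith
  have hδ₁ : 1 ≤ 1 / δ := by rw [le_div_iff₀ hδ]; linarith
  have hmean := meanSquare_le_of_norm_summatory_sq_le (s := δ) (C := 4 / δ ^ 2) (by positivity)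
    (LSeriesSummable_ofReal_log (by simpa using hσ')) hδ (by positivity)
    fun k hk ↦ by
      have hk' : (0 : ℝ) < k := by positivity
      calc ‖summatory (fun n ↦ (Real.log n : ℂ)) k‖ ^ 2
          ≤ (k * ((k : ℝ) ^ (δ / 2) / (δ / 2))) ^ 2 := by
            gcongr
            exact norm_summatory_log_le (half_pos hδ) k
        _ = 4 / δ ^ 2 * ((k : ℝ) ^ (2 : ℝ) * ((k : ℝ) ^ (δ / 2) * (k : ℝ) ^ (δ / 2))) := by
            rw [Real.rpow_two]; field_simp; ring
        _ = 4 / δ ^ 2 * (k : ℝ) ^ (2 * σ - δ) := by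
            rw [← Real.rpow_add hk', ← Real.rpow_add hk']
            congr 2
            linarith
  rw [← hδ_eq]
  calc meanSquare (fun n ↦ (Real.log n : ℂ)) σ σ ≤ 2 * σ * (4 / δ ^ 2) * (1 + 1 / δ) := hmean
    _ ≤ 2 * 2 * (4 / δ ^ 2) * (1 / δ + 1 / δ) := by gcongr
    _ = 32 / δ ^ 3 := by field_simp; norm_num

-- On `|t| ≤ T` use `f * log = (f * Λ) * F` and the smallness of `F`; beyond `T` the Cauchy weight
-- gains a factor `σ / T`.
lemma meanSquare_mul_log_le {f : ℕ →*₀ ℂ} (hf : ∀ n, ‖f n‖ ≤ 1) {σ T : ℝ≥0} (hσ : 1 < σ)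
    (hσT : σ ≤ T) {B : ℝ} (hB : ∀ t : ℝ, |t| ≤ T → ‖LSeries f ((σ : ℝ) + t * I)‖ ≤ B) :
    meanSquare (fun n ↦ f n * (Real.log n : ℂ)) σ σ ≤
      B ^ 2 * meanSquare (fun n ↦ (Λ n : ℂ)) σ σ +
        2 * σ / T * meanSquare (fun n ↦ (Real.log n : ℂ)) σ σ := by
  have hσ' : (1 : ℝ) < σ := by exact_mod_cast hσ
  have hlog : LSeriesSummable (fun n ↦ (Real.log n : ℂ)) (σ : ℝ) :=
    LSeriesSummable_ofReal_log (by simpa using hσ')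
  have hΛ : LSeriesSummable (fun n ↦ (Λ n : ℂ)) (σ : ℝ) :=
    ArithmeticFunction.LSeriesSummable_vonMangoldt (by simpa using hσ')
  have hfΛ := LSeriesSummable_mul_of_norm_le_one hf hΛ
  refine (meanSquare_le_of_norm_le_on (B := B) (b := fun n ↦ f n * (Λ n : ℂ)) (by positivity)
    (zero_lt_one.trans_le (hσ.le.trans hσT)).ne' (LSeriesSummable_mul_of_norm_le_one hf hlog) hfΛ
    fun t ht ↦ ?_).trans ?_
  · have hf_summable : LSeriesSummable f ((σ : ℝ) + t * I) :=
      LSeriesSummable_of_bounded_of_one_lt_re (fun n _ ↦ hf n) (by simpa using hσ')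
    rw [LSeries_mul_log f hf_summable (LSeriesSummable_add_mul_I hfΛ t), norm_mul, mul_comm]
    gcongr
    exact hB t ht
  · have hle (b : ℕ → ℝ) (hb : ∀ n, 0 ≤ b n) (n : ℕ) : ‖f n * (b n : ℂ)‖ ≤ b n := by
      rw [norm_mul, Complex.norm_of_nonneg (hb n)]
      exact mul_le_of_le_one_left (hb n) (hf n)
    gcongr
    · exact meanSquare_le_meanSquare (hle _ fun _ ↦ vonMangoldt_nonneg) hΛ le_rfl
    · exact meanSquare_le_meanSquare (hle _ fun n ↦ Real.log_natCast_nonneg n) hlog hσT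

end MeanSquareBounds

section Halasz

open Asymptotics Complex
open scoped NNReal

lemma tendsto_coe_sub_one_nhdsGT : Tendsto (fun σ : ℝ≥0 ↦ (σ : ℝ) - 1) (𝓝[>] 1) (𝓝[>] 0) := by
  refine tendsto_nhdsWithin_iff.2 ⟨?_, ?_⟩
  · have h : Continuous fun σ : ℝ≥0 ↦ (σ : ℝ) - 1 := by fun_prop
    simpa using (h.tendsto 1).mono_left nhdsWithin_le_nhds
  · filter_upwards [self_mem_nhdsWithin] with σ hσ
    exact sub_pos.2 (NNReal.coe_lt_coe.2 hσ)

lemma tendsto_one_add_inv_log_toNNReal :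
    Tendsto (fun N : ℕ ↦ (1 + (Real.log N)⁻¹).toNNReal) atTop (𝓝[>] 1) := by
  have hlog : Tendsto (fun N : ℕ ↦ Real.log N) atTop atTop :=
    Real.tendsto_log_atTop.comp tendsto_natCast_atTop_atTop
  refine tendsto_nhdsWithin_iff.2 ⟨?_, ?_⟩
  · simpa using tendsto_real_toNNReal ((tendsto_inv_atTop_zero.comp hlog).const_add 1)
  · filter_upwards [hlog.eventually_gt_atTop 0] with N hN
    rw [Set.mem_Ioi, Real.lt_toNNReal_iff_coe_lt, NNReal.coe_one, lt_add_iff_pos_right]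
    positivity

lemma one_div_pow_three_le_mul_rpowDrop {σ : ℝ} (hσ : 1 ≤ σ) (hσ₂ : σ ≤ 2) {k : ℕ} (hk : k ≠ 0)
    (hlog : Real.log k * (σ - 1) ≤ 1) : 1 / (k : ℝ) ^ 3 ≤ 144 * rpowDrop (2 * σ) k := by
  have hk₁ : (1 : ℝ) ≤ k := by exact_mod_cast Nat.one_le_iff_ne_zero.2 hk
  have hk₀ : (0 : ℝ) < k := by linarith
  have htwo : (1 : ℝ) / 32 ≤ 2 ^ (-(2 * σ) - 1) :=
    calc (1 : ℝ) / 32 = 2 ^ (-5 : ℝ) := by rw [Real.rpow_neg two_pos.le]; norm_num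
      _ ≤ 2 ^ (-(2 * σ) - 1) := Real.rpow_le_rpow_of_exponent_le one_le_two (by linarith)
  have hexp : (1 : ℝ) / 9 ≤ Real.exp (-2) := by
    rw [Real.exp_neg, ← one_div, show (2 : ℝ) = 1 + 1 by norm_num, Real.exp_add]
    gcongr
    nlinarith [Real.exp_one_lt_d9, Real.exp_pos 1]
  have hpow : Real.exp (-2) ≤ (k : ℝ) ^ (-(2 * (σ - 1))) := by
    rw [Real.rpow_def_of_pos hk₀, Real.exp_le_exp]
    linarith
  have hsucc : (2 * k : ℝ) ^ (-(2 * σ) - 1) ≤ (k + 1 : ℝ) ^ (-(2 * σ) - 1) :=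
    Real.rpow_le_rpow_of_nonpos (by linarith) (by linarith) (by linarith)
  calc 1 / (k : ℝ) ^ 3 = 144 * (2 * (1 / 32 * (1 / 9 * (k : ℝ) ^ (-3 : ℝ)))) := by
        rw [Real.rpow_neg hk₀.le, Real.rpow_ofNat]; ring
    _ ≤ 144 * (2 * σ *
          (2 ^ (-(2 * σ) - 1) * ((k : ℝ) ^ (-(2 * (σ - 1))) * (k : ℝ) ^ (-3 : ℝ)))) := by
        gcongr
        · linarith
        · exact hexp.trans hpow
    _ = 144 * (2 * σ * (2 * k : ℝ) ^ (-(2 * σ) - 1)) := by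
        rw [← Real.rpow_add hk₀, Real.mul_rpow two_pos.le hk₀.le]
        ring_nf
    _ ≤ 144 * (2 * σ * (k + 1 : ℝ) ^ (-(2 * σ) - 1)) := by
        gcongr
    _ ≤ 144 * rpowDrop (2 * σ) k := by
        gcongr
        exact (rpowDrop_bounds (by positivity) hk).1

lemma sum_norm_summatory_sq_div_le_meanSquare {a : ℕ → ℂ} {σ : ℝ≥0} (hσ : 1 ≤ σ) (hσ₂ : σ ≤ 2)
    (ha : LSeriesSummable a (σ : ℝ)) {N : ℕ} (hN : Real.log N * (σ - 1) ≤ 1) :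
    ∑ k ∈ Ioc 0 N, ‖summatory a k‖ ^ 2 / k ^ 3 ≤ 144 * meanSquare a σ σ := by
  have hσ₁ : (1 : ℝ) ≤ σ := by exact_mod_cast hσ
  have hmean := hasSum_norm_summatory_sq_mul_rpowDrop (zero_lt_one.trans_le hσ).ne' ha
  calc ∑ k ∈ Ioc 0 N, ‖summatory a k‖ ^ 2 / k ^ 3
      ≤ ∑ k ∈ Ioc 0 N, 144 * (‖summatory a k‖ ^ 2 * rpowDrop (2 * σ) k) := by
        refine sum_le_sum fun k hk ↦ ?_
        obtain ⟨hk₀, hkN⟩ := mem_Ioc.1 hk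
        rw [div_eq_mul_one_div, mul_left_comm]
        gcongr
        refine one_div_pow_three_le_mul_rpowDrop hσ₁ (by exact_mod_cast hσ₂) hk₀.ne' (hN.trans' ?_)
        gcongr
    _ = 144 * ∑ k ∈ Ioc 0 N, ‖summatory a k‖ ^ 2 * rpowDrop (2 * σ) k := (mul_sum ..).symm
    _ ≤ 144 * meanSquare a σ σ := by
        gcongr
        refine sum_le_hasSum _ (fun k _ ↦ ?_) hmean
        rcases eq_or_ne k 0 with rfl | hk
        · simp
        · exact mul_nonneg (sq_nonneg _) (rpowDrop_nonneg (by positivity) hk)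

lemma sum_one_div_le_of_log_le {T : ℝ} (hT : 0 ≤ T) (N : ℕ) :
    ∑ k ∈ Ioc 0 N with Real.log (k : ℕ) ≤ T, (1 : ℝ) / k ≤ 1 + T := by
  have hfloor : ⌊Real.exp T⌋₊ ≠ 0 := (Nat.floor_pos.2 (Real.one_le_exp hT)).ne'
  have hsubset : {k ∈ Ioc 0 N | Real.log (k : ℕ) ≤ T} ⊆ Ioc 0 ⌊Real.exp T⌋₊ := fun k hk ↦ by
    obtain ⟨hk, hlog⟩ := mem_filter.1 hk
    have hk₀ := (mem_Ioc.1 hk).1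
    exact mem_Ioc.2 ⟨hk₀, Nat.le_floor ((Real.log_le_iff_le_exp (by exact_mod_cast hk₀)).1 hlog)⟩
  calc ∑ k ∈ Ioc 0 N with Real.log (k : ℕ) ≤ T, (1 : ℝ) / k
      ≤ ∑ k ∈ Ioc 0 ⌊Real.exp T⌋₊, (1 : ℝ) / k :=
        sum_le_sum_of_subset_of_nonneg hsubset fun _ _ _ ↦ by positivity
    _ = harmonic ⌊Real.exp T⌋₊ := sum_one_div_eq_harmonic _
    _ ≤ 1 + Real.log ⌊Real.exp T⌋₊ := harmonic_le_one_add_log _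
    _ ≤ 1 + T := by
        gcongr
        rw [Real.log_le_iff_le_exp (by positivity)]
        exact Nat.floor_le (Real.exp_pos T).le

lemma sum_div_sq_le_of_mul_log_le {X A : ℕ → ℝ} (hX : ∀ k, X k ≤ k) (hA : ∀ k, 0 ≤ A k)
    (hXA : ∀ k, X k * Real.log k ≤ A k + k) {T : ℝ} (hT : 0 < T) (N : ℕ) :
    ∑ k ∈ Ioc 0 N, X k / (k : ℝ) ^ 2 ≤
      1 + T + (∑ k ∈ Ioc 0 N, A k / (k : ℝ) ^ 2 + ∑ k ∈ Ioc 0 N, (1 : ℝ) / k) / T := by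
  have hterm (k : ℕ) (hk : k ∈ Ioc 0 N) : X k / (k : ℝ) ^ 2 ≤
      (if Real.log k ≤ T then (1 : ℝ) / k else 0) + (A k / (k : ℝ) ^ 2 + 1 / k) / T := by
    have hk₀ : (0 : ℝ) < k := by exact_mod_cast (mem_Ioc.1 hk).1
    have hA := hA k
    split_ifs with hlog
    · refine le_add_of_le_of_nonneg ?_ (by positivity)
      calc X k / (k : ℝ) ^ 2 ≤ k / (k : ℝ) ^ 2 := by gcongr; exact hX k
        _ = 1 / (k : ℝ) := by field_simp
    · have hXT : X k * T ≤ A k + k := by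
        rcases le_or_gt 0 (X k) with hX₀ | hX₀
        · exact (mul_le_mul_of_nonneg_left (not_le.1 hlog).le hX₀).trans (hXA k)
        · nlinarith
      calc X k / (k : ℝ) ^ 2 ≤ (A k + k) / T / (k : ℝ) ^ 2 := by
            gcongr
            exact (le_div_iff₀ hT).2 hXT
        _ = 0 + (A k / (k : ℝ) ^ 2 + 1 / k) / T := by field_simp; ring
  refine (sum_le_sum hterm).trans ?_
  rw [sum_add_distrib, ← sum_filter, ← sum_div, sum_add_distrib]
  gcongr
  exact sum_one_div_le_of_log_le hT.le N

variable {f : ℕ →*₀ ℂ} (hf : ∀ n, ‖f n‖ ≤ 1)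
  (hdefect : ∀ t : ℝ, ¬ Summable fun p : Nat.Primes ↦ primeDefect f (1 + t * I) p)
include hf hdefect

lemma isLittleO_meanSquare_mul_log :
    (fun σ : ℝ≥0 ↦ meanSquare (fun n ↦ f n * (Real.log n : ℂ)) σ σ) =o[𝓝[>] 1]
      fun σ ↦ (((σ : ℝ) - 1)⁻¹) ^ 3 := by
  refine isLittleO_iff.2 fun η hη ↦ ?_
  lift η to ℝ≥0 using hη.le
  let T : ℝ≥0 := 2 + 256 / η
  let ε : ℝ := √(η / 432)
  have hε_sq : ε ^ 2 = η / 432 := Real.sq_sqrt (by positivity)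
  have hT : 4 / (T : ℝ) ≤ η / 64 := by
    have hTη : (T : ℝ) * η = 2 * η + 256 := by
      simp only [T, NNReal.coe_add, NNReal.coe_div, NNReal.coe_ofNat]; field_simp
    rw [div_le_div_iff₀ (by positivity) (by norm_num)]
    linarith
  have hsmall := tendsto_coe_sub_one_nhdsGT.eventually
    (eventually_forall_norm_LSeries_le hf hdefect (by positivity : 0 < ε) T)
  have hle_two : ∀ᶠ σ : ℝ≥0 in 𝓝[>] 1, σ ≤ 2 :=
    nhdsWithin_le_nhds (Iic_mem_nhds (by norm_num))
  filter_upwards [self_mem_nhdsWithin, hle_two, hsmall] with σ hσ hσ₂ hB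
  have hσ' : (1 : ℝ) < σ := by exact_mod_cast hσ
  have hσ₂' : (σ : ℝ) ≤ 2 := by exact_mod_cast hσ₂
  have hδ : (0 : ℝ) < σ - 1 := by linarith
  rw [add_sub_cancel] at hB
  rw [Real.norm_of_nonneg (meanSquare_nonneg _ _ _), Real.norm_of_nonneg (by positivity)]
  calc meanSquare (fun n ↦ f n * (Real.log n : ℂ)) σ σ
      ≤ (ε / (σ - 1)) ^ 2 * meanSquare (fun n ↦ (Λ n : ℂ)) σ σ +
          2 * σ / T * meanSquare (fun n ↦ (Real.log n : ℂ)) σ σ :=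
        meanSquare_mul_log_le hf hσ (hσ₂.trans le_self_add) hB
    _ ≤ (ε / (σ - 1)) ^ 2 * (216 / (σ - 1)) + 4 / T * (32 / (σ - 1) ^ 3) := by
        gcongr
        · exact meanSquare_vonMangoldt_le hσ hσ₂
        · exact meanSquare_nonneg _ _ _
        · linarith
        · exact meanSquare_log_le hσ hσ₂
    _ ≤ (ε / (σ - 1)) ^ 2 * (216 / (σ - 1)) + η / 64 * (32 / (σ - 1) ^ 3) := by gcongr
    _ = η * ((σ : ℝ) - 1)⁻¹ ^ 3 := by rw [div_pow, hε_sq]; field_simp; norm_num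

lemma isLittleO_sum_norm_summatory_mul_log_sq_div :
    (fun N : ℕ ↦ ∑ k ∈ Ioc 0 N, ‖summatory (fun n ↦ f n * (Real.log n : ℂ)) k‖ ^ 2 / (k : ℝ) ^ 3)
      =o[atTop] fun N ↦ Real.log N ^ 3 := by
  have hmean := (isLittleO_meanSquare_mul_log hf hdefect).comp_tendsto
    tendsto_one_add_inv_log_toNNReal
  have hscale (N : ℕ) : ((1 + (Real.log N)⁻¹).toNNReal : ℝ) - 1 = (Real.log N)⁻¹ := by
    rw [Real.coe_toNNReal _ (by have := Real.log_natCast_nonneg N; positivity), add_sub_cancel_left]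
  refine IsBigO.trans_isLittleO (.of_bound 144 ?_)
    (hmean.congr_right fun N ↦ by rw [Function.comp_apply, hscale, inv_inv])
  have hle_two : ∀ᶠ σ : ℝ≥0 in 𝓝[>] 1, σ ≤ 2 :=
    nhdsWithin_le_nhds (Iic_mem_nhds (by norm_num))
  filter_upwards [tendsto_one_add_inv_log_toNNReal.eventually hle_two,
    tendsto_one_add_inv_log_toNNReal.eventually self_mem_nhdsWithin] with N hσ₂ hσ
  have hsummable : LSeriesSummable (fun n ↦ f n * (Real.log n : ℂ))
      ((1 + (Real.log N)⁻¹).toNNReal : ℝ) :=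
    LSeriesSummable_mul_of_norm_le_one hf
      (LSeriesSummable_ofReal_log (by exact_mod_cast hσ))
  rw [Function.comp_apply, Real.norm_of_nonneg (meanSquare_nonneg _ _ _),
    Real.norm_of_nonneg (sum_nonneg fun _ _ ↦ by positivity)]
  refine sum_norm_summatory_sq_div_le_meanSquare (le_of_lt hσ) hσ₂ hsummable ?_
  rw [hscale, ← div_eq_mul_inv]
  exact div_self_le_one _

lemma isLittleO_sum_norm_summatory_mul_log_div :
    (fun N : ℕ ↦ ∑ k ∈ Ioc 0 N, ‖summatory (fun n ↦ f n * (Real.log n : ℂ)) k‖ / (k : ℝ) ^ 2)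
      =o[atTop] fun N ↦ Real.log N ^ 2 := by
  refine IsLittleO.of_pow (n := 2) ?_ two_ne_zero
  have hlog : ∀ᶠ N : ℕ in atTop, 1 ≤ Real.log N :=
    (Real.tendsto_log_atTop.comp tendsto_natCast_atTop_atTop).eventually_ge_atTop 1
  have hcauchy : (fun N : ℕ ↦
      (∑ k ∈ Ioc 0 N, ‖summatory (fun n ↦ f n * (Real.log n : ℂ)) k‖ / (k : ℝ) ^ 2) ^ 2) =O[atTop]
      fun N ↦ (∑ k ∈ Ioc 0 N, ‖summatory (fun n ↦ f n * (Real.log n : ℂ)) k‖ ^ 2 / (k : ℝ) ^ 3) *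
        ∑ k ∈ Ioc 0 N, (1 : ℝ) / k := by
    refine .of_bound 1 (.of_forall fun N ↦ ?_)
    rw [one_mul, Real.norm_of_nonneg (sq_nonneg _), Real.norm_of_nonneg (by positivity)]
    refine sum_sq_le_sum_mul_sum_of_sq_le_mul _ (fun _ _ ↦ by positivity) (fun _ _ ↦ by positivity)
      fun k hk ↦ ?_
    have := (mem_Ioc.1 hk).1
    exact le_of_eq (by field_simp)
  have hharmonic : (fun N : ℕ ↦ ∑ k ∈ Ioc 0 N, (1 : ℝ) / k) =O[atTop] fun N ↦ Real.log N := by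
    refine .of_bound 2 ?_
    filter_upwards [hlog] with N hN
    rw [Real.norm_of_nonneg (by positivity), Real.norm_of_nonneg (by linarith),
      sum_one_div_eq_harmonic]
    linarith [harmonic_le_one_add_log N]
  refine hcauchy.trans_isLittleO (((isLittleO_sum_norm_summatory_mul_log_sq_div hf
    hdefect).mul_isBigO hharmonic).congr_right fun N ↦ ?_)
  rw [Pi.pow_apply]
  ring

lemma isLittleO_sum_norm_summatory_div :
    (fun N : ℕ ↦ ∑ k ∈ Ioc 0 N, ‖summatory f k‖ / (k : ℝ) ^ 2) =o[atTop]
      fun N ↦ Real.log N := by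
  refine isLittleO_iff.2 fun ε hε ↦ ?_
  let θ := ε / 4
  have hθ : 0 < θ := by positivity
  have hlog : Tendsto (fun N : ℕ ↦ Real.log N) atTop atTop :=
    Real.tendsto_log_atTop.comp tendsto_natCast_atTop_atTop
  filter_upwards [isLittleO_iff.1 (isLittleO_sum_norm_summatory_mul_log_div hf hdefect)
    (by positivity : 0 < θ ^ 2), hlog.eventually_ge_atTop 1,
    hlog.eventually_ge_atTop ((1 + 2 / θ) / (2 * θ))] with N hA hL hLθ
  rw [div_le_iff₀ (by positivity)] at hLθ
  rw [Real.norm_of_nonneg (by positivity), Real.norm_of_nonneg (by positivity)] at hA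
  rw [Real.norm_of_nonneg (by positivity), Real.norm_of_nonneg (by linarith)]
  have hmul_log (k : ℕ) : ‖summatory f k‖ * Real.log k ≤
      ‖summatory (fun n ↦ f n * (Real.log n : ℂ)) k‖ + k := by
    simpa using norm_summatory_mul_log_pow_le hf 0 k
  have hharmonic : ∑ k ∈ Ioc 0 N, (1 : ℝ) / k ≤ 2 * Real.log N := by
    linarith [harmonic_le_one_add_log N, sum_one_div_eq_harmonic N]
  calc ∑ k ∈ Ioc 0 N, ‖summatory f k‖ / (k : ℝ) ^ 2
      ≤ 1 + θ * Real.log N + (∑ k ∈ Ioc 0 N, ‖summatory (fun n ↦ f n * (Real.log n : ℂ)) k‖ /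
          (k : ℝ) ^ 2 + ∑ k ∈ Ioc 0 N, (1 : ℝ) / k) / (θ * Real.log N) :=
        sum_div_sq_le_of_mul_log_le (norm_summatory_le hf) (fun _ ↦ norm_nonneg _) hmul_log
          (by positivity) N
    _ ≤ 1 + θ * Real.log N +
          (θ ^ 2 * Real.log N ^ 2 + 2 * Real.log N) / (θ * Real.log N) := by gcongr
    _ = 1 + 2 / θ + 2 * θ * Real.log N := by field_simp; ring
    _ ≤ ε * Real.log N := by
        simp only [θ] at hLθ ⊢
        linarith

theorem tendsto_summatory_div_atTop_nhds_zero :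
    Tendsto (fun N : ℕ ↦ summatory f N / N) atTop (𝓝 0) := by
  have hlog : Tendsto (fun N : ℕ ↦ Real.log N) atTop atTop :=
    Real.tendsto_log_atTop.comp tendsto_natCast_atTop_atTop
  have hlim : Tendsto (fun N : ℕ ↦ 2 * ((∑ k ∈ Ioc 0 N, ‖summatory f k‖ / (k : ℝ) ^ 2) /
      Real.log N) + 1000 / Real.log N) atTop (𝓝 0) := by
    simpa using ((isLittleO_sum_norm_summatory_div hf hdefect).tendsto_div_nhds_zero.const_mul
      2).add (hlog.const_div_atTop 1000)
  refine squeeze_zero_norm' ?_ hlim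
  filter_upwards [eventually_ge_atTop 3, hlog.eventually_gt_atTop 0] with N hN hL
  have hN₀ : (0 : ℝ) < N := by positivity
  rw [norm_div, norm_natCast, div_le_iff₀ hN₀, ← mul_le_mul_iff_left₀ hL]
  refine (norm_summatory_mul_log_le_sum hf hN).trans_eq ?_
  field_simp

end Halasz

theorem tendsto_sum_div_atTop_nhds_zero_of_not_summable {g : ℕ →*₀ ℝ} (hg : ∀ n, |g n| ≤ 1)
    (hdiv : ¬ Summable fun p : Nat.Primes ↦ (1 - g p) / p) :
    Tendsto (fun N : ℕ ↦ (∑ n ∈ Icc 1 N, g n) / N) atTop (𝓝 0) := by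
  let f : ℕ →*₀ ℂ := Complex.ofRealHom.toMonoidWithZeroHom.comp g
  have hf (n : ℕ) : ‖f n‖ ≤ 1 := (Complex.norm_real (g n)).trans_le (hg n)
  have hdefect (t : ℝ) : ¬ Summable fun p : Nat.Primes ↦ primeDefect f (1 + t * Complex.I) p :=
    not_summable_primeDefect_ofReal (g := fun n ↦ g n) hg hdiv t
  refine tendsto_ofReal_iff.1 ((tendsto_summatory_div_atTop_nhds_zero hf hdefect).congr fun N ↦ ?_)
  push_cast
  rfl

end MeanValue

theorem stmt_2_general (f : ℕ →* ℝ) (hf : ∀ n, n ≠ 0 → |f n| ≤ 1) {c : ℝ} (hc : c < 1)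
    (hconv : ∃ L : ℝ, Tendsto (fun N : ℕ ↦ ∑ p ∈ N.primesBelow, (c - f p) / p) atTop (𝓝 L)) :
    Tendsto (fun N : ℕ ↦ (∑ n ∈ Icc 1 N, f n) / N) atTop (𝓝 0) := by
  obtain ⟨L, hL⟩ := hconv
  have hdiv := MeanValue.not_summable_one_sub_div_of_tendsto hc hL
  have hzero : f 0 = 0 := by
    by_contra h₀
    have hone (n : ℕ) : f n = 1 := mul_left_cancel₀ h₀ (by rw [← map_mul, zero_mul, mul_one])
    exact hdiv (by simpa only [hone, sub_self, zero_div] using summable_zero)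
  have hle (n : ℕ) : |f n| ≤ 1 := by
    rcases eq_or_ne n 0 with rfl | hn
    · simp [hzero]
    · exact hf n hn
  exact MeanValue.tendsto_sum_div_atTop_nhds_zero_of_not_summable
    (g := ⟨⟨f, hzero⟩, map_one f, map_mul f⟩) hle hdiv

/-- If `f` is completely multiplicative with values in `{-1, 1}`, `c ∈ [-1, 1)`, and
`∑_p (c - f p)/p` converges, then the mean value of `f` exists and equals `0`. -/
theorem stmt_2 (f : ℕ → ℤ)
    (hf1 : f 1 = 1)
    (hfmul : ∀ a b : ℕ, f (a * b) = f a * f b)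
    (hfpm : ∀ n : ℕ, 1 ≤ n → f n = 1 ∨ f n = -1)
    (c : ℝ) (hc : c ∈ Set.Ico (-1 : ℝ) 1)
    (hconv : ∃ L : ℝ, Filter.Tendsto
      (fun N : ℕ => ∑ p ∈ N.primesBelow, (c - (f p : ℝ)) / p) Filter.atTop (nhds L)) :
    Filter.Tendsto (fun N : ℕ => (∑ n ∈ Finset.Icc 1 N, (f n : ℝ)) / N)
      Filter.atTop (nhds 0) := by
  refine stmt_2_general ⟨⟨fun n ↦ f n, by simp [hf1]⟩, fun a b ↦ by simp [hfmul]⟩ (fun n hn ↦ ?_)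
    hc.2 hconv
  rcases hfpm n (Nat.one_le_iff_ne_zero.2 hn) with h | h <;> simp [h]
end

section
/- Let f : ℕ → ℤ be a completely multiplicative function taking values in {-1, 1}, and let c ∈ (0, 1] be a real number. If the series ∑_p (c - f(p))/p over primes p converges, then the partial sums of f are unbounded: lim sup_{N→∞} |∑_{n=1}^{N} f(n)| = ∞. -/
/-!
Suppose `|∑_{n ≤ N} f n| ≤ C` and `∑_{p < N} (c - f p) / p ≤ B` for all `N`. Then `|f n| ≤ 2 * C`,
so `∑ f n / n ^ s` converges absolutely for `s > 1`. Summation by parts gives `∑ f n / n ^ s ≤ C`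
and `∑_p f p / p ^ s ≥ c ∑_p 1 / p ^ s - B`. Since `(1 - x)⁻¹ ≥ exp x` for `x < 1`, the Euler
product turns the latter into `∑ f n / n ^ s ≥ exp (c ∑_p 1 / p ^ s - B)`. Comparing the two bounds
as `s → 1⁺` bounds `∑_p 1 / p`, which diverges.
-/

open Filter Finset

theorem sum_range_mul_le_of_antitone {R : Type*} [CommRing R] [PartialOrder R]
    [IsOrderedRing R] {a b : ℕ → R} {C : R} (ha : ∀ n, ∑ i ∈ range n, a i ≤ C)
    (hb : Antitone b) (hb_nonneg : ∀ n, 0 ≤ b n) (n : ℕ) :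
    ∑ i ∈ range n, a i * b i ≤ C * b 0 := by
  have by_parts : ∑ i ∈ range n, a i * b i ≤ C * (b 0 - b n) + (∑ i ∈ range n, a i) * b n := by
    induction n with
    | zero => simp
    | succ n ih =>
      have partial_sum_mul_le :=
        mul_le_mul_of_nonneg_right (ha (n + 1)) (sub_nonneg.2 (hb n.le_succ))
      calc ∑ i ∈ range (n + 1), a i * b i
        _ ≤ C * (b 0 - b n) + (∑ i ∈ range (n + 1), a i) * b n := by
          rw [sum_range_succ, sum_range_succ, add_mul, ← add_assoc]
          gcongr
        _ ≤ C * (b 0 - b (n + 1)) + (∑ i ∈ range (n + 1), a i) * b (n + 1) := by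
          linear_combination partial_sum_mul_le
  linear_combination by_parts + mul_le_mul_of_nonneg_right (ha n) (hb_nonneg n)

theorem sum_Icc_mul_rpow_neg_le {a : ℕ → ℝ} {C s : ℝ} (ha : ∀ N, ∑ n ∈ Icc 1 N, a n ≤ C)
    (hs : 0 ≤ s) (N : ℕ) : ∑ n ∈ Icc 1 N, a n * (n : ℝ) ^ (-s) ≤ C := by
  have shift (h : ℕ → ℝ) (N : ℕ) : ∑ n ∈ Icc 1 N, h n = ∑ i ∈ range N, h (i + 1) := by
    rw [range_eq_Ico, sum_Ico_add' h 0 N 1, zero_add, Ico_add_one_right_eq_Icc]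
  simp only [shift] at ha ⊢
  have weight_antitone : Antitone fun i : ℕ ↦ ((i + 1 : ℕ) : ℝ) ^ (-s) := fun i j hij ↦
    Real.rpow_le_rpow_of_nonpos (by positivity) (by gcongr) (neg_nonpos.2 hs)
  simpa using sum_range_mul_le_of_antitone ha weight_antitone (fun _ ↦ by positivity) N

theorem sum_primesBelow_mul_rpow_neg_le {a : ℕ → ℝ} {B s : ℝ}
    (ha : ∀ N : ℕ, ∑ p ∈ N.primesBelow, a p / p ≤ B) (hs : 1 ≤ s) (N : ℕ) :
    ∑ p ∈ N.primesBelow, a p * (p : ℝ) ^ (-s) ≤ B := by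
  have partial_sum_le (N : ℕ) : ∑ n ∈ Icc 1 N, (if n.Prime then a n / n else 0) ≤ B := by
    rw [← sum_filter, ← Nat.primesLE_eq_filter_Icc_one]
    exact ha (N + 1)
  rw [Nat.primesBelow_eq_primesLE_sub_one, Nat.primesLE_eq_filter_Icc_one, sum_filter]
  convert! sum_Icc_mul_rpow_neg_le partial_sum_le (sub_nonneg.2 hs) (N - 1) using 2 with n
  split_ifs with hn
  · have hn_pos : (0 : ℝ) < n := mod_cast hn.pos
    rw [show -s = -1 + -(s - 1) by ring, Real.rpow_add hn_pos, Real.rpow_neg_one]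
    ring
  · simp

theorem exp_sum_le_prod_inv_one_sub {ι : Type*} {t : Finset ι} {x : ι → ℝ}
    (hx : ∀ i ∈ t, x i < 1) : Real.exp (∑ i ∈ t, x i) ≤ ∏ i ∈ t, (1 - x i)⁻¹ := by
  rw [Real.exp_sum]
  refine prod_le_prod (fun _ _ ↦ (Real.exp_pos _).le) fun i hi ↦ ?_
  rw [le_inv_comm₀ (Real.exp_pos _) (sub_pos.2 (hx i hi)), ← Real.exp_neg]
  exact Real.one_sub_le_exp_neg _

theorem exp_le_tsum_of_eventually_le_sum_primesBelow {g : ℕ →*₀ ℝ} (hg : Summable (‖g ·‖))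
    {A : ℝ} (hA : ∀ᶠ N : ℕ in atTop, A ≤ ∑ p ∈ N.primesBelow, g p) :
    Real.exp A ≤ ∑' n, g n := by
  have lt_one {p : ℕ} (hp : p.Prime) : g p < 1 :=
    (le_abs_self _).trans_lt (hg.of_norm.norm_lt_one (f := g.toMonoidHom) hp.one_lt)
  refine ge_of_tendsto (EulerProduct.eulerProduct_completely_multiplicative hg) ?_
  filter_upwards [hA] with N hN
  exact (Real.exp_le_exp.2 hN).trans <|
    exp_sum_le_prod_inv_one_sub fun p hp ↦ lt_one (Nat.prime_of_mem_primesBelow hp)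

section DirichletSeries

/-- The terms `n ↦ f n * n ^ (-s)` of the Dirichlet series of a completely multiplicative `f`, in
the form required by the Euler product. Since `s ≠ 0`, the term at `0` vanishes for any
`f 0`. -/
noncomputable def dirichletTermHom (f : ℕ →* ℝ) {s : ℝ} (hs : s ≠ 0) : ℕ →*₀ ℝ where
  toFun n := f n * (n : ℝ) ^ (-s)
  map_zero' := by simp [hs]
  map_one' := by simp
  map_mul' m n := by
    rw [map_mul, Nat.cast_mul, Real.mul_rpow m.cast_nonneg n.cast_nonneg, mul_mul_mul_comm]

variable {f : ℕ →* ℝ} {s : ℝ}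

theorem dirichletTermHom_apply (hs : s ≠ 0) (n : ℕ) :
    dirichletTermHom f hs n = f n * (n : ℝ) ^ (-s) := rfl

theorem summable_norm_dirichletTermHom {M : ℝ} (hf : ∀ n ≠ 0, |f n| ≤ M) (hs : 1 < s) :
    Summable (‖dirichletTermHom f (zero_lt_one.trans hs).ne' ·‖) := by
  refine .of_nonneg_of_le (fun _ ↦ norm_nonneg _) (fun n ↦ ?_)
    ((Real.summable_nat_rpow.2 (neg_lt_neg hs)).mul_left M)
  rcases eq_or_ne n 0 with rfl | hn
  · simp [(zero_lt_one.trans hs).ne']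
  · have weight_nonneg : 0 ≤ (n : ℝ) ^ (-s) := by positivity
    rw [dirichletTermHom_apply, norm_mul, Real.norm_of_nonneg weight_nonneg]
    exact mul_le_mul_of_nonneg_right (hf n hn) weight_nonneg

theorem tsum_dirichletTermHom_le {C : ℝ} (hC : ∀ N, ∑ n ∈ Icc 1 N, f n ≤ C) (hs : 0 < s)
    (hsum : Summable (dirichletTermHom f hs.ne')) : ∑' n, dirichletTermHom f hs.ne' n ≤ C := by
  refine le_of_tendsto' (hsum.hasSum.tendsto_sum_nat.comp (tendsto_add_atTop_nat 1)) fun N ↦ ?_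
  rw [Function.comp_apply, range_eq_Ico, sum_eq_sum_Ico_succ_bot N.succ_pos, map_zero, zero_add,
    zero_add, Nat.succ_eq_add_one, Ico_add_one_right_eq_Icc]
  exact sum_Icc_mul_rpow_neg_le hC hs.le N

theorem exp_sum_primesBelow_rpow_neg_le {B C M c : ℝ} (hc : 0 ≤ c) (hf : ∀ n ≠ 0, |f n| ≤ M)
    (hB : ∀ N : ℕ, ∑ p ∈ N.primesBelow, (c - f p) / p ≤ B)
    (hC : ∀ N, ∑ n ∈ Icc 1 N, f n ≤ C) (hs : 1 < s) (P : ℕ) :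
    Real.exp (c * ∑ p ∈ P.primesBelow, (p : ℝ) ^ (-s) - B) ≤ C := by
  have hsum := summable_norm_dirichletTermHom hf hs
  refine (exp_le_tsum_of_eventually_le_sum_primesBelow hsum ?_).trans
    (tsum_dirichletTermHom_le hC (zero_lt_one.trans hs) hsum.of_norm)
  filter_upwards [eventually_ge_atTop P] with N hPN
  have diff_le : c * ∑ p ∈ N.primesBelow, (p : ℝ) ^ (-s) -
      ∑ p ∈ N.primesBelow, f p * (p : ℝ) ^ (-s) ≤ B := by
    simpa only [sub_mul, sum_sub_distrib, mul_sum] using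
      sum_primesBelow_mul_rpow_neg_le (a := fun p ↦ c - f p) hB hs.le N
  have truncate : ∑ p ∈ P.primesBelow, (p : ℝ) ^ (-s) ≤ ∑ p ∈ N.primesBelow, (p : ℝ) ^ (-s) :=
    sum_le_sum_of_subset_of_nonneg (filter_subset_filter _ (range_mono hPN))
      fun _ _ _ ↦ by positivity
  simp only [dirichletTermHom_apply]
  linarith [mul_le_mul_of_nonneg_left truncate hc]

theorem exp_sum_primesBelow_one_div_le {B C M c : ℝ} (hc : 0 ≤ c) (hf : ∀ n ≠ 0, |f n| ≤ M)
    (hB : ∀ N : ℕ, ∑ p ∈ N.primesBelow, (c - f p) / p ≤ B)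
    (hC : ∀ N, ∑ n ∈ Icc 1 N, f n ≤ C) (P : ℕ) :
    Real.exp (c * ∑ p ∈ P.primesBelow, (1 : ℝ) / p - B) ≤ C := by
  have cont : Continuous fun s : ℝ ↦ Real.exp (c * ∑ p ∈ P.primesBelow, (p : ℝ) ^ (-s) - B) := by
    refine Real.continuous_exp.comp <| .sub (.mul continuous_const ?_) continuous_const
    refine continuous_finsetSum _ fun p hp ↦ ?_
    have hp_ne_zero : (p : ℝ) ≠ 0 := mod_cast (Nat.prime_of_mem_primesBelow hp).ne_zero
    exact continuous_const.rpow continuous_neg fun _ ↦ .inl hp_ne_zero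
  have limit : Real.exp (c * ∑ p ∈ P.primesBelow, (p : ℝ) ^ (-1 : ℝ) - B) ≤ C :=
    le_of_tendsto (cont.continuousWithinAt (s := Set.Ioi 1)) <|
      eventually_mem_nhdsWithin.mono fun _ hs ↦ exp_sum_primesBelow_rpow_neg_le hc hf hB hC hs P
  simpa only [Real.rpow_neg_one, one_div] using limit

end DirichletSeries

theorem tendsto_sum_primesBelow_one_div_atTop :
    Tendsto (fun N : ℕ ↦ ∑ p ∈ N.primesBelow, (1 : ℝ) / p) atTop atTop := by
  have h := (not_summable_iff_tendsto_nat_atTop_of_nonneg fun n ↦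
    Set.indicator_nonneg (fun _ _ ↦ by positivity) n).1 not_summable_one_div_on_primes
  simpa only [Nat.primesBelow, sum_filter, Set.indicator_apply, Set.mem_ofPred_eq] using h

theorem exists_lt_sum_Icc_of_abs_le (f : ℕ →* ℝ) {M c : ℝ} (hf : ∀ n ≠ 0, |f n| ≤ M) (hc : 0 < c)
    (hB : BddAbove (Set.range fun N : ℕ ↦ ∑ p ∈ N.primesBelow, (c - f p) / p)) (C : ℝ) :
    ∃ N, C < ∑ n ∈ Icc 1 N, f n := by
  by_contra! hC
  obtain ⟨B, hB⟩ := hB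
  have exp_tendsto : Tendsto
      (fun P : ℕ ↦ Real.exp (c * ∑ p ∈ P.primesBelow, (1 : ℝ) / p - B)) atTop atTop :=
    Real.tendsto_exp_atTop.comp <| tendsto_atTop_add_const_right _ (-B) <|
      tendsto_sum_primesBelow_one_div_atTop.const_mul_atTop hc
  obtain ⟨P, hP⟩ := (exp_tendsto.eventually_gt_atTop C).exists
  exact hP.not_ge <|
    exp_sum_primesBelow_one_div_le hc.le hf (fun N ↦ hB (Set.mem_range_self N)) hC P

theorem norm_le_two_mul_of_norm_sum_Icc_le {E : Type*} [SeminormedAddCommGroup E] {f : ℕ → E}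
    {C : ℝ} (hC : ∀ N, ‖∑ n ∈ Icc 1 N, f n‖ ≤ C) {n : ℕ} (hn : n ≠ 0) : ‖f n‖ ≤ 2 * C := by
  obtain ⟨k, rfl⟩ := Nat.exists_eq_add_one_of_ne_zero hn
  have f_eq_sub : f (k + 1) = ∑ n ∈ Icc 1 (k + 1), f n - ∑ n ∈ Icc 1 k, f n := by
    rw [sum_Icc_succ_top k.succ_pos, add_sub_cancel_left]
  rw [f_eq_sub, two_mul]
  exact norm_sub_le_of_le (hC _) (hC _)

theorem stmt_4_general (f : ℕ →* ℝ) {c : ℝ} (hc : 0 < c)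
    (hB : BddAbove (Set.range fun N : ℕ ↦ ∑ p ∈ N.primesBelow, (c - f p) / p)) (C : ℝ) :
    ∃ N, C < |∑ n ∈ Icc 1 N, f n| := by
  by_contra! hC
  have abs_le (n : ℕ) (hn : n ≠ 0) : |f n| ≤ 2 * C :=
    norm_le_two_mul_of_norm_sum_Icc_le (E := ℝ) (f := f) hC hn
  obtain ⟨N, hN⟩ := exists_lt_sum_Icc_of_abs_le f abs_le hc hB C
  exact hN.not_ge ((le_abs_self _).trans (hC N))

/-- If `f` is completely multiplicative with values in `{-1, 1}`, `c ∈ (0, 1]`, and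
`∑_p (c - f p)/p` converges, then the partial sums of `f` are unbounded. -/
theorem stmt_4 (f : ℕ → ℤ)
    (hf1 : f 1 = 1)
    (hfmul : ∀ a b : ℕ, f (a * b) = f a * f b)
    (hfpm : ∀ n : ℕ, 1 ≤ n → f n = 1 ∨ f n = -1)
    (c : ℝ) (hc : c ∈ Set.Ioc (0 : ℝ) 1)
    (hconv : ∃ L : ℝ, Filter.Tendsto
      (fun N : ℕ => ∑ p ∈ N.primesBelow, (c - (f p : ℝ)) / p) Filter.atTop (nhds L)) :
    ∀ C : ℝ, ∃ N : ℕ, C < |((∑ n ∈ Finset.Icc 1 N, f n : ℤ) : ℝ)| := by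
  obtain ⟨L, hL⟩ := hconv
  let fReal : ℕ →* ℝ :=
    { toFun n := f n
      map_one' := by rw [hf1, Int.cast_one]
      map_mul' a b := by rw [hfmul, Int.cast_mul] }
  simpa [fReal] using stmt_4_general fReal hc.1 hL.bddAbove_range
end

section
/- Let f : ℕ → ℤ be a completely multiplicative function taking values in {-1, 1}, and let c ∈ (0, 1] be a real number. If the series ∑_p (c - f(p))/p over primes p converges, then ∑_{n ≤ x} f(n)/n → ∞ as x → ∞. -/
/-!
Write `g = φ * 1` for a real completely multiplicative `φ` with `|φ| ≤ 1`, so that `g ≥ 0`, and put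
`u = log N`, `S = ∑_{n ≤ N} φ(n) / n`. Multiplication by `log` is a derivation of Dirichlet
convolution and `log · g = (Λ + φΛ) * g`. Differentiating twice and completing the square,
`log² · g = (log · (Λ + φΛ) + (Λ - φΛ) * (Λ - φΛ)) * g + 4 (φ log) * log`, where the first summand
is nonnegative. Summing `4 (φ log) * log ≤ log² · g` over `n ≤ N` bounds the logarithmic sum of
`φ log * 1` by `u² (4 S + 11)`, and it remains to show that this logarithmic sum is not `O(u²)`.

By Kronecker's lemma and Mertens' estimate, the prime hypothesis gives
`∑_{n ≤ N} φ(n) Λ(n) / n ≥ c' u - K` for every `c' < c`. Hence the Riesz mean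
`I = ∑_{n ≤ N} g(n) / n · log (N / n)` satisfies `(2 + c') I ≤ (u + O(1)) ∑_{n ≤ N} g(n) / n`. Since
`∑_{n ≤ N} g(n) / n` is the derivative of `I` with respect to `u`, `I` grows faster than
`u ^ s` for every `s < 2 + c'`, so `I / u² → ∞`. Finally `φ log * 1 = φΛ * g`, whose logarithmic
sum is at least `c' I - O(∑_{n ≤ N} g(n) / n) ≥ (c' / 2) I` for large `N`.
-/

open ArithmeticFunction Asymptotics Filter Finset Topology
open scoped ArithmeticFunction.zeta

local notation "γ" => Real.eulerMascheroniConstant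

section Real

lemma log_add_one_sub_log_le {x : ℝ} (hx : 0 < x) : Real.log (x + 1) - Real.log x ≤ 1 / x := by
  rw [← Real.log_div (by linarith) hx.ne']
  calc Real.log ((x + 1) / x) ≤ (x + 1) / x - 1 := Real.log_le_sub_one_of_pos (by positivity)
    _ = 1 / x := by field_simp; ring

lemma monotone_log_natCast : Monotone fun n : ℕ => Real.log n := by
  refine monotone_nat_of_le_succ fun n => ?_
  rcases n.eq_zero_or_pos with rfl | hn
  · simp
  · exact Real.log_le_log (by exact_mod_cast hn) (by exact_mod_cast n.le_succ)

lemma tendsto_log_natCast_atTop : Tendsto (fun n : ℕ => Real.log n) atTop atTop :=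
  Real.tendsto_log_atTop.comp tendsto_natCast_atTop_atTop

lemma log_le_log_floor_add_one {y : ℝ} (hy : 1 ≤ y) : Real.log y ≤ Real.log ⌊y⌋₊ + 1 := by
  have hfloor : (1 : ℝ) ≤ ⌊y⌋₊ := by exact_mod_cast Nat.one_le_floor_iff y |>.2 hy
  have hlog : Real.log y ≤ Real.log (⌊y⌋₊ + 1) :=
    Real.log_le_log (by linarith) (Nat.lt_floor_add_one y).le
  have hinv : 1 / (⌊y⌋₊ : ℝ) ≤ 1 := (div_le_one (by linarith)).2 hfloor
  linarith [log_add_one_sub_log_le (show (0 : ℝ) < ⌊y⌋₊ by linarith)]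

lemma sum_Ioc_log_eq_log_factorial (n : ℕ) :
    ∑ k ∈ Ioc 0 n, Real.log k = Real.log n.factorial := by
  rw [← Finset.prod_Ico_id_eq_factorial, Nat.cast_prod, Real.log_prod]
  · exact sum_congr (by ext; simp; lia) fun _ _ => rfl
  · intro k hk
    exact Nat.cast_ne_zero.2 (Nat.one_le_iff_ne_zero.1 (Finset.mem_Ico.1 hk).1)

lemma mul_log_sub_self_le_log_factorial (n : ℕ) :
    n * Real.log n - n ≤ Real.log n.factorial := by
  rcases eq_or_ne n 0 with rfl | hn
  · simp
  have hpi : 0 ≤ Real.log (2 * Real.pi) := Real.log_nonneg (by linarith [Real.pi_gt_three])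
  linarith [Stirling.le_log_factorial_stirling hn, Real.log_natCast_nonneg n]

lemma log_factorial_le {n : ℕ} (hn : n ≠ 0) :
    Real.log n.factorial ≤ n * Real.log n - n + 1 + Real.log n / 2 := by
  obtain ⟨m, rfl⟩ := Nat.exists_eq_succ_of_ne_zero hn
  have hle := Stirling.log_stirlingSeq'_antitone m.zero_le
  simp only [Function.comp_apply, Stirling.log_stirlingSeq_formula] at hle
  have hn' : ((m.succ : ℕ) : ℝ) ≠ 0 := by positivity
  rw [Real.log_div hn' (Real.exp_ne_zero _), Real.log_mul two_ne_zero hn'] at hle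
  simp only [Nat.succ_eq_add_one, zero_add, Nat.factorial_one, Nat.cast_one, mul_one, one_div,
    Real.log_one, Real.log_inv, Real.log_exp] at hle ⊢
  linarith

lemma log_factorial_le_mul_log (n : ℕ) : Real.log n.factorial ≤ n * Real.log n := by
  rw [← Real.log_pow]
  exact Real.log_le_log (by positivity) (by exact_mod_cast n.factorial_le_pow)

lemma log_le_harmonic_sub_eulerMascheroniConstant {n : ℕ} (hn : n ≠ 0) :
    Real.log n ≤ harmonic n - γ := by
  have h := Real.eulerMascheroniConstant_lt_eulerMascheroniSeq' n
  rw [Real.eulerMascheroniSeq', if_neg hn] at h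
  linarith

lemma harmonic_sub_eulerMascheroniConstant_le (n : ℕ) :
    harmonic n - γ ≤ Real.log (n + 1) := by
  have h := Real.eulerMascheroniSeq_lt_eulerMascheroniConstant n
  rw [Real.eulerMascheroniSeq] at h
  linarith

lemma abs_mul_harmonic_floor_sub_le {y : ℝ} (hy : 1 ≤ y) :
    |y * harmonic ⌊y⌋₊ - y * (Real.log y + γ)| ≤ 2 := by
  set n := ⌊y⌋₊
  have hn1 : (1 : ℝ) ≤ n := by exact_mod_cast Nat.one_le_floor_iff y |>.2 hy
  have hny : (n : ℝ) ≤ y := Nat.floor_le (by linarith)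
  have hyn : y < n + 1 := Nat.lt_floor_add_one y
  have hlower : -2 ≤ y * (harmonic n - γ - Real.log y) := by
    have hlog : Real.log y - Real.log n ≤ (y - n) / n := by
      rw [← Real.log_div (by linarith) (by linarith), sub_div, div_self (by linarith)]
      exact Real.log_le_sub_one_of_pos (by positivity)
    have hfrac : y * ((y - n) / n) ≤ 2 := by
      rw [← mul_div_assoc, div_le_iff₀ (by linarith)]
      nlinarith
    have hH := log_le_harmonic_sub_eulerMascheroniConstant
      (show n ≠ 0 by rintro h; norm_num [h] at hn1)
    nlinarith
  have hupper : y * (harmonic n - γ - Real.log y) ≤ 1 := by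
    have hlog : Real.log (n + 1) ≤ Real.log (y + 1) :=
      Real.log_le_log (by linarith) (by linarith)
    have hy0 : y * (1 / y) = 1 := mul_one_div_cancel (by linarith)
    nlinarith [harmonic_sub_eulerMascheroniConstant_le n,
      log_add_one_sub_log_le (show 0 < y by linarith)]
  rw [abs_le]
  constructor <;> linarith

lemma abs_log_factorial_floor_sub_le {y : ℝ} (hy : 1 ≤ y) :
    |Real.log ⌊y⌋₊.factorial - y * (harmonic ⌊y⌋₊ - (1 + γ))| ≤ 2 + Real.log y := by
  set n := ⌊y⌋₊
  have hn1 : (1 : ℝ) ≤ n := by exact_mod_cast Nat.one_le_floor_iff y |>.2 hy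
  have hn : n ≠ 0 := by rintro h; norm_num [h] at hn1
  have hny : (n : ℝ) ≤ y := Nat.floor_le (by linarith)
  have hyn : y < n + 1 := Nat.lt_floor_add_one y
  have hlog0 : 0 ≤ Real.log n := Real.log_natCast_nonneg n
  have hlogy : Real.log n ≤ Real.log y := Real.log_le_log (by linarith) hny
  have hlower := log_le_harmonic_sub_eulerMascheroniConstant hn
  have hupper : n * (harmonic n - γ - Real.log n) ≤ 1 := by
    have hn0 : (n : ℝ) * (1 / n) = 1 := mul_one_div_cancel (by linarith)
    nlinarith [harmonic_sub_eulerMascheroniConstant_le n,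
      log_add_one_sub_log_le (show (0 : ℝ) < n by linarith)]
  have hstirling_le := log_factorial_le hn
  have hle_stirling := mul_log_sub_self_le_log_factorial n
  have hfrac_le : (y - n) * (harmonic n - (1 + γ)) ≤ Real.log n := by
    have : (harmonic n - (1 + γ)) ≤ Real.log n := by nlinarith
    nlinarith
  have hle_frac : -1 ≤ (y - n) * (harmonic n - (1 + γ)) := by nlinarith
  rw [abs_le]
  constructor <;> nlinarith

lemma sum_log_div_le (N : ℕ) : ∑ b ∈ Ioc 0 N, Real.log (N / b) ≤ N := by
  rcases N.eq_zero_or_pos with rfl | hN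
  · simp
  have hsum : ∑ b ∈ Ioc 0 N, Real.log (N / b) = N * Real.log N - Real.log N.factorial := by
    rw [← sum_Ioc_log_eq_log_factorial, sum_congr rfl fun b hb => Real.log_div (by positivity)
      (Nat.cast_ne_zero.2 (mem_Ioc.1 hb).1.ne'), sum_sub_distrib, sum_const]
    simp
  linarith [mul_log_sub_self_le_log_factorial N]

end Real

/-- An arithmetic function with `φ (m * n) = φ m * φ n` for all `m` and `n`, coprime or not. -/
structure IsCompletelyMultiplicative {R : Type*} [MonoidWithZero R] (φ : ArithmeticFunction R) :
    Prop where
  map_one : φ 1 = 1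
  map_mul : ∀ m n, φ (m * n) = φ m * φ n

lemma pmul_log_mul (a b : ArithmeticFunction ℝ) :
    pmul log (a * b) = pmul log a * b + a * pmul log b := by
  ext n
  simp only [pmul_apply, log_apply, ArithmeticFunction.mul_apply, ArithmeticFunction.add_apply,
    ← sum_add_distrib, mul_sum]
  refine sum_congr rfl fun x hx => ?_
  obtain ⟨hxn, hn⟩ := Nat.mem_divisorsAntidiagonal.1 hx
  obtain ⟨hx1, hx2⟩ := mul_ne_zero_iff.1 (hxn ▸ hn)
  rw [← hxn, Nat.cast_mul, Real.log_mul (by exact_mod_cast hx1) (by exact_mod_cast hx2)]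
  ring

lemma mul_apply_nonneg {a b : ArithmeticFunction ℝ} (ha : ∀ n, 0 ≤ a n) (hb : ∀ n, 0 ≤ b n)
    (n : ℕ) : 0 ≤ (a * b) n := by
  rw [ArithmeticFunction.mul_apply]
  exact sum_nonneg fun x _ => mul_nonneg (ha _) (hb _)

lemma vonMangoldt_add_nonneg {φ : ArithmeticFunction ℝ} (hφ : ∀ n, |φ n| ≤ 1) (n : ℕ) :
    0 ≤ (Λ + pmul φ Λ) n := by
  have hΛ : 0 ≤ Λ n := vonMangoldt_nonneg
  simp only [ArithmeticFunction.add_apply, pmul_apply]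
  nlinarith [(abs_le.1 (hφ n)).1]

lemma vonMangoldt_sub_nonneg {φ : ArithmeticFunction ℝ} (hφ : ∀ n, |φ n| ≤ 1) (n : ℕ) :
    0 ≤ (Λ - pmul φ Λ) n := by
  have hΛ : 0 ≤ Λ n := vonMangoldt_nonneg
  simp only [sub_eq_add_neg, ArithmeticFunction.add_apply, ArithmeticFunction.neg_apply,
    pmul_apply]
  nlinarith [(abs_le.1 (hφ n)).2]

namespace IsCompletelyMultiplicative

lemma pmul_mul {R : Type*} [CommSemiring R] {φ : ArithmeticFunction R}
    (hφ : IsCompletelyMultiplicative φ) (a b : ArithmeticFunction R) :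
    pmul φ (a * b) = pmul φ a * pmul φ b := by
  ext n
  simp only [pmul_apply, ArithmeticFunction.mul_apply, mul_sum]
  refine sum_congr rfl fun x hx => ?_
  rw [← (Nat.mem_divisorsAntidiagonal.1 hx).1, hφ.map_mul]
  ring

lemma isMultiplicative {R : Type*} [MonoidWithZero R] {φ : ArithmeticFunction R}
    (hφ : IsCompletelyMultiplicative φ) : φ.IsMultiplicative :=
  ⟨hφ.map_one, fun _ => hφ.map_mul _ _⟩

lemma apply_pow {R : Type*} [MonoidWithZero R] {φ : ArithmeticFunction R}
    (hφ : IsCompletelyMultiplicative φ) (n k : ℕ) : φ (n ^ k) = φ n ^ k := by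
  induction k with
  | zero => simpa using hφ.map_one
  | succ k ih => rw [pow_succ, hφ.map_mul, ih, pow_succ]

variable {φ : ArithmeticFunction ℝ}

lemma pmul_log_eq (hφ : IsCompletelyMultiplicative φ) : pmul log φ = pmul φ Λ * φ := by
  rw [pmul_comm, ← vonMangoldt_mul_zeta, hφ.pmul_mul, pmul_zeta]

lemma pmul_log_mul_zeta (hφ : IsCompletelyMultiplicative φ) :
    pmul log (φ * ζ) = (Λ + pmul φ Λ) * (φ * ζ) := by
  rw [pmul_log_mul, hφ.pmul_log_eq, pmul_zeta, ← vonMangoldt_mul_zeta]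
  ring

lemma mul_zeta_nonneg (hφ : IsCompletelyMultiplicative φ) (hle : ∀ n, -1 ≤ φ n) (n : ℕ) :
    0 ≤ (φ * ζ) n := by
  rcases eq_or_ne n 0 with rfl | hn
  · simp
  have hmul : (φ * ζ : ArithmeticFunction ℝ).IsMultiplicative :=
    hφ.isMultiplicative.mul isMultiplicative_zeta.natCast
  rw [hmul.multiplicative_factorization _ hn]
  refine prod_nonneg fun p hp => ?_
  have hgeom : (φ * ζ) (p ^ n.factorization p) =
      ∑ i ∈ range (n.factorization p + 1), φ p ^ i := by
    simp only [coe_mul_zeta_apply, Nat.sum_divisors_prime_pow (Nat.prime_of_mem_primeFactors hp),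
      hφ.apply_pow]
  beta_reduce
  rw [hgeom]
  rcases (hle p).eq_or_lt with hp1 | hp1
  · rw [← hp1, neg_one_geom_sum]
    split_ifs <;> norm_num
  · exact (geom_sum_pos' (by linarith) (Nat.succ_ne_zero _)).le

lemma pmul_log_mul_log_le (hφ : IsCompletelyMultiplicative φ) (hle : ∀ n, |φ n| ≤ 1) (n : ℕ) :
    4 * (pmul log φ * log) n ≤ Real.log n ^ 2 * (φ * ζ) n := by
  -- `log` is a derivation, and `(Λ + φ Λ) * (Λ + φ Λ) = (Λ - φ Λ) * (Λ - φ Λ) + 4 Λ * (φ Λ)`.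
  have hlogsq : pmul log (pmul log (φ * ζ)) =
      (pmul log (Λ + pmul φ Λ) + (Λ - pmul φ Λ) * (Λ - pmul φ Λ)) * (φ * ζ)
        + (4 : ℝ) • (pmul log φ * log) := by
    have hprod : pmul log φ * log = Λ * pmul φ Λ * (φ * ζ) := by
      rw [hφ.pmul_log_eq, ← vonMangoldt_mul_zeta]
      ring
    rw [hφ.pmul_log_mul_zeta, pmul_log_mul, hφ.pmul_log_mul_zeta, hprod, ofNat_smul_eq_nsmul]
    ring
  have hnonneg :
      0 ≤ ((pmul log (Λ + pmul φ Λ) + (Λ - pmul φ Λ) * (Λ - pmul φ Λ)) * (φ * ζ)) n := by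
    refine mul_apply_nonneg (fun m => add_nonneg ?_ ?_)
      (hφ.mul_zeta_nonneg fun m => (abs_le.1 (hle m)).1) n
    · exact mul_nonneg (Real.log_natCast_nonneg m) (vonMangoldt_add_nonneg hle m)
    · exact mul_apply_nonneg (vonMangoldt_sub_nonneg hle) (vonMangoldt_sub_nonneg hle) m
  have happly := congrArg (· n) hlogsq
  simp only [pmul_apply, ArithmeticFunction.add_apply, log_apply, smul_map, smul_eq_mul] at happly
  linarith

end IsCompletelyMultiplicative

/-- The logarithmic partial sum `∑_{n ≤ N} a(n) / n`. -/
noncomputable def logSum (a : ArithmeticFunction ℝ) (N : ℕ) : ℝ :=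
  ∑ n ∈ Ioc 0 N, a n / n

/-- The logarithmic partial sum with Riesz weights `log (N / n)`; it equals the integral of
`logSum a t / t` over `1 ≤ t ≤ N`. -/
noncomputable def rieszLogSum (a : ArithmeticFunction ℝ) (N : ℕ) : ℝ :=
  ∑ n ∈ Ioc 0 N, a n / n * Real.log (N / n)

section LogSum

variable {a : ArithmeticFunction ℝ} {B : ℝ} {N : ℕ}

lemma logSum_nonneg (ha : ∀ n, 0 ≤ a n) (N : ℕ) : 0 ≤ logSum a N :=
  sum_nonneg fun n _ => div_nonneg (ha n) n.cast_nonneg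

lemma logSum_add (a b : ArithmeticFunction ℝ) (N : ℕ) :
    logSum (a + b) N = logSum a N + logSum b N := by
  simp only [logSum, ArithmeticFunction.add_apply, add_div, sum_add_distrib]

lemma logSum_mul (a b : ArithmeticFunction ℝ) (N : ℕ) :
    logSum (a * b) N = ∑ d ∈ Ioc 0 N, a d / d * logSum b (N / d) := by
  let inv : ArithmeticFunction ℝ := ⟨fun n => (n : ℝ)⁻¹, by simp⟩
  have hinv : IsCompletelyMultiplicative inv :=
    ⟨by simp [inv], fun m n => by simp [inv, mul_comm]⟩
  have hsum := sum_Ioc_mul_eq_sum_sum (pmul inv a) (pmul inv b) N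
  rw [← hinv.pmul_mul] at hsum
  have hinv_apply : ∀ c n, pmul inv c n = c n / n := fun c n => (div_eq_inv_mul _ _).symm
  simpa only [logSum, hinv_apply] using hsum

lemma logSum_zeta (N : ℕ) : logSum ζ N = harmonic N := by
  rw [logSum, harmonic_eq_sum_Icc, Rat.cast_sum]
  refine sum_congr rfl fun n hn => ?_
  simp [natCoe_apply, zeta_apply_ne (mem_Ioc.1 hn).1.ne']

lemma logSum_pmul_log (a : ArithmeticFunction ℝ) (N : ℕ) :
    logSum (pmul log a) N = Real.log N * logSum a N - rieszLogSum a N := by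
  rw [logSum, logSum, rieszLogSum, mul_sum, ← sum_sub_distrib]
  refine sum_congr rfl fun n hn => ?_
  obtain ⟨hn0, hnN⟩ := mem_Ioc.1 hn
  rw [pmul_apply, log_apply, Real.log_div (by norm_cast; lia) (by norm_cast; lia)]
  ring

lemma rieszLogSum_nonneg (ha : ∀ n, 0 ≤ a n) (N : ℕ) : 0 ≤ rieszLogSum a N := by
  refine sum_nonneg fun n hn => mul_nonneg (div_nonneg (ha n) n.cast_nonneg) (Real.log_nonneg ?_)
  obtain ⟨hn0, hnN⟩ := mem_Ioc.1 hn
  exact (one_le_div₀ (by exact_mod_cast hn0)).2 (by exact_mod_cast hnN)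

lemma rieszLogSum_succ (a : ArithmeticFunction ℝ) (hN : N ≠ 0) :
    rieszLogSum a (N + 1) =
      rieszLogSum a N + logSum a N * (Real.log (N + 1) - Real.log N) := by
  have hN1 : ((N + 1 : ℕ) : ℝ) ≠ 0 := by positivity
  rw [rieszLogSum, ← Nat.succ_eq_add_one, ← sum_Ioc_consecutive _ N.zero_le N.le_succ,
    Nat.Ioc_succ_singleton, sum_singleton, Nat.succ_eq_add_one, div_self hN1, Real.log_one,
    mul_zero, add_zero, rieszLogSum, logSum, sum_mul, ← sum_add_distrib]
  refine sum_congr rfl fun n hn => ?_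
  have hn0 : (n : ℝ) ≠ 0 := Nat.cast_ne_zero.2 (mem_Ioc.1 hn).1.ne'
  rw [Real.log_div hN1 hn0, Real.log_div (by positivity) hn0, Nat.cast_add_one]
  ring

lemma abs_sum_mul_comp_div_sub_le {a : ℕ → ℝ} (ha : ∀ n ∈ Ioc 0 N, |a n| ≤ B) {F G E : ℝ → ℝ}
    (hFG : ∀ y, 1 ≤ y → |F y - G y| ≤ E y) :
    |∑ b ∈ Ioc 0 N, a b * F (N / b) - ∑ b ∈ Ioc 0 N, a b * G (N / b)| ≤
      B * ∑ b ∈ Ioc 0 N, E (N / b) := by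
  rw [← sum_sub_distrib, mul_sum]
  refine (abs_sum_le_sum_abs _ _).trans (sum_le_sum fun b hb => ?_)
  obtain ⟨hb0, hbN⟩ := mem_Ioc.1 hb
  have hone : 1 ≤ (N : ℝ) / b := (one_le_div₀ (by exact_mod_cast hb0)).2 (by exact_mod_cast hbN)
  rw [← mul_sub, abs_mul]
  exact mul_le_mul (ha b hb) (hFG _ hone) (abs_nonneg _) ((abs_nonneg _).trans (ha b hb))

lemma abs_sum_mul_zeta_sub_le (ha : ∀ n ∈ Ioc 0 N, |a n| ≤ B) :
    |∑ n ∈ Ioc 0 N, (a * ζ) n - N * logSum a N| ≤ B * N := by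
  have hfloor : ∀ y : ℝ, 1 ≤ y → |(⌊y⌋₊ : ℝ) - y| ≤ 1 := fun y hy => by
    rw [abs_le]
    constructor <;> linarith [Nat.floor_le (show 0 ≤ y by linarith), Nat.lt_floor_add_one y]
  have hmain : (N : ℝ) * logSum a N = ∑ b ∈ Ioc 0 N, a b * (N / b) := by
    rw [logSum, mul_sum]
    exact sum_congr rfl fun n _ => by ring
  rw [sum_Ioc_mul_zeta_eq_sum, hmain]
  simpa [Nat.floor_div_eq_div] using abs_sum_mul_comp_div_sub_le ha hfloor

lemma abs_logSum_mul_zeta_sub_le (hN : N ≠ 0) (ha : ∀ n ∈ Ioc 0 N, |a n| ≤ B) :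
    |logSum (a * ζ) N - (rieszLogSum a N + γ * logSum a N)| ≤ 2 * B := by
  have hN0 : (0 : ℝ) < N := by positivity
  have hconv : N * logSum (a * ζ) N =
      ∑ b ∈ Ioc 0 N, a b * ((N / b : ℝ) * harmonic ⌊(N / b : ℝ)⌋₊) := by
    simp only [logSum_mul, logSum_zeta, mul_sum, Nat.floor_div_eq_div]
    exact sum_congr rfl fun b _ => by ring
  have hmain : N * (rieszLogSum a N + γ * logSum a N) =
      ∑ b ∈ Ioc 0 N, a b * ((N / b : ℝ) * (Real.log (N / b : ℝ) + γ)) := by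
    simp only [logSum, rieszLogSum, mul_sum, ← sum_add_distrib]
    exact sum_congr rfl fun b _ => by ring
  have hcmp := abs_sum_mul_comp_div_sub_le ha (fun _ => abs_mul_harmonic_floor_sub_le)
  rw [← hconv, ← hmain, ← mul_sub, abs_mul, abs_of_pos hN0, sum_const, Nat.card_Ioc,
    nsmul_eq_mul, tsub_zero] at hcmp
  exact le_of_mul_le_mul_left (hcmp.trans_eq (by ring)) hN0

lemma abs_sum_mul_log_sub_le (ha : ∀ n ∈ Ioc 0 N, |a n| ≤ B) :
    |∑ n ∈ Ioc 0 N, (a * log) n - N * (logSum (a * ζ) N - (1 + γ) * logSum a N)| ≤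
      3 * B * N := by
  rcases N.eq_zero_or_pos with rfl | hN
  · simp
  have hconv : ∑ n ∈ Ioc 0 N, (a * log) n =
      ∑ b ∈ Ioc 0 N, a b * Real.log ⌊(N / b : ℝ)⌋₊.factorial := by
    simp only [sum_Ioc_mul_eq_sum_sum, log_apply, sum_Ioc_log_eq_log_factorial,
      Nat.floor_div_eq_div]
  have hmain : N * (logSum (a * ζ) N - (1 + γ) * logSum a N) =
      ∑ b ∈ Ioc 0 N, a b * ((N / b : ℝ) * (harmonic ⌊(N / b : ℝ)⌋₊ - (1 + γ))) := by
    rw [logSum_mul, logSum, mul_sum, ← sum_sub_distrib, mul_sum]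
    refine sum_congr rfl fun b _ => ?_
    rw [logSum_zeta, Nat.floor_div_eq_div]
    ring
  have hB : 0 ≤ B := (abs_nonneg _).trans (ha 1 (mem_Ioc.2 ⟨one_pos, hN⟩))
  rw [hconv, hmain]
  refine (abs_sum_mul_comp_div_sub_le ha (fun _ => abs_log_factorial_floor_sub_le)).trans ?_
  rw [sum_add_distrib, sum_const, Nat.card_Ioc, nsmul_eq_mul, tsub_zero]
  nlinarith [sum_log_div_le N]

end LogSum

section Mertens

lemma logSum_vonMangoldt_ge {n : ℕ} (hn : n ≠ 0) : Real.log n - 1 ≤ logSum Λ n := by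
  have hn0 : (0 : ℝ) < n := by positivity
  have hle : Real.log n.factorial ≤ n * logSum Λ n := by
    rw [← sum_Ioc_log_eq_log_factorial]
    simp only [← log_apply, ← vonMangoldt_mul_zeta, sum_Ioc_mul_zeta_eq_sum, logSum, mul_sum]
    refine sum_le_sum fun e _ => ?_
    calc Λ e * (n / e : ℕ) ≤ Λ e * (n / e : ℝ) :=
          mul_le_mul_of_nonneg_left Nat.cast_div_le vonMangoldt_nonneg
      _ = n * (Λ e / e) := by ring
  nlinarith [mul_log_sub_self_le_log_factorial n]

lemma logSum_vonMangoldt_le {n : ℕ} (hn : n ≠ 0) :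
    logSum Λ n ≤ Real.log n + (Real.log 4 + 4) := by
  have hn0 : (0 : ℝ) < n := by positivity
  have hle : n * logSum Λ n ≤ Real.log n.factorial + Chebyshev.psi n := by
    rw [← sum_Ioc_log_eq_log_factorial, Chebyshev.psi, Nat.floor_natCast]
    simp only [← log_apply, ← vonMangoldt_mul_zeta, sum_Ioc_mul_zeta_eq_sum, logSum, mul_sum,
      ← sum_add_distrib]
    refine sum_le_sum fun e _ => ?_
    have hfloor : (n : ℝ) / e ≤ (n / e : ℕ) + 1 := by
      simpa only [Nat.floor_div_eq_div] using (Nat.lt_floor_add_one ((n : ℝ) / e)).le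
    calc n * (Λ e / e) = Λ e * (n / e : ℝ) := by ring
      _ ≤ Λ e * ((n / e : ℕ) + 1) := mul_le_mul_of_nonneg_left hfloor vonMangoldt_nonneg
      _ = Λ e * (n / e : ℕ) + Λ e := by ring
  have hpsi := Chebyshev.psi_le_const_mul_self hn0.le
  nlinarith [log_factorial_le_mul_log n]

lemma exists_sum_nonprime_vonMangoldt_div_le :
    ∃ K : ℝ, ∀ n : ℕ, ∑ e ∈ Ioc 0 n, (if e.Prime then 0 else Λ e) / (e : ℝ) ≤ K := by
  have hsummable := vonMangoldt.summable_residueClass_non_primes_div (q := 1) 0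
  have hres : ∀ n : ℕ, vonMangoldt.residueClass (0 : ZMod 1) n = Λ n := fun n => by
    simp [vonMangoldt.residueClass, Subsingleton.elim (n : ZMod 1) 0]
  simp only [hres] at hsummable
  refine ⟨_, fun n => hsummable.sum_le_tsum _ fun e _ => div_nonneg ?_ e.cast_nonneg⟩
  split_ifs
  exacts [le_rfl, vonMangoldt_nonneg]

/-- **Kronecker's lemma**. -/
lemma isLittleO_sum_mul_of_tendsto_sum {t w : ℕ → ℝ} {l : ℝ}
    (ht : Tendsto (fun N => ∑ i ∈ range N, t i) atTop (𝓝 l)) (hw : Monotone w)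
    (hw_top : Tendsto w atTop atTop) :
    (fun N => ∑ i ∈ range N, t i * w i) =o[atTop] w := by
  set d : ℕ → ℝ := fun N => ∑ i ∈ range N, t i - l with hd_def
  have hd : d =o[atTop] fun _ => (1 : ℝ) := by
    rw [isLittleO_one_iff]
    simpa using ht.sub_const l
  have habel : ∀ N, ∑ i ∈ range N, t i * w i =
      d N * w N - ∑ i ∈ range N, d (i + 1) * (w (i + 1) - w i) + l * w 0 := by
    intro N
    induction N with
    | zero => simp [hd_def]
    | succ N ih =>
      rw [sum_range_succ, sum_range_succ, ih]
      simp only [hd_def, sum_range_succ]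
      ring
  have hconst : ∀ C : ℝ, (fun _ : ℕ => C) =o[atTop] w := fun C =>
    isLittleO_const_left.2 (Or.inr (tendsto_norm_atTop_atTop.comp hw_top))
  have hdw : (fun N => d N * w N) =o[atTop] w := by
    simpa using hd.mul_isBigO (isBigO_refl w atTop)
  have hsum : (fun N => ∑ i ∈ range N, d (i + 1) * (w (i + 1) - w i)) =o[atTop] w := by
    have hterm : (fun i => d (i + 1) * (w (i + 1) - w i)) =o[atTop] fun i => w (i + 1) - w i := by
      simpa using (hd.comp_tendsto (tendsto_add_atTop_nat 1)).mul_isBigO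
        (isBigO_refl (fun i => w (i + 1) - w i) atTop)
    have htop : Tendsto (fun N => ∑ i ∈ range N, (w (i + 1) - w i)) atTop atTop := by
      simpa only [sum_range_sub] using
        (tendsto_atTop_add_const_right atTop (-w 0) hw_top).congr fun N => (sub_eq_add_neg _ _).symm
    refine (hterm.sum_range (fun i => sub_nonneg.2 (hw i.le_succ)) htop).trans_isBigO ?_
    simpa only [sum_range_sub] using (isBigO_refl w atTop).sub (hconst (w 0)).isBigO
  simpa only [habel] using (hdw.sub hsum).add (hconst (l * w 0))

variable {φ : ArithmeticFunction ℝ} {c : ℝ}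

lemma isLittleO_sum_primesBelow_mul_log {t : ℕ → ℝ} {l : ℝ}
    (ht : Tendsto (fun N : ℕ => ∑ p ∈ N.primesBelow, t p) atTop (𝓝 l)) :
    (fun N : ℕ => ∑ p ∈ N.primesBelow, t p * Real.log p) =o[atTop] fun N : ℕ => Real.log N := by
  simp only [Nat.primesBelow, sum_filter] at ht ⊢
  simpa only [ite_mul, zero_mul] using
    isLittleO_sum_mul_of_tendsto_sum ht monotone_log_natCast tendsto_log_natCast_atTop

lemma mul_logSum_vonMangoldt_le (hφ : ∀ n, |φ n| ≤ 1) (c : ℝ) (n : ℕ) :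
    c * logSum Λ n ≤ logSum (pmul φ Λ) n
      + ∑ p ∈ (n + 1).primesBelow, (c - φ p) / p * Real.log p
      + (1 + c) * ∑ e ∈ Ioc 0 n, (if e.Prime then 0 else Λ e) / (e : ℝ) := by
  have hprimes : (n + 1).primesBelow = {p ∈ Ioc 0 n | p.Prime} := by
    ext p
    simp only [Nat.mem_primesBelow, mem_filter, mem_Ioc, Nat.lt_succ_iff]
    exact ⟨fun h => ⟨⟨h.2.pos, h.1⟩, h.2⟩, fun h => ⟨h.1.2, h.2⟩⟩
  rw [hprimes, sum_filter, logSum, logSum, mul_sum, mul_sum, ← sum_add_distrib, ← sum_add_distrib]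
  refine sum_le_sum fun e _ => ?_
  rw [pmul_apply]
  split_ifs with hp
  · rw [vonMangoldt_apply_prime hp]
    exact le_of_eq (by ring)
  · have hΛ : 0 ≤ Λ e / e := div_nonneg vonMangoldt_nonneg e.cast_nonneg
    rw [mul_div_assoc]
    nlinarith [(abs_le.1 (hφ e)).1]

lemma exists_mul_log_sub_le_logSum_pmul_vonMangoldt (hφ : ∀ n, |φ n| ≤ 1) (hc : 0 ≤ c) {l : ℝ}
    (hl : Tendsto (fun N : ℕ => ∑ p ∈ N.primesBelow, (c - φ p) / p) atTop (𝓝 l)) {c' : ℝ}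
    (hc' : c' < c) : ∃ K, ∀ n : ℕ, c' * Real.log n - K ≤ logSum (pmul φ Λ) n := by
  obtain ⟨K, hK⟩ := exists_sum_nonprime_vonMangoldt_div_le
  have hsmall := ((isLittleO_sum_primesBelow_mul_log hl).comp_tendsto
    (tendsto_add_atTop_nat 1)).def (sub_pos.2 hc')
  have hbdd : IsBoundedUnder (· ≤ ·) atTop
      fun n : ℕ => c' * Real.log n - logSum (pmul φ Λ) n := by
    refine isBoundedUnder_of_eventually_le (a := c + (c - c') + (1 + c) * K) ?_
    filter_upwards [hsmall, eventually_ge_atTop 1] with n hn hn1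
    have hn1' : (1 : ℝ) ≤ n := by exact_mod_cast hn1
    have hlog_succ : Real.log (n + 1) ≤ Real.log n + 1 := by
      have : 1 / (n : ℝ) ≤ 1 := (div_le_one (by linarith)).2 hn1'
      linarith [log_add_one_sub_log_le (show (0 : ℝ) < n by linarith)]
    simp only [Function.comp_apply, Real.norm_eq_abs, Nat.cast_add_one,
      abs_of_nonneg (Real.log_nonneg (show (1 : ℝ) ≤ n + 1 by linarith))] at hn
    have hprime := (le_abs_self _).trans hn
    have hΛ := mul_le_mul_of_nonneg_left (logSum_vonMangoldt_ge (Nat.one_le_iff_ne_zero.1 hn1)) hc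
    have hnonprime := mul_le_mul_of_nonneg_left (hK n) (show 0 ≤ 1 + c by linarith)
    nlinarith [mul_logSum_vonMangoldt_le hφ c n]
  obtain ⟨K', hK'⟩ := hbdd.bddAbove_range
  exact ⟨K', fun n => by linarith [hK' ⟨n, rfl⟩]⟩

end Mertens

section Convolution

variable {a b : ArithmeticFunction ℝ} {A B : ℝ} {N : ℕ}

lemma logSum_mul_le (ha : ∀ n, 0 ≤ a n) (hA : 0 ≤ A)
    (hb : ∀ n : ℕ, n ≠ 0 → logSum b n ≤ A * Real.log n + B) :
    logSum (a * b) N ≤ A * rieszLogSum a N + B * logSum a N := by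
  rw [logSum_mul, rieszLogSum, logSum, mul_sum, mul_sum, ← sum_add_distrib]
  refine sum_le_sum fun d hd => ?_
  obtain ⟨hd0, hdN⟩ := mem_Ioc.1 hd
  have hquot : N / d ≠ 0 := (Nat.div_pos hdN hd0).ne'
  have hlog : Real.log (N / d : ℕ) ≤ Real.log (N / d) :=
    Real.log_le_log (by positivity) Nat.cast_div_le
  calc a d / d * logSum b (N / d) ≤ a d / d * (A * Real.log (N / d) + B) :=
        mul_le_mul_of_nonneg_left (by nlinarith [hb _ hquot]) (div_nonneg (ha d) d.cast_nonneg)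
    _ = A * (a d / d * Real.log (N / d)) + B * (a d / d) := by ring

lemma le_logSum_mul (ha : ∀ n, 0 ≤ a n) (hA : 0 ≤ A)
    (hb : ∀ n : ℕ, n ≠ 0 → A * Real.log n - B ≤ logSum b n) :
    A * rieszLogSum a N - (A + B) * logSum a N ≤ logSum (a * b) N := by
  rw [logSum_mul, rieszLogSum, logSum, mul_sum, mul_sum, ← sum_sub_distrib]
  refine sum_le_sum fun d hd => ?_
  obtain ⟨hd0, hdN⟩ := mem_Ioc.1 hd
  have hlog : Real.log (N / d) ≤ Real.log (N / d : ℕ) + 1 := by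
    simpa only [Nat.floor_div_eq_div] using log_le_log_floor_add_one
      ((one_le_div₀ (by exact_mod_cast hd0)).2 (by exact_mod_cast hdN : (d : ℝ) ≤ N))
  calc A * (a d / d * Real.log (N / d)) - (A + B) * (a d / d)
      = a d / d * (A * Real.log (N / d) - (A + B)) := by ring
    _ ≤ a d / d * logSum b (N / d) := mul_le_mul_of_nonneg_left
        (by nlinarith [hb _ (Nat.div_pos hdN hd0).ne']) (div_nonneg (ha d) d.cast_nonneg)

end Convolution

section Growth

lemma one_add_rpow_le_one_add_mul {a b x : ℝ} (ha : 0 ≤ a) (hb : 0 ≤ b) (hx : 0 ≤ x)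
    (hab : a * b * x ≤ b - a) : (1 + x) ^ a ≤ 1 + b * x := by
  have hexp : (1 + x) ^ a ≤ Real.exp (a * x) := by
    rw [mul_comm, Real.exp_mul]
    exact Real.rpow_le_rpow (by linarith) (by linarith [Real.add_one_le_exp x]) ha
  have hprod : 1 ≤ (1 + b * x) * Real.exp (-(a * x)) :=
    calc 1 ≤ (1 + b * x) * (1 - a * x) := by nlinarith
      _ ≤ (1 + b * x) * Real.exp (-(a * x)) :=
        mul_le_mul_of_nonneg_left (Real.one_sub_le_exp_neg _) (by positivity)
  rw [Real.exp_neg, ← div_eq_mul_inv, one_le_div (Real.exp_pos _)] at hprod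
  exact hexp.trans hprod

/-- A discrete Grönwall inequality: `I` grows at least like `v ^ a` if `I' / I ≥ b * v' / v` for
some `b > a`. -/
lemma monotoneOn_div_rpow {I v : ℕ → ℝ} {a b : ℝ} {m : ℕ} (ha : 0 ≤ a) (hb : 0 ≤ b)
    (hI : ∀ n, 0 ≤ I n) (hv : Monotone v) (hv0 : ∀ n, 0 < v n)
    (hab : ∀ n, m ≤ n → a * b * (v (n + 1) - v n) ≤ (b - a) * v n)
    (hgrowth : ∀ n, m ≤ n → b * (v (n + 1) - v n) * I n ≤ v n * (I (n + 1) - I n)) :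
    MonotoneOn (fun n => I n / v n ^ a) (Set.Ici m) := by
  refine monotoneOn_nat_Ici_of_le_succ fun n hmn => ?_
  have hvn := hv0 n
  set x := (v (n + 1) - v n) / v n with hx_def
  have hx : 0 ≤ x := div_nonneg (sub_nonneg.2 (hv n.le_succ)) hvn.le
  have hvx : v (n + 1) = v n * (1 + x) := by
    rw [hx_def]
    field_simp
    ring
  have hpow : v (n + 1) ^ a ≤ v n ^ a * (1 + b * x) := by
    rw [hvx, Real.mul_rpow hvn.le (by linarith)]
    refine mul_le_mul_of_nonneg_left (one_add_rpow_le_one_add_mul ha hb hx ?_) (by positivity)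
    rw [hx_def, ← mul_div_assoc, div_le_iff₀ hvn]
    exact hab n hmn
  have hIx : I n * (1 + b * x) ≤ I (n + 1) := by
    refine le_of_mul_le_mul_left ?_ hvn
    have hvx' : v n * x = v (n + 1) - v n := by linarith
    linear_combination hgrowth n hmn + b * I n * hvx'
  rw [div_le_div_iff₀ (Real.rpow_pos_of_pos hvn a) (Real.rpow_pos_of_pos (hv0 _) a)]
  calc I n * v (n + 1) ^ a ≤ I n * (v n ^ a * (1 + b * x)) :=
        mul_le_mul_of_nonneg_left hpow (hI n)
    _ = I n * (1 + b * x) * v n ^ a := by ring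
    _ ≤ I (n + 1) * v n ^ a := mul_le_mul_of_nonneg_right hIx (by positivity)

variable {a : ArithmeticFunction ℝ} {b K s : ℝ}

lemma monotoneOn_rieszLogSum_div_rpow (ha : ∀ n, 0 ≤ a n) (hs : 0 ≤ s) (hb : 0 ≤ b)
    (hK : 0 < K) (hsK : s * b ≤ (b - s) * K)
    (hab : ∀ N, b * rieszLogSum a N ≤ (Real.log N + K) * logSum a N) :
    MonotoneOn (fun n : ℕ => rieszLogSum a n / (Real.log n + K) ^ s) (Set.Ici 1) := by
  refine monotoneOn_div_rpow hs hb (rieszLogSum_nonneg ha) (monotone_log_natCast.add_const K)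
    (fun n => by linarith [Real.log_natCast_nonneg n]) ?_ ?_ <;> intro n hn <;>
    simp only [add_sub_add_right_eq_sub, Nat.cast_add_one]
  · have hn0 : (1 : ℝ) ≤ n := by exact_mod_cast hn
    have hstep : Real.log (n + 1) - Real.log n ≤ 1 :=
      (log_add_one_sub_log_le (by linarith)).trans ((div_le_one (by linarith)).2 hn0)
    have hsb : s ≤ b := by nlinarith [mul_nonneg hs hb]
    calc s * b * (Real.log (n + 1) - Real.log n) ≤ s * b * 1 :=
          mul_le_mul_of_nonneg_left hstep (mul_nonneg hs hb)
      _ ≤ (b - s) * K := by linarith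
      _ ≤ (b - s) * (Real.log n + K) := mul_le_mul_of_nonneg_left
          (by linarith [Real.log_natCast_nonneg n]) (sub_nonneg.2 hsb)
  · have hδ : 0 ≤ Real.log (n + 1) - Real.log n := by
      simpa using monotone_log_natCast n.le_succ
    rw [rieszLogSum_succ a (by lia), add_sub_cancel_left]
    linear_combination (Real.log (n + 1) - Real.log n) * hab n

lemma exists_mul_log_rpow_le_rieszLogSum (ha : ∀ n, 0 ≤ a n) (ha1 : 0 < a 1) (hs : 0 ≤ s)
    (hsb : s < b) (hab : ∀ N, b * rieszLogSum a N ≤ (Real.log N + K) * logSum a N) :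
    ∃ κ > 0, ∀ n : ℕ, 2 ≤ n → κ * Real.log n ^ s ≤ rieszLogSum a n := by
  obtain ⟨K', hKK', hK'0, hK's⟩ : ∃ K', K ≤ K' ∧ 0 < K' ∧ s * b ≤ (b - s) * K' := by
    refine ⟨max K (max 1 (s * b / (b - s))), by simp, by simp, ?_⟩
    rw [← div_le_iff₀' (sub_pos.2 hsb)]
    simp
  have hab' : ∀ N, b * rieszLogSum a N ≤ (Real.log N + K') * logSum a N := fun N =>
    (hab N).trans (mul_le_mul_of_nonneg_right (by linarith) (logSum_nonneg ha N))
  have hmono :=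
    monotoneOn_rieszLogSum_div_rpow ha hs (hs.trans hsb.le) hK'0 hK's hab'
  have hpos : 0 < rieszLogSum a 2 := by
    have hIoc : Ioc 0 1 = {1} := rfl
    rw [rieszLogSum_succ a one_ne_zero]
    norm_num [rieszLogSum, logSum, hIoc, ha1, Real.log_pos]
  have hbase : 0 < (Real.log (2 : ℕ) + K') ^ s :=
    Real.rpow_pos_of_pos (by linarith [Real.log_natCast_nonneg 2]) s
  refine ⟨rieszLogSum a 2 / (Real.log (2 : ℕ) + K') ^ s, div_pos hpos hbase, fun n hn => ?_⟩
  have hlog : 0 ≤ Real.log n := Real.log_natCast_nonneg n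
  have hn0 : 0 < (Real.log n + K') ^ s := Real.rpow_pos_of_pos (by linarith) s
  calc rieszLogSum a 2 / (Real.log (2 : ℕ) + K') ^ s * Real.log n ^ s
      ≤ rieszLogSum a n / (Real.log n + K') ^ s * (Real.log n + K') ^ s :=
        mul_le_mul (hmono (by simp) (by simp; lia) hn)
          (Real.rpow_le_rpow hlog (by linarith) hs) (Real.rpow_nonneg hlog s)
          (div_nonneg (rieszLogSum_nonneg ha n) hn0.le)
    _ = rieszLogSum a n := div_mul_cancel₀ _ hn0.ne'

lemma tendsto_rieszLogSum_div_log_sq (ha : ∀ n, 0 ≤ a n) (ha1 : 0 < a 1) (hb : 2 < b)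
    (hab : ∀ N, b * rieszLogSum a N ≤ (Real.log N + K) * logSum a N) :
    Tendsto (fun N : ℕ => rieszLogSum a N / Real.log N ^ 2) atTop atTop := by
  obtain ⟨s, hs, hsb⟩ := exists_between hb
  obtain ⟨κ, hκ, hle⟩ := exists_mul_log_rpow_le_rieszLogSum ha ha1 (by linarith) hsb hab
  have htop : Tendsto (fun N : ℕ => κ * Real.log N ^ (s - 2)) atTop atTop :=
    ((tendsto_rpow_atTop (sub_pos.2 hs)).comp tendsto_log_natCast_atTop).const_mul_atTop hκ
  refine tendsto_atTop_mono' _ ?_ htop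
  filter_upwards [eventually_ge_atTop 2] with N hN
  have hlog : 0 < Real.log N := Real.log_pos (by exact_mod_cast hN)
  rw [le_div_iff₀ (by positivity), mul_assoc, ← Real.rpow_natCast, ← Real.rpow_add hlog]
  simpa using hle N hN

end Growth

section CompletelyMultiplicative

variable {φ : ArithmeticFunction ℝ}

lemma neg_one_le_logSum (hφ : IsCompletelyMultiplicative φ) (hle : ∀ n, |φ n| ≤ 1) {N : ℕ}
    (hN : N ≠ 0) : -1 ≤ logSum φ N := by
  have hnonneg : 0 ≤ ∑ n ∈ Ioc 0 N, (φ * ζ) n :=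
    sum_nonneg fun n _ => hφ.mul_zeta_nonneg (fun m => (abs_le.1 (hle m)).1) n
  have hsum := (abs_le.1 (abs_sum_mul_zeta_sub_le fun n (_ : n ∈ Ioc 0 N) => hle n)).2
  have hN0 : (0 : ℝ) < N := by positivity
  nlinarith

lemma logSum_pmul_log_le (hφ : IsCompletelyMultiplicative φ) (hle : ∀ n, |φ n| ≤ 1) {N : ℕ}
    (hN : N ≠ 0) : logSum (pmul log φ) N ≤ (Real.log N + γ) * logSum φ N + 2 := by
  have hnonneg : 0 ≤ logSum (φ * ζ) N :=
    logSum_nonneg (hφ.mul_zeta_nonneg fun m => (abs_le.1 (hle m)).1) N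
  have hlogSum := (abs_le.1 (abs_logSum_mul_zeta_sub_le hN fun n _ => hle n)).2
  linarith [logSum_pmul_log φ N]

lemma four_mul_sum_pmul_log_mul_log_le (hφ : IsCompletelyMultiplicative φ)
    (hle : ∀ n, |φ n| ≤ 1) (N : ℕ) :
    4 * ∑ n ∈ Ioc 0 N, (pmul log φ * log) n ≤ Real.log N ^ 2 * (N * (logSum φ N + 1)) := by
  have hsum := (abs_le.1 (abs_sum_mul_zeta_sub_le fun n (_ : n ∈ Ioc 0 N) => hle n)).2
  calc 4 * ∑ n ∈ Ioc 0 N, (pmul log φ * log) n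
      ≤ ∑ n ∈ Ioc 0 N, Real.log N ^ 2 * (φ * ζ) n := by
        rw [mul_sum]
        refine sum_le_sum fun n hn => (hφ.pmul_log_mul_log_le hle n).trans ?_
        have hlog : Real.log n ≤ Real.log N := monotone_log_natCast (mem_Ioc.1 hn).2
        exact mul_le_mul_of_nonneg_right (pow_le_pow_left₀ (Real.log_natCast_nonneg n) hlog 2)
          (hφ.mul_zeta_nonneg (fun m => (abs_le.1 (hle m)).1) n)
    _ = Real.log N ^ 2 * ∑ n ∈ Ioc 0 N, (φ * ζ) n := (mul_sum _ _ _).symm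
    _ ≤ Real.log N ^ 2 * (N * (logSum φ N + 1)) :=
        mul_le_mul_of_nonneg_left (by linarith) (sq_nonneg _)

lemma logSum_pmul_log_mul_zeta_le (hφ : IsCompletelyMultiplicative φ) (hle : ∀ n, |φ n| ≤ 1)
    {N : ℕ} (hN : 1 ≤ Real.log N) :
    logSum (pmul log φ * ζ) N ≤ Real.log N ^ 2 * (4 * logSum φ N + 11) := by
  have hN0 : N ≠ 0 := by rintro rfl; norm_num at hN
  have hNpos : (0 : ℝ) < N := by positivity
  have hlog_le : ∀ n ∈ Ioc 0 N, |pmul log φ n| ≤ Real.log N := fun n hn => by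
    have hlog : Real.log n ≤ Real.log N := monotone_log_natCast (mem_Ioc.1 hn).2
    rw [pmul_apply, log_apply, abs_mul, abs_of_nonneg (Real.log_natCast_nonneg n)]
    nlinarith [hle n, Real.log_natCast_nonneg n]
  have hlower := (abs_le.1 (abs_sum_mul_log_sub_le hlog_le)).1
  have hupper := four_mul_sum_pmul_log_mul_log_le hφ hle N
  set u := Real.log N
  set S := logSum φ N
  have hQ : 4 * (logSum (pmul log φ * ζ) N - (1 + γ) * logSum (pmul log φ) N - 3 * u) ≤
      u ^ 2 * (S + 1) := by
    refine le_of_mul_le_mul_left ?_ hNpos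
    linarith
  have hR := logSum_pmul_log_le hφ hle hN0
  have hS : 0 ≤ S + 1 := by linarith [neg_one_le_logSum hφ hle hN0]
  have hγ0 := Real.one_half_lt_eulerMascheroniConstant
  have hγ1 := Real.eulerMascheroniConstant_lt_two_thirds
  have hRQ : (1 + γ) * logSum (pmul log φ) N ≤ 3 * u ^ 2 * (S + 1) + 4 * u ^ 2 := by
    have hcoef : (1 + γ) * (u + γ) ≤ 3 * u ^ 2 := by nlinarith
    calc (1 + γ) * logSum (pmul log φ) N ≤ (1 + γ) * ((u + γ) * S + 2) :=
          mul_le_mul_of_nonneg_left hR (by linarith)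
      _ ≤ (1 + γ) * (u + γ) * (S + 1) + 4 := by nlinarith
      _ ≤ 3 * u ^ 2 * (S + 1) + 4 * u ^ 2 := by nlinarith
  nlinarith

variable {c K : ℝ}

lemma mul_rieszLogSum_mul_zeta_le (hφ : IsCompletelyMultiplicative φ) (hle : ∀ n, |φ n| ≤ 1)
    (hc : 0 ≤ c) (hK : ∀ n : ℕ, c * Real.log n - K ≤ logSum (pmul φ Λ) n) (N : ℕ) :
    (2 + c) * rieszLogSum (φ * ζ) N ≤ (Real.log N + (2 + c + K)) * logSum (φ * ζ) N := by
  have hΛ : ∀ n : ℕ, n ≠ 0 →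
      (1 + c) * Real.log n - (1 + K) ≤ logSum (Λ + pmul φ Λ) n := fun n hn => by
    rw [logSum_add]
    linarith [logSum_vonMangoldt_ge hn, hK n]
  have hmul := le_logSum_mul (N := N) (hφ.mul_zeta_nonneg fun m => (abs_le.1 (hle m)).1)
    (by linarith) hΛ
  rw [mul_comm (φ * ζ : ArithmeticFunction ℝ), ← hφ.pmul_log_mul_zeta, logSum_pmul_log] at hmul
  linarith

lemma mul_logSum_mul_zeta_le (hφ : IsCompletelyMultiplicative φ) (hle : ∀ n, |φ n| ≤ 1) (N : ℕ) :
    (Real.log N - 2 * (Real.log 4 + 4)) * logSum (φ * ζ) N ≤ 3 * rieszLogSum (φ * ζ) N := by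
  have hΛ : ∀ n : ℕ, n ≠ 0 →
      logSum (Λ + pmul φ Λ) n ≤ 2 * Real.log n + 2 * (Real.log 4 + 4) := fun n hn => by
    have hsub : logSum (Λ - pmul φ Λ + pmul φ Λ) n = logSum Λ n := by rw [sub_add_cancel]
    rw [logSum_add] at hsub ⊢
    linarith [logSum_vonMangoldt_le hn, logSum_nonneg (vonMangoldt_sub_nonneg hle) n]
  have hmul := logSum_mul_le (N := N) (hφ.mul_zeta_nonneg fun m => (abs_le.1 (hle m)).1)
    zero_le_two hΛ
  rw [mul_comm (φ * ζ : ArithmeticFunction ℝ), ← hφ.pmul_log_mul_zeta, logSum_pmul_log] at hmul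
  linarith

lemma le_logSum_pmul_log_mul_zeta (hφ : IsCompletelyMultiplicative φ) (hle : ∀ n, |φ n| ≤ 1)
    (hc : 0 ≤ c) (hK : ∀ n : ℕ, c * Real.log n - K ≤ logSum (pmul φ Λ) n) (N : ℕ) :
    c * rieszLogSum (φ * ζ) N - (c + K) * logSum (φ * ζ) N ≤ logSum (pmul log φ * ζ) N := by
  rw [hφ.pmul_log_eq, mul_assoc, mul_comm (pmul φ Λ)]
  exact le_logSum_mul (hφ.mul_zeta_nonneg fun m => (abs_le.1 (hle m)).1) hc fun n _ => hK n

lemma tendsto_logSum_pmul_log_mul_zeta_div_log_sq (hφ : IsCompletelyMultiplicative φ)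
    (hle : ∀ n, |φ n| ≤ 1) (hc : 0 < c)
    (hK : ∀ n : ℕ, c * Real.log n - K ≤ logSum (pmul φ Λ) n) :
    Tendsto (fun N : ℕ => logSum (pmul log φ * ζ) N / Real.log N ^ 2) atTop atTop := by
  have hg : ∀ n, 0 ≤ (φ * ζ) n := hφ.mul_zeta_nonneg fun m => (abs_le.1 (hle m)).1
  have hg1 : 0 < (φ * ζ) 1 := by simp [hφ.map_one]
  have hriesz : Tendsto (fun N : ℕ => c / 2 * (rieszLogSum (φ * ζ) N / Real.log N ^ 2))
      atTop atTop :=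
    (tendsto_rieszLogSum_div_log_sq hg hg1 (by linarith)
      (mul_rieszLogSum_mul_zeta_le hφ hle hc.le hK)).const_mul_atTop (half_pos hc)
  refine tendsto_atTop_mono' _ ?_ hriesz
  filter_upwards [tendsto_log_natCast_atTop.eventually_ge_atTop
    (2 * (Real.log 4 + 4) + 6 / c * (c + K))] with N hN
  have hL : 6 / c * (c + K) * logSum (φ * ζ) N ≤ 3 * rieszLogSum (φ * ζ) N :=
    (mul_le_mul_of_nonneg_right (by linarith) (logSum_nonneg hg N)).trans
      (mul_logSum_mul_zeta_le hφ hle N)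
  have hsmall : (c + K) * logSum (φ * ζ) N ≤ c / 2 * rieszLogSum (φ * ζ) N := by
    calc (c + K) * logSum (φ * ζ) N = c / 6 * (6 / c * (c + K) * logSum (φ * ζ) N) := by
          field_simp
      _ ≤ c / 6 * (3 * rieszLogSum (φ * ζ) N) := mul_le_mul_of_nonneg_left hL (by positivity)
      _ = c / 2 * rieszLogSum (φ * ζ) N := by ring
  rw [← mul_div_assoc]
  refine div_le_div_of_nonneg_right ?_ (sq_nonneg _)
  linarith [le_logSum_pmul_log_mul_zeta hφ hle hc.le hK N]

theorem tendsto_logSum_atTop (hφ : IsCompletelyMultiplicative φ) (hle : ∀ n, |φ n| ≤ 1)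
    (hc : 0 < c) {l : ℝ}
    (hl : Tendsto (fun N : ℕ => ∑ p ∈ N.primesBelow, (c - φ p) / p) atTop (𝓝 l)) :
    Tendsto (logSum φ) atTop atTop := by
  obtain ⟨K, hK⟩ := exists_mul_log_sub_le_logSum_pmul_vonMangoldt hle hc.le hl (half_lt_self hc)
  have hQ := tendsto_logSum_pmul_log_mul_zeta_div_log_sq hφ hle (half_pos hc) hK
  refine tendsto_atTop_mono' _ ?_
    ((tendsto_atTop_add_const_right _ (-11) hQ).atTop_div_const (zero_lt_four (α := ℝ)))
  filter_upwards [tendsto_log_natCast_atTop.eventually_ge_atTop 1] with N hN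
  have hdiv : logSum (pmul log φ * ζ) N / Real.log N ^ 2 ≤ 4 * logSum φ N + 11 :=
    (div_le_iff₀' (by positivity)).2 (logSum_pmul_log_mul_zeta_le hφ hle hN)
  linarith

end CompletelyMultiplicative

theorem stmt_6_general (f : ℕ → ℝ) (hf1 : f 1 = 1) (hfmul : ∀ a b : ℕ, f (a * b) = f a * f b)
    (hfle : ∀ n : ℕ, 1 ≤ n → |f n| ≤ 1) (c : ℝ) (hc : 0 < c)
    (hconv : ∃ L : ℝ, Tendsto (fun N : ℕ => ∑ p ∈ N.primesBelow, (c - f p) / p) atTop (𝓝 L)) :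
    Tendsto (fun N : ℕ => ∑ n ∈ Finset.Icc 1 N, f n / n) atTop atTop := by
  obtain ⟨l, hl⟩ := hconv
  have happly : ∀ n, n ≠ 0 → toArithmeticFunction f n = f n := fun n hn => if_neg hn
  have hφ : IsCompletelyMultiplicative (toArithmeticFunction f) := by
    refine ⟨(happly 1 one_ne_zero).trans hf1, fun m n => ?_⟩
    by_cases hmn : m = 0 ∨ n = 0
    · rcases hmn with rfl | rfl <;> simp
    · obtain ⟨hm, hn⟩ := not_or.1 hmn
      rw [happly _ (mul_ne_zero hm hn), happly m hm, happly n hn, hfmul]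
  have hle : ∀ n, |toArithmeticFunction f n| ≤ 1 := fun n => by
    rcases eq_or_ne n 0 with rfl | hn
    · simp
    · exact (happly n hn).symm ▸ hfle n (Nat.one_le_iff_ne_zero.2 hn)
  refine (tendsto_logSum_atTop hφ hle hc (hl.congr fun N => ?_)).congr fun N => ?_
  · exact sum_congr rfl fun p hp => by rw [happly p (Nat.prime_of_mem_primesBelow hp).ne_zero]
  · exact sum_congr rfl fun n hn => by rw [happly n (mem_Ioc.1 hn).1.ne']

/-- If `f` is completely multiplicative with values in `{-1, 1}`, `c ∈ (0, 1]`, and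
`∑_p (c - f p)/p` converges, then `∑_{n ≤ x} f n / n → ∞`. -/
theorem stmt_6 (f : ℕ → ℤ)
    (hf1 : f 1 = 1)
    (hfmul : ∀ a b : ℕ, f (a * b) = f a * f b)
    (hfpm : ∀ n : ℕ, 1 ≤ n → f n = 1 ∨ f n = -1)
    (c : ℝ) (hc : c ∈ Set.Ioc (0 : ℝ) 1)
    (hconv : ∃ L : ℝ, Filter.Tendsto
      (fun N : ℕ => ∑ p ∈ N.primesBelow, (c - (f p : ℝ)) / p) Filter.atTop (nhds L)) :
    Filter.Tendsto (fun N : ℕ => ∑ n ∈ Finset.Icc 1 N, (f n : ℝ) / n)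
      Filter.atTop Filter.atTop :=
  stmt_6_general (fun n => (f n : ℝ)) (mod_cast hf1) (fun a b => mod_cast hfmul a b)
    (fun n hn => by rcases hfpm n hn with h | h <;> simp [h]) c hc.1 hconv
end
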